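/- arXiv:math/0105193 — 3 statements merged into one kernel-verified Lean document; each statement's English description precedes it below -/
import Mathlib

section
/- Let X be a holomorphic vector field on a neighborhood of 0 in ℂⁿ with X(0) = 0 which is isochore, i.e. trace(DX(x)) = 0 for all x near 0, and suppose DX(0) = S + N where S is the diagonal endomorphism of ℂⁿ with diagonal entries γ = (γ₁, …, γₙ) ∈ ℂⁿ, N is nilpotent, and S∘N = N∘S. Let r be the toric degree of γ and let ρ¹, …, ρʳ ∈ ℤⁿ be a ℤ-basis of Q(γ). Then X admits a volume-preserving convergent Poincaré–Dulac normalization (i.e. one in which the normalizing map φ additionally satisfies det(Dφ(x)) = 1 for all x near 0) if and only if there exist an open neighborhood U of 0 in ℂⁿ and holomorphic vector fields V₁, …, V_r : U → ℂⁿ such that: (a) each V_k is isochore, i.e. trace(DV_k(x)) = 0 on U; (b) V_k(0) = 0 and DV_k(0) is the diagonal endomorphism with entries ρᵏ for each k; (c) [V_j, V_k] = 0 on U for all j, k; (d) [X, V_k] = 0 on U for all k; (e) for each k and each x ∈ U there is a curve c : ℝ → U with c(0) = x, satisfying c′(t) = i·V_k(c(t)) for all t ∈ ℝ (real derivative, i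 = √−1 acting by complex scalar multiplication), and c(t + 2π) = c(t) for all t ∈ ℝ. -/
/-- `Y` is in Poincaré–Dulac normal form on the neighborhood `U` of `0`:
writing the Jordan–Chevalley decomposition `DY(0) = S + N` with `S` semisimple,
`N` nilpotent and `S ∘ N = N ∘ S`, the Lie bracket `[Y, Yˢ]` (where `Yˢ x = S x`)
vanishes on `U`. -/
def InPDNormalForm (𝕂 : Type*) [NontriviallyNormedField 𝕂] {n : ℕ}
    (Y : (Fin n → 𝕂) → (Fin n → 𝕂)) (U : Set (Fin n → 𝕂)) : Prop :=
  ∃ S N : (Fin n → 𝕂) →L[𝕂] (Fin n → 𝕂),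
    fderiv 𝕂 Y 0 = S + N ∧
    Module.End.IsSemisimple (S : Module.End 𝕂 (Fin n → 𝕂)) ∧
    IsNilpotent (N : Module.End 𝕂 (Fin n → 𝕂)) ∧
    S ∘L N = N ∘L S ∧
    ∀ x ∈ U, VectorField.lieBracket 𝕂 Y (fun y => S y) x = 0

/-- `X` admits a convergent Poincaré–Dulac normalization: there are an analytic
vector field `Y` near `0`, in Poincaré–Dulac normal form with `Y 0 = 0`, and an
analytic map `φ` near `0` with `φ 0 = 0` and `Dφ(0)` invertible, such that
`Dφ(x) (Y x) = X (φ x)` for all `x` near `0`. -/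
def AdmitsPDNormalization (𝕂 : Type*) [NontriviallyNormedField 𝕂] {n : ℕ}
    (X : (Fin n → 𝕂) → (Fin n → 𝕂)) : Prop :=
  ∃ (V : Set (Fin n → 𝕂)) (Y φ : (Fin n → 𝕂) → (Fin n → 𝕂)),
    IsOpen V ∧ (0 : Fin n → 𝕂) ∈ V ∧
    AnalyticOnNhd 𝕂 Y V ∧ AnalyticOnNhd 𝕂 φ V ∧
    Y 0 = 0 ∧ φ 0 = 0 ∧ Function.Bijective (fderiv 𝕂 φ 0) ∧
    InPDNormalForm 𝕂 Y V ∧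
    ∀ x ∈ V, fderiv 𝕂 φ x (Y x) = X (φ x)


/-- `c ∈ ℤⁿ` is a resonance relation for the eigenvalues `γ ∈ ℂⁿ`:
`Σ c_j γ_j = 0`, all `c_j ≥ -1`, `Σ c_j ≥ 1`, and at most one `c_j` is
negative. -/
def IsResonanceRelation {n : ℕ} (γ : Fin n → ℂ) (c : Fin n → ℤ) : Prop :=
  (∑ j, (c j : ℂ) * γ j = 0) ∧ (∀ j, -1 ≤ c j) ∧ (1 ≤ ∑ j, c j) ∧
    ∀ j k, c j < 0 → c k < 0 → j = k

/-- The lattice `Q(γ) ⊆ ℤⁿ` of `ρ` with `Σ ρ_j c_j = 0` for every resonance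
relation `c`, and `ρ_j = ρ_k` whenever `γ_j = γ_k`. -/
def QLattice {n : ℕ} (γ : Fin n → ℂ) : Set (Fin n → ℤ) :=
  {ρ | (∀ c, IsResonanceRelation γ c → ∑ j, ρ j * c j = 0) ∧
    ∀ j k, γ j = γ k → ρ j = ρ k}

/-- The diagonal (continuous) linear endomorphism of `ℂⁿ` with diagonal
entries `γ`. -/
noncomputable def diagCLM {n : ℕ} (γ : Fin n → ℂ) :
    (Fin n → ℂ) →L[ℂ] (Fin n → ℂ) :=
  LinearMap.toContinuousLinearMap (Matrix.toLin' (Matrix.diagonal γ))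

/-- `X` admits a volume-preserving convergent Poincaré–Dulac normalization:
as for `AdmitsPDNormalization`, with the normalizing map `φ` additionally
satisfying `det (Dφ(x)) = 1` near `0`. -/
def AdmitsVolPDNormalization {n : ℕ} (X : (Fin n → ℂ) → (Fin n → ℂ)) : Prop :=
  ∃ (V : Set (Fin n → ℂ)) (Y φ : (Fin n → ℂ) → (Fin n → ℂ)),
    IsOpen V ∧ (0 : Fin n → ℂ) ∈ V ∧
    AnalyticOnNhd ℂ Y V ∧ AnalyticOnNhd ℂ φ V ∧
    Y 0 = 0 ∧ φ 0 = 0 ∧ Function.Bijective (fderiv ℂ φ 0) ∧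
    InPDNormalForm ℂ Y V ∧
    (∀ x ∈ V,
      LinearMap.det (fderiv ℂ φ x : (Fin n → ℂ) →ₗ[ℂ] (Fin n → ℂ)) = 1) ∧
    ∀ x ∈ V, fderiv ℂ φ x (Y x) = X (φ x)

/-!
A volume-preserving normalization `φ` of `X` linearizes the torus acting diagonally with weights
`ρ k`: since `γ` lies in the complex span of `QLattice γ` and every resonance of `γ` is one of all
weights in `QLattice γ`, a field commutes with `diagCLM γ` if and only if it commutes with all
`diagCLM (ρ k)`. Thus, if `Y` is the normal form, then `φ` transports the linear torus action
preserving `Y` to one preserving `X`. Conversely, averaging over the torus produces a coordinate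
change tangent to the identity that linearizes the generators `V k` simultaneously (Bochner). Its
Jacobian determinant is invariant under the linear torus because the generators are isochore, so
rescaling along a coordinate direction, by a factor that is again torus invariant, makes the
linearization volume-preserving without destroying it.
-/

namespace PoincareDulac

open Filter Topology VectorField

/-! ### Related vector fields -/

section Related

variable {𝕜 E F G : Type*} [NontriviallyNormedField 𝕜] [NormedAddCommGroup E] [NormedSpace 𝕜 E]
  [NormedAddCommGroup F] [NormedSpace 𝕜 F] [NormedAddCommGroup G] [NormedSpace 𝕜 G]

theorem fderiv_comp_fderiv_eq_id {f : E → F} {g : F → E} {x : E}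
    (hg : DifferentiableAt 𝕜 g (f x)) (hf : DifferentiableAt 𝕜 f x)
    (hgf : ∀ᶠ y in 𝓝 x, g (f y) = y) :
    fderiv 𝕜 g (f x) ∘L fderiv 𝕜 f x = .id 𝕜 E := by
  rw [← fderiv_comp x hg hf]
  exact (EventuallyEq.fderiv_eq (f := id) hgf).trans fderiv_id

theorem exists_analyticAt_inverse [CompleteSpace E] {f : E → F} {x : E} {i : E ≃L[𝕜] F}
    (hf : AnalyticAt 𝕜 f x) (hi : fderiv 𝕜 f x = i) :
    ∃ g : F → E, AnalyticAt 𝕜 g (f x) ∧ (∀ᶠ y in 𝓝 x, g (f y) = y) ∧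
      ∀ᶠ z in 𝓝 (f x), f (g z) = z := by
  have hs : HasStrictFDerivAt f (i : E →L[𝕜] F) x := hi ▸ hf.hasStrictFDerivAt
  exact ⟨hs.localInverse f i x,
    (hs.toOpenPartialHomeomorph f).analyticAt_symm' hs.mem_toOpenPartialHomeomorph_source hf hi,
    hs.eventually_left_inverse, hs.eventually_right_inverse⟩

variable (𝕜) in
/-- The vector fields `X` and `Y` are `f`-related near `x`: `Df(y) (X y) = Y (f y)`. Conjugation of
germs of vector fields is expressed through this relation rather than through a pushforward. -/
def IsRelatedAt (f : E → F) (X : E → E) (Y : F → F) (x : E) : Prop :=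
  ∀ᶠ y in 𝓝 x, fderiv 𝕜 f y (X y) = Y (f y)

namespace IsRelatedAt

variable {f : E → F} {g : F → G} {X X' : E → E} {Y Y' : F → F} {Z : G → G} {x : E}

protected theorem eq (h : IsRelatedAt 𝕜 f X Y x) : fderiv 𝕜 f x (X x) = Y (f x) :=
  h.self_of_nhds

theorem comp [CompleteSpace F] [CompleteSpace G]
    (hgYZ : IsRelatedAt 𝕜 g Y Z (f x)) (hfXY : IsRelatedAt 𝕜 f X Y x)
    (hg : AnalyticAt 𝕜 g (f x)) (hf : AnalyticAt 𝕜 f x) :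
    IsRelatedAt 𝕜 (g ∘ f) X Z x := by
  filter_upwards [hfXY, hf.continuousAt.eventually hgYZ, hf.eventually_analyticAt,
    hf.continuousAt.eventually hg.eventually_analyticAt] with y hy hfy hfan hgan
  rw [fderiv_comp y hgan.differentiableAt hfan.differentiableAt, ContinuousLinearMap.comp_apply,
    hy, hfy, Function.comp_apply]

theorem symm [CompleteSpace E] [CompleteSpace F] {g : F → E} (h : IsRelatedAt 𝕜 f X Y x)
    (hf : AnalyticAt 𝕜 f x) (hg : AnalyticAt 𝕜 g (f x)) (hgf : ∀ᶠ y in 𝓝 x, g (f y) = y)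
    (hfg : ∀ᶠ z in 𝓝 (f x), f (g z) = z) : IsRelatedAt 𝕜 g Y X (f x) := by
  have hgx : Tendsto g (𝓝 (f x)) (𝓝 x) := by
    simpa only [ContinuousAt, hgf.self_of_nhds] using hg.continuousAt
  filter_upwards [hfg, hgx.eventually h, hgx.eventually hgf.eventually_nhds,
    hgx.eventually hf.eventually_analyticAt, hg.eventually_analyticAt] with z hz hrel hinv hfan hgan
  have hid := fderiv_comp_fderiv_eq_id (by rw [hz]; exact hgan.differentiableAt)
    hfan.differentiableAt hinv
  rw [hz] at hrel hid
  rw [← hrel]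
  exact DFunLike.congr_fun hid _

theorem fderiv_comp_fderiv [CompleteSpace F] (h : IsRelatedAt 𝕜 f X Y x) (hf : AnalyticAt 𝕜 f x)
    (hX : DifferentiableAt 𝕜 X x) (hY : DifferentiableAt 𝕜 Y (f x)) :
    fderiv 𝕜 (fderiv 𝕜 f) x (X x) + fderiv 𝕜 f x ∘L fderiv 𝕜 X x =
      fderiv 𝕜 Y (f x) ∘L fderiv 𝕜 f x := by
  have hderiv := EventuallyEq.fderiv_eq (𝕜 := 𝕜) h
  rw [fderiv_clm_apply hf.fderiv.differentiableAt hX,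
    fderiv_fun_comp x hY hf.differentiableAt] at hderiv
  rw [← hderiv, add_comm]
  congr 1
  ext w
  exact hf.contDiffAt.isSymmSndFDerivAt (n := ⊤) (by simp) _ _

protected theorem lieBracket [CompleteSpace F] (hXY : IsRelatedAt 𝕜 f X Y x)
    (hXY' : IsRelatedAt 𝕜 f X' Y' x) (hf : AnalyticAt 𝕜 f x) (hX : DifferentiableAt 𝕜 X x)
    (hX' : DifferentiableAt 𝕜 X' x) (hY : DifferentiableAt 𝕜 Y (f x))
    (hY' : DifferentiableAt 𝕜 Y' (f x)) :
    fderiv 𝕜 f x (lieBracket 𝕜 X X' x) = VectorField.lieBracket 𝕜 Y Y' (f x) := by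
  rw [fderiv_apply_lieBracket hf.contDiffAt (n := ⊤) (by simp) hX' hX, EventuallyEq.fderiv_eq hXY,
    EventuallyEq.fderiv_eq hXY', VectorField.lieBracket, fderiv_fun_comp x hY hf.differentiableAt,
    fderiv_fun_comp x hY' hf.differentiableAt, ContinuousLinearMap.comp_apply,
    ContinuousLinearMap.comp_apply, hXY.eq, hXY'.eq]

theorem eventually_lieBracket_eq_zero [CompleteSpace E] [CompleteSpace F] {i : E ≃L[𝕜] F}
    (hXY : IsRelatedAt 𝕜 f X Y x) (hXY' : IsRelatedAt 𝕜 f X' Y' x) (hf : AnalyticAt 𝕜 f x)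
    (hi : fderiv 𝕜 f x = i) (hX : AnalyticAt 𝕜 X x) (hX' : AnalyticAt 𝕜 X' x)
    (hY : AnalyticAt 𝕜 Y (f x)) (hY' : AnalyticAt 𝕜 Y' (f x))
    (hXX' : ∀ᶠ y in 𝓝 x, VectorField.lieBracket 𝕜 X X' y = 0) :
    ∀ᶠ z in 𝓝 (f x), VectorField.lieBracket 𝕜 Y Y' z = 0 := by
  have hs : HasStrictFDerivAt f (i : E →L[𝕜] F) x := hi ▸ hf.hasStrictFDerivAt
  rw [← hs.map_nhds_eq_of_equiv, eventually_map]
  filter_upwards [hXX', hXY.eventually_nhds, hXY'.eventually_nhds, hf.eventually_analyticAt,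
    hX.eventually_analyticAt, hX'.eventually_analyticAt,
    hf.continuousAt.eventually hY.eventually_analyticAt,
    hf.continuousAt.eventually hY'.eventually_analyticAt] with y hy hrel hrel' hfy hXy hXy' hYy hYy'
  rw [← IsRelatedAt.lieBracket hrel hrel' hfy hXy.differentiableAt hXy'.differentiableAt
    hYy.differentiableAt hYy'.differentiableAt, hy, map_zero]

end IsRelatedAt

theorem analyticAt_clm_apply {A : G → E →L[𝕜] F} {v : G → E} {x : G} (hA : AnalyticAt 𝕜 A x)
    (hv : AnalyticAt 𝕜 v x) : AnalyticAt 𝕜 (fun y => A y (v y)) x :=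
  ((ContinuousLinearMap.id 𝕜 (E →L[𝕜] F)).analyticAt_bilinear _).comp (hA.prod hv)

theorem exists_analyticAt_isRelatedAt [CompleteSpace E] [CompleteSpace F] {f : E → F} {X : E → E}
    {x : E} {i : E ≃L[𝕜] F} (hf : AnalyticAt 𝕜 f x) (hi : fderiv 𝕜 f x = i)
    (hX : AnalyticAt 𝕜 X x) : ∃ Y, AnalyticAt 𝕜 Y (f x) ∧ IsRelatedAt 𝕜 f X Y x := by
  obtain ⟨g, hg, hgf, -⟩ := exists_analyticAt_inverse hf hi
  refine ⟨fun z => fderiv 𝕜 f (g z) (X (g z)),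
    analyticAt_clm_apply (hf.fderiv.comp_of_eq hg hgf.self_of_nhds)
      (hX.comp_of_eq hg hgf.self_of_nhds), ?_⟩
  filter_upwards [hgf] with y hy
  rw [hy]

variable (𝕜) in
/-- Germs of analytic maps at `0` which agree with the identity to first order. -/
structure IsTangentToId (f : E → E) : Prop where
  analyticAt : AnalyticAt 𝕜 f 0
  map_zero : f 0 = 0
  fderiv_zero : fderiv 𝕜 f 0 = .id 𝕜 E

theorem isTangentToId_id : IsTangentToId 𝕜 (id : E → E) :=
  ⟨analyticAt_id, rfl, fderiv_id⟩

theorem IsTangentToId.comp {f g : E → E} (hg : IsTangentToId 𝕜 g) (hf : IsTangentToId 𝕜 f) :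
    IsTangentToId 𝕜 (g ∘ f) where
  analyticAt := hg.analyticAt.comp_of_eq hf.analyticAt hf.map_zero
  map_zero := by rw [Function.comp_apply, hf.map_zero, hg.map_zero]
  fderiv_zero := by
    have hg0 : DifferentiableAt 𝕜 g (f 0) := by
      rw [hf.map_zero]
      exact hg.analyticAt.differentiableAt
    rw [fderiv_comp 0 hg0 hf.analyticAt.differentiableAt, hf.map_zero, hg.fderiv_zero,
      hf.fderiv_zero, ContinuousLinearMap.comp_id]

theorem IsTangentToId.exists_inverse [CompleteSpace E] {f : E → E} (hf : IsTangentToId 𝕜 f) :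
    ∃ g : E → E, IsTangentToId 𝕜 g ∧ (∀ᶠ y in 𝓝 0, g (f y) = y) ∧ ∀ᶠ z in 𝓝 0, f (g z) = z := by
  obtain ⟨g, hg, hgf, hfg⟩ :=
    exists_analyticAt_inverse (i := ContinuousLinearEquiv.refl 𝕜 E) hf.analyticAt hf.fderiv_zero
  have hDg := fderiv_comp_fderiv_eq_id hg.differentiableAt hf.analyticAt.differentiableAt hgf
  rw [hf.fderiv_zero, ContinuousLinearMap.comp_id] at hDg
  have hg0 := hgf.self_of_nhds
  rw [hf.map_zero] at hg hfg hDg hg0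
  exact ⟨g, ⟨hg, hg0, hDg⟩, hgf, hfg⟩

end Related

/-! ### Divergence and Jacobian determinant -/

section Jacobian

variable {𝕜 E : Type*} [NontriviallyNormedField 𝕜] [NormedAddCommGroup E] [NormedSpace 𝕜 E]
  [FiniteDimensional 𝕜 E]

variable (𝕜) in
/-- The divergence of the vector field `V` at `x`, i.e. the trace of its derivative; `V` is isochore
when it vanishes. -/
noncomputable def divergence (V : E → E) (x : E) : 𝕜 :=
  LinearMap.trace 𝕜 E (fderiv 𝕜 V x : E →ₗ[𝕜] E)

theorem hasDerivAt_det_one_add_smul (K : E →L[𝕜] E) :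
    HasDerivAt (fun t : 𝕜 => (1 + t • K).det) (LinearMap.trace 𝕜 E (K : E →ₗ[𝕜] E)) 0 := by
  let b := Module.finBasis 𝕜 E
  let A := LinearMap.toMatrix b b K
  let p := (1 + (Polynomial.X : Polynomial 𝕜) • A.map Polynomial.C).det.divX.divX
  have hexpand (t : 𝕜) : (1 + t • K).det = 1 + A.trace * t + p.eval t * t ^ 2 := by
    rw [← Matrix.det_one_add_smul, ContinuousLinearMap.det, ← LinearMap.det_toMatrix b]
    congr 1
    ext
    simp [A, LinearMap.toMatrix_apply, Matrix.one_apply, Finsupp.single_apply, eq_comm]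
  rw [funext hexpand, LinearMap.trace_eq_matrix_trace 𝕜 b]
  have hderiv := (((hasDerivAt_id (0 : 𝕜)).const_mul A.trace).const_add 1).add
    ((p.hasDerivAt 0).mul (hasDerivAt_pow 2 (0 : 𝕜)))
  exact hderiv.congr_deriv (by simp [A])

variable [CompleteSpace 𝕜]

theorem analyticAt_det (M : E →L[𝕜] E) :
    AnalyticAt 𝕜 (ContinuousLinearMap.det : (E →L[𝕜] E) → 𝕜) M := by
  let b := Module.finBasis 𝕜 E
  have hdet : (ContinuousLinearMap.det : (E →L[𝕜] E) → 𝕜) = fun L =>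
      ∑ σ : Equiv.Perm _, (σ.sign : 𝕜) * ∏ i, b.coord (σ i) (L (b i)) := by
    ext L
    simp only [ContinuousLinearMap.det, ← LinearMap.det_toMatrix b, Matrix.det_apply',
      LinearMap.toMatrix_apply, Module.Basis.coord_apply, ContinuousLinearMap.coe_coe]
  rw [hdet]
  refine Finset.analyticAt_fun_sum _ fun σ _ =>
    analyticAt_const.fun_mul (Finset.analyticAt_fun_prod _ fun i _ => ?_)
  exact ((LinearMap.toContinuousLinearMap (b.coord (σ i))) ∘L
    ContinuousLinearMap.apply 𝕜 E (b i)).analyticAt M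

theorem fderiv_det_apply_of_hasDerivAt {M H : E →L[𝕜] E} {a : 𝕜}
    (h : HasDerivAt (fun t : 𝕜 => (M + t • H).det) a 0) :
    fderiv 𝕜 ContinuousLinearMap.det M H = a := by
  have hline : HasDerivAt (fun t : 𝕜 => M + t • H) H 0 := by
    simpa using ((hasDerivAt_id (0 : 𝕜)).smul_const H).const_add M
  exact ((analyticAt_det M).differentiableAt.hasFDerivAt.comp_hasDerivAt_of_eq (0 : 𝕜) hline
    (by simp)).unique h

theorem fderiv_det_comp_left (K M : E →L[𝕜] E) :
    fderiv 𝕜 ContinuousLinearMap.det M (K ∘L M) = LinearMap.trace 𝕜 E (K : E →ₗ[𝕜] E) * M.det := by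
  refine fderiv_det_apply_of_hasDerivAt (((hasDerivAt_det_one_add_smul K).mul_const
    M.det).congr_of_eventuallyEq (.of_forall fun t => ?_))
  change LinearMap.det _ = LinearMap.det _ * LinearMap.det _
  rw [← map_mul]
  rfl

theorem fderiv_det_comp_right (K M : E →L[𝕜] E) :
    fderiv 𝕜 ContinuousLinearMap.det M (M ∘L K) = M.det * LinearMap.trace 𝕜 E (K : E →ₗ[𝕜] E) := by
  refine fderiv_det_apply_of_hasDerivAt (((hasDerivAt_det_one_add_smul K).const_mul
    M.det).congr_of_eventuallyEq (.of_forall fun t => ?_))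
  change LinearMap.det _ = LinearMap.det _ * LinearMap.det _
  rw [← map_mul]
  congr 1
  ext
  simp

theorem IsRelatedAt.fderiv_det_fderiv {f X Y : E → E} {x : E}
    (h : IsRelatedAt 𝕜 f X Y x) (hf : AnalyticAt 𝕜 f x) (hX : DifferentiableAt 𝕜 X x)
    (hY : DifferentiableAt 𝕜 Y (f x)) :
    fderiv 𝕜 (fun y => (fderiv 𝕜 f y).det) x (X x) =
      (divergence 𝕜 Y (f x) - divergence 𝕜 X x) * (fderiv 𝕜 f x).det := by
  have := FiniteDimensional.complete 𝕜 E
  have hfderiv := fderiv_comp x (analyticAt_det (fderiv 𝕜 f x)).differentiableAt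
    hf.fderiv.differentiableAt
  change fderiv 𝕜 (ContinuousLinearMap.det ∘ fderiv 𝕜 f) x (X x) = _
  rw [hfderiv, ContinuousLinearMap.comp_apply, eq_sub_of_add_eq (h.fderiv_comp_fderiv hf hX hY),
    map_sub, fderiv_det_comp_left, fderiv_det_comp_right, divergence, divergence]
  ring

end Jacobian

/-! ### Superposition operators -/

section Superposition

variable {𝕜 K E F : Type*} [NontriviallyNormedField 𝕜] [TopologicalSpace K]
  [NormedAddCommGroup E] [NormedSpace 𝕜 E] [NormedAddCommGroup F] [NormedSpace 𝕜 F]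

open Classical in
/-- The superposition operator `u ↦ f ∘ u` on continuous maps, with value `0` where `f ∘ u` is not
continuous. -/
noncomputable def superposition (f : E → F) (u : C(K, E)) : C(K, F) :=
  if h : Continuous (f ∘ u) then ⟨f ∘ u, h⟩ else 0

theorem superposition_eq {f : E → F} {u : C(K, E)} {g : C(K, F)} (h : ∀ t, f (u t) = g t) :
    superposition f u = g := by
  have hfu : f ∘ u = g := funext h
  rw [superposition, dif_pos (hfu ▸ g.continuous)]
  exact ContinuousMap.ext h

theorem superposition_zero {f : E → F} (hf0 : f 0 = 0) : superposition f (0 : C(K, E)) = 0 :=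
  superposition_eq fun _ => hf0

theorem superposition_apply {f : E → F} {u : C(K, E)} (h : ∀ t, ContinuousAt f (u t)) (t : K) :
    superposition f u t = f (u t) := by
  have hfu : Continuous (f ∘ u) :=
    continuous_iff_continuousAt.2 fun t => (h t).comp u.continuous.continuousAt
  rw [superposition_eq (g := ⟨f ∘ u, hfu⟩) fun t => rfl, ContinuousMap.coe_mk, Function.comp_apply]

variable [CompactSpace K]

theorem eventually_forall_apply {X : Type*} [TopologicalSpace X] {P : X → Prop} {u : C(K, X)}
    (h : ∀ t, ∀ᶠ y in 𝓝 (u t), P y) : ∀ᶠ v : C(K, X) in 𝓝 u, ∀ t, P (v t) := by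
  have hopen : IsOpen {v : C(K, X) | Set.MapsTo v Set.univ {y | ∀ᶠ z in 𝓝 y, P z}} :=
    ContinuousMap.isOpen_setOfPred_mapsTo isCompact_univ isOpen_setOfPred_eventually_nhds
  filter_upwards [hopen.mem_nhds fun t _ => h t] with v hv t
  exact (hv (Set.mem_univ t)).self_of_nhds

/-- The multilinear version of `superposition`: the pointwise action of a continuous multilinear map
on continuous maps. It turns the Taylor series of `f` into that of `superposition f`. -/
noncomputable def multilinearSuperposition (K : Type*) [TopologicalSpace K] [CompactSpace K]
    {ι : Type*} [Fintype ι] (p : ContinuousMultilinearMap 𝕜 (fun _ : ι => E) F) :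
    ContinuousMultilinearMap 𝕜 (fun _ : ι => C(K, E)) C(K, F) :=
  MultilinearMap.mkContinuous
    { toFun u := ⟨fun t => p fun i => u i t, by fun_prop⟩
      map_update_add' u i v w := by
        ext t
        have h := Function.apply_update (fun _ (z : C(K, E)) => z t) u i
        simp [h]
      map_update_smul' u i c v := by
        ext t
        have h := Function.apply_update (fun _ (z : C(K, E)) => z t) u i
        simp [h] }
    ‖p‖ fun u => (ContinuousMap.norm_le _ (by positivity)).2 fun t =>
      (p.le_opNorm _).trans (by gcongr with i; exact (u i).norm_coe_le_norm t)

theorem norm_multilinearSuperposition_le {ι : Type*} [Fintype ι]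
    (p : ContinuousMultilinearMap 𝕜 (fun _ : ι => E) F) : ‖multilinearSuperposition K p‖ ≤ ‖p‖ :=
  MultilinearMap.mkContinuous_norm_le _ (norm_nonneg _) _

variable [CompleteSpace F]

theorem analyticAt_superposition_const {f : E → F} {x : E} (hf : AnalyticAt 𝕜 f x) :
    AnalyticAt 𝕜 (superposition (K := K) f) (ContinuousMap.const K x) := by
  obtain ⟨p, r, hp⟩ := hf
  let q : FormalMultilinearSeries 𝕜 C(K, E) C(K, F) := fun d => multilinearSuperposition K (p d)
  have hqr : r ≤ q.radius := hp.r_le.trans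
    (FormalMultilinearSeries.radius_le_of_le fun d => norm_multilinearSuperposition_le (p d))
  have hq := q.hasFPowerSeriesOnBall (hp.r_pos.trans_le hqr)
  refine ⟨q, r, hqr, hp.r_pos, fun {v} hv => ?_⟩
  have hsum := hq.hasSum (Metric.eball_subset_eball hqr hv)
  rw [zero_add] at hsum
  have hvt (t : K) : v t ∈ Metric.eball (0 : E) r := by
    rw [mem_eball_zero_iff] at hv ⊢
    exact (enorm_le_iff_norm_le.2 (v.norm_coe_le_norm t)).trans_lt hv
  rwa [superposition_eq (g := q.sum v) fun t => ?_]
  exact (hp.hasSum (hvt t)).unique (hsum.mapL (ContinuousMap.evalCLM 𝕜 (M := F) t))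

theorem fderiv_superposition_apply {f : E → F} {u : C(K, E)} (hf : ∀ t, AnalyticAt 𝕜 f (u t))
    (hu : DifferentiableAt 𝕜 (superposition f) u) (w : C(K, E)) (t : K) :
    fderiv 𝕜 (superposition f) u w t = fderiv 𝕜 f (u t) (w t) := by
  let evalE : C(K, E) →L[𝕜] E := ContinuousMap.evalCLM 𝕜 t
  let evalF : C(K, F) →L[𝕜] F := ContinuousMap.evalCLM 𝕜 t
  have hleft : HasFDerivAt (fun v => superposition f v t)
      (evalF ∘L fderiv 𝕜 (superposition f) u) u :=
    evalF.hasFDerivAt.comp u hu.hasFDerivAt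
  have hright : HasFDerivAt (fun v : C(K, E) => f (v t)) (fderiv 𝕜 f (u t) ∘L evalE) u :=
    HasFDerivAt.comp (g := f) u (hf t).differentiableAt.hasFDerivAt evalE.hasFDerivAt
  refine DFunLike.congr_fun (hleft.unique (hright.congr_of_eventuallyEq ?_)) w
  filter_upwards [eventually_forall_apply fun t => (hf t).eventually_analyticAt] with v hv
  exact superposition_apply (fun t => (hv t).continuousAt) t

theorem fderiv_superposition_zero {f : E → F} (hf : AnalyticAt 𝕜 f 0) (hDf : fderiv 𝕜 f 0 = 0) :
    fderiv 𝕜 (superposition f) (0 : C(K, E)) = 0 := by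
  have hΦ : AnalyticAt 𝕜 (superposition f) (0 : C(K, E)) := analyticAt_superposition_const hf
  ext w t
  rw [fderiv_superposition_apply (fun _ => hf) hΦ.differentiableAt, ContinuousMap.zero_apply, hDf]
  rfl

end Superposition

section FixedPoint

variable {𝕜 E F : Type*} [NontriviallyNormedField 𝕜] [NormedAddCommGroup E] [NormedSpace 𝕜 E]
  [NormedAddCommGroup F] [NormedSpace 𝕜 F] [CompleteSpace F]

theorem exists_analyticAt_eq_add_apply {N : F → F} (hN : AnalyticAt 𝕜 N 0) (hN0 : N 0 = 0)
    (hDN : fderiv 𝕜 N 0 = 0) (κ : E →L[𝕜] F) :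
    ∃ u : E → F, AnalyticAt 𝕜 u 0 ∧ u 0 = 0 ∧ fderiv 𝕜 u 0 = κ ∧
      ∀ᶠ x in 𝓝 0, u x = κ x + N (u x) := by
  let f : F → F := fun v => v - N v
  have hf : AnalyticAt 𝕜 f 0 := analyticAt_id.sub hN
  have hf0 : f 0 = 0 := by simp [f, hN0]
  have hDf : fderiv 𝕜 f 0 = .id 𝕜 F := by
    simp [f, fderiv_fun_sub differentiableAt_fun_id hN.differentiableAt, hDN]
  obtain ⟨g, hg, hgf, hfg⟩ :=
    exists_analyticAt_inverse (i := ContinuousLinearEquiv.refl 𝕜 F) hf hDf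
  have hg0 : g 0 = 0 := by simpa only [hf0] using hgf.self_of_nhds
  have hDg : fderiv 𝕜 g 0 = .id 𝕜 F := by
    simpa only [hDf, hf0, ContinuousLinearMap.comp_id] using
      fderiv_comp_fderiv_eq_id hg.differentiableAt hf.differentiableAt hgf
  rw [hf0, ← map_zero κ] at hg hfg
  refine ⟨g ∘ κ, hg.comp (κ.analyticAt 0), by simp [hg0], ?_, ?_⟩
  · rw [fderiv_comp 0 hg.differentiableAt κ.differentiableAt, map_zero, hDg, κ.fderiv,
      ContinuousLinearMap.id_comp]
  · filter_upwards [κ.continuous.continuousAt.eventually hfg] with x hx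
    exact sub_eq_iff_eq_add.1 hx

end FixedPoint

/-! ### Linear operators on spaces of continuous maps -/

section ContinuousMapOperators

variable {𝕜 K E F : Type*} [NontriviallyNormedField 𝕜] [TopologicalSpace K] [CompactSpace K]
  [NormedAddCommGroup E] [NormedSpace 𝕜 E] [NormedAddCommGroup F] [NormedSpace 𝕜 F]

/-- The operator on continuous maps given by the pointwise application of a continuous family of
operators. -/
noncomputable def pointwiseCLM (Q : C(K, E →L[𝕜] F)) : C(K, E) →L[𝕜] C(K, F) :=
  LinearMap.mkContinuous
    { toFun u := ⟨fun t => Q t (u t), by fun_prop⟩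
      map_add' u v := by ext; simp
      map_smul' c u := by ext; simp }
    ‖Q‖ fun u => (ContinuousMap.norm_le _ (by positivity)).2 fun t =>
      (Q t).le_of_opNorm_le_of_le (Q.norm_coe_le_norm t) (u.norm_coe_le_norm t)

end ContinuousMapOperators

section Primitive

theorem continuous_IccExtend {α X : Type*} [LinearOrder α] [TopologicalSpace α] [OrderTopology α]
    [TopologicalSpace X] {a b : α} (hab : a ≤ b) (u : C(Set.Icc a b, X)) :
    Continuous (Set.IccExtend hab u) :=
  u.continuous.Icc_extend'

variable {E : Type*} [NormedAddCommGroup E] [NormedSpace ℂ E] {T : ℝ} (hT : 0 ≤ T)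

/-- Integration from `0` as an operator on the continuous maps on `[0, T]`. -/
noncomputable def primitiveCLM : C(Set.Icc 0 T, E) →L[ℂ] C(Set.Icc 0 T, E) :=
  LinearMap.mkContinuous
    { toFun u := ⟨fun t => ∫ s in (0 : ℝ)..t, Set.IccExtend hT u s,
        (intervalIntegral.continuous_primitive
          (fun a b => (continuous_IccExtend hT u).intervalIntegrable a b) 0).comp
            continuous_subtype_val⟩
      map_add' u v := by
        ext t
        exact intervalIntegral.integral_add ((continuous_IccExtend hT u).intervalIntegrable _ _)
          ((continuous_IccExtend hT v).intervalIntegrable _ _)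
      map_smul' c u := by
        ext t
        exact intervalIntegral.integral_smul c _ }
    T fun u => (ContinuousMap.norm_le _ (by positivity)).2 fun t => by
      refine (intervalIntegral.norm_integral_le_of_norm_le_const (C := ‖u‖)
        fun s _ => u.norm_coe_le_norm _).trans ?_
      rw [mul_comm, sub_zero, abs_of_nonneg t.2.1]
      gcongr
      exact t.2.2

theorem primitiveCLM_apply (u : C(Set.Icc 0 T, E)) (t : Set.Icc 0 T) :
    primitiveCLM hT u t = ∫ s in (0 : ℝ)..t, Set.IccExtend hT u s :=
  rfl

variable {hT} [CompleteSpace E] {u d : C(Set.Icc 0 T, E)} {x : E}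

theorem hasDerivWithinAt_of_eq_const_add_primitive
    (h : u = ContinuousMap.const _ x + primitiveCLM hT d) (t : Set.Icc 0 T) :
    HasDerivWithinAt (Set.IccExtend hT u) (d t) (Set.Icc 0 T) t := by
  have hu (s : Set.Icc 0 T) : u s = x + ∫ r in (0 : ℝ)..s, Set.IccExtend hT d r :=
    DFunLike.congr_fun h s
  have hc := continuous_IccExtend hT d
  have hderiv := (intervalIntegral.integral_hasDerivAt_right (hc.intervalIntegrable 0 (t : ℝ))
    hc.stronglyMeasurable.stronglyMeasurableAtFilter hc.continuousAt).const_add x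
  rw [Set.IccExtend_val] at hderiv
  refine hderiv.hasDerivWithinAt.congr (fun s hs => ?_) ?_
  · rw [Set.IccExtend_of_mem hT _ hs, hu]
  · rw [Set.IccExtend_val, hu]

theorem eq_const_add_primitive
    (h : ∀ t : Set.Icc 0 T, HasDerivWithinAt (Set.IccExtend hT u) (d t) (Set.Icc 0 T) t) :
    u = ContinuousMap.const _ (u ⟨0, Set.left_mem_Icc.2 hT⟩) + primitiveCLM hT d := by
  ext t
  have hftc := intervalIntegral.integral_eq_sub_of_hasDerivAt_of_le (f' := Set.IccExtend hT d)
    t.2.1 (continuous_IccExtend hT u).continuousOn (fun s hs => ?_)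
    ((continuous_IccExtend hT d).intervalIntegrable _ _)
  · rw [ContinuousMap.add_apply, ContinuousMap.const_apply, primitiveCLM_apply, hftc,
      Set.IccExtend_val, Set.IccExtend_of_mem hT _ (Set.left_mem_Icc.2 hT), add_sub_cancel]
  · have hsT : s ∈ Set.Icc 0 T := ⟨hs.1.le, hs.2.le.trans t.2.2⟩
    rw [Set.IccExtend_of_mem hT _ hsT]
    exact (h ⟨s, hsT⟩).hasDerivAt (Icc_mem_nhds hs.1 (hs.2.trans_le t.2.2))

end Primitive

/-! ### Rotations -/

section Rotation

variable {E : Type*} [NormedAddCommGroup E] [NormedSpace ℂ E]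

/-- The flow `exp (i t A)` of the linear vector field `i A`. -/
noncomputable def rotation (A : E →L[ℂ] E) (t : ℝ) : E →L[ℂ] E :=
  NormedSpace.exp (t • Complex.I • A)

variable {A B : E →L[ℂ] E}

@[simp]
theorem rotation_zero : rotation A 0 = 1 := by
  rw [rotation, zero_smul, NormedSpace.exp_zero]

theorem commute_rotation (h : Commute A B) (t : ℝ) : Commute (rotation A t) B :=
  let _ : NormedAlgebra ℚ (E →L[ℂ] E) := NormedAlgebra.restrictScalars ℚ ℂ _
  ((h.smul_left Complex.I).smul_left t).exp_left

theorem commute_rotation_apply (h : Commute A B) (t : ℝ) (x : E) :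
    rotation A t (B x) = B (rotation A t x) :=
  DFunLike.congr_fun (commute_rotation h t) x

variable [CompleteSpace E]

theorem rotation_neg_mul_rotation (t : ℝ) : rotation (-A) t * rotation A t = 1 := by
  let _ : NormedAlgebra ℚ (E →L[ℂ] E) := NormedAlgebra.restrictScalars ℚ ℂ _
  rw [rotation, rotation, smul_neg, smul_neg]
  refine (NormedSpace.exp_add_of_commute (Commute.refl _).neg_left).symm.trans ?_
  rw [neg_add_cancel, NormedSpace.exp_zero]

theorem rotation_neg_apply_rotation (t : ℝ) (x : E) : rotation (-A) t (rotation A t x) = x :=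
  DFunLike.congr_fun (rotation_neg_mul_rotation t) x

theorem rotation_apply_rotation_neg (t : ℝ) (x : E) : rotation A t (rotation (-A) t x) = x := by
  simpa only [neg_neg] using rotation_neg_apply_rotation (A := -A) t x

theorem hasDerivAt_rotation (t : ℝ) :
    HasDerivAt (rotation A) (Complex.I • A * rotation A t) t :=
  hasDerivAt_exp_smul_const' (𝕂 := ℝ) (Complex.I • A) t

theorem continuous_rotation : Continuous (rotation A) :=
  continuous_iff_continuousAt.2 fun t =>
    (hasDerivAt_rotation (A := A) t).differentiableAt.continuousAt

theorem hasDerivWithinAt_rotation_apply {v : ℝ → E} {v' : E} {s : Set ℝ} {t : ℝ}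
    (hv : HasDerivWithinAt v v' s t) :
    HasDerivWithinAt (fun t => rotation A t (v t))
      (rotation A t (v' + Complex.I • A (v t))) s t := by
  have hR : HasDerivAt (fun t => (rotation A t).restrictScalars ℝ)
      ((Complex.I • A * rotation A t).restrictScalars ℝ) t :=
    (ContinuousLinearMap.restrictScalarsL ℂ E E ℝ ℝ).hasFDerivAt.comp_hasDerivAt t
      (hasDerivAt_rotation t)
  refine (hR.hasDerivWithinAt.clm_apply hv).congr_deriv ?_
  rw [map_add, map_smul, commute_rotation_apply (Commute.refl A), add_comm]
  rfl

end Rotation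

section RotationCLM

variable {E : Type*} [NormedAddCommGroup E] [NormedSpace ℂ E] [CompleteSpace E]
  {A : E →L[ℂ] E} {T : ℝ}

/-- The pointwise action of the rotations `rotation A t` on curves, by which the linear part of a
vector field is eliminated from its differential equation. -/
noncomputable def rotationCLM (A : E →L[ℂ] E) (T : ℝ) :
    C(Set.Icc 0 T, E) →L[ℂ] C(Set.Icc 0 T, E) :=
  pointwiseCLM ⟨fun t => rotation A t, continuous_rotation.comp continuous_subtype_val⟩

@[simp]
theorem rotationCLM_apply (v : C(Set.Icc 0 T, E)) (t : Set.Icc 0 T) :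
    rotationCLM A T v t = rotation A t (v t) :=
  rfl

theorem hasDerivWithinAt_rotationCLM {hT : 0 ≤ T} {v : C(Set.Icc 0 T, E)} {v' : E}
    {t : Set.Icc 0 T} (hv : HasDerivWithinAt (Set.IccExtend hT v) v' (Set.Icc 0 T) t) :
    HasDerivWithinAt (Set.IccExtend hT (rotationCLM A T v))
      (rotation A t (v' + Complex.I • A (v t))) (Set.Icc 0 T) t := by
  have hRv := hasDerivWithinAt_rotation_apply (A := A) hv
  rw [Set.IccExtend_val] at hRv
  refine hRv.congr (fun s hs => ?_) ?_
  · rw [Set.IccExtend_of_mem hT _ hs, Set.IccExtend_of_mem hT _ hs, rotationCLM_apply]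
  · rw [Set.IccExtend_val, Set.IccExtend_val, rotationCLM_apply]

theorem variation_of_constants {hT : 0 ≤ T} {u h : C(Set.Icc 0 T, E)} {x : E}
    (hu : u = rotationCLM A T (ContinuousMap.const _ x +
      primitiveCLM hT (Complex.I • rotationCLM (-A) T h))) :
    u = ContinuousMap.const _ x +
      primitiveCLM hT (Complex.I • (pointwiseCLM (ContinuousMap.const _ A) u + h)) := by
  have hderiv := eq_const_add_primitive (hT := hT) (u := u)
    (d := Complex.I • (pointwiseCLM (ContinuousMap.const _ A) u + h)) fun t => by
    conv => enter [1]; rw [hu]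
    refine (hasDerivWithinAt_rotationCLM
      (hasDerivWithinAt_of_eq_const_add_primitive rfl t)).congr_deriv ?_
    simp only [ContinuousMap.smul_apply, ContinuousMap.add_apply,
      ContinuousMap.const_apply, rotationCLM_apply]
    rw [map_add, map_smul, map_smul, rotation_apply_rotation_neg,
      commute_rotation_apply (Commute.refl A), ← smul_add, add_comm, hu]
    rfl
  have hu0 : u ⟨0, Set.left_mem_Icc.2 hT⟩ = x := by
    rw [hu, rotationCLM_apply, rotation_zero, ContinuousMap.add_apply, primitiveCLM_apply,
      intervalIntegral.integral_same, ContinuousMap.const_apply, add_zero]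
    rfl
  rwa [hu0] at hderiv

end RotationCLM

/-! ### Flows near an equilibrium -/

section Flow

variable {E : Type*} [NormedAddCommGroup E] [NormedSpace ℂ E]

/-- For `x` near `0`, the curve `u x` is the integral curve of `i V` on `[0, T]` which starts at
`x`, and it depends analytically on `x`. The differential equation is written in Picard's integral
form, which can be differentiated with respect to `x`. -/
structure IsLocalFlow (V : E → E) {T : ℝ} (hT : 0 ≤ T) (u : E → C(Set.Icc 0 T, E)) : Prop where
  analyticAt : AnalyticAt ℂ u 0
  map_zero : u 0 = 0
  eventually_eq : ∀ᶠ x in 𝓝 0,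
    u x = ContinuousMap.const _ x + primitiveCLM hT (Complex.I • superposition V (u x))

namespace IsLocalFlow

variable {V : E → E} {T : ℝ} {hT : 0 ≤ T} {u : E → C(Set.Icc 0 T, E)}

theorem tendsto (hu : IsLocalFlow V hT u) : Tendsto u (𝓝 0) (𝓝 0) := by
  simpa only [ContinuousAt, hu.map_zero] using hu.analyticAt.continuousAt

theorem eventually_forall (hu : IsLocalFlow V hT u) {P : E → Prop} (hP : ∀ᶠ x in 𝓝 0, P x) :
    ∀ᶠ x in 𝓝 0, ∀ t, P (u x t) :=
  hu.tendsto.eventually (eventually_forall_apply fun _ => hP)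

theorem eventually_apply_zero (hu : IsLocalFlow V hT u) :
    ∀ᶠ x in 𝓝 0, u x ⟨0, Set.left_mem_Icc.2 hT⟩ = x := by
  filter_upwards [hu.eventually_eq] with x hx
  rw [hx, ContinuousMap.add_apply, primitiveCLM_apply, intervalIntegral.integral_same, add_zero,
    ContinuousMap.const_apply]

variable [CompleteSpace E]

theorem eventually_hasDerivWithinAt (hu : IsLocalFlow V hT u) (hV : AnalyticAt ℂ V 0) :
    ∀ᶠ x in 𝓝 0, ∀ t : Set.Icc 0 T,
      HasDerivWithinAt (Set.IccExtend hT (u x)) (Complex.I • V (u x t)) (Set.Icc 0 T) t := by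
  filter_upwards [hu.eventually_eq, hu.eventually_forall hV.eventually_analyticAt] with x hx hxV t
  rw [← superposition_apply (fun s => (hxV s).continuousAt) t]
  exact hasDerivWithinAt_of_eq_const_add_primitive hx t

theorem eventually_fderiv_eq (hu : IsLocalFlow V hT u) (hV : AnalyticAt ℂ V 0) :
    ∀ᶠ x in 𝓝 0, ∀ w, fderiv ℂ u x w = ContinuousMap.const _ w +
      primitiveCLM hT (Complex.I • fderiv ℂ (superposition V) (u x) (fderiv ℂ u x w)) := by
  filter_upwards [hu.eventually_eq.eventually_nhds, hu.analyticAt.eventually_analyticAt,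
    hu.tendsto.eventually (analyticAt_superposition_const hV).eventually_analyticAt]
    with x hx hux hΦ w
  have hderiv : HasFDerivAt (fun y => ContinuousMap.const _ y +
      primitiveCLM hT (Complex.I • superposition V (u y)))
      (ContinuousLinearMap.const ℂ (Set.Icc 0 T) + primitiveCLM hT ∘L
        (Complex.I • fderiv ℂ (superposition V) (u x) ∘L fderiv ℂ u x)) x :=
    (ContinuousLinearMap.const ℂ (Set.Icc 0 T)).hasFDerivAt.add
      ((primitiveCLM hT).hasFDerivAt.comp x ((hΦ.differentiableAt.hasFDerivAt.comp x
        hux.differentiableAt.hasFDerivAt).const_smul Complex.I))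
  exact DFunLike.congr_fun ((EventuallyEq.fderiv_eq hx).trans hderiv.fderiv) w

theorem eventually_fderiv_apply_zero (hu : IsLocalFlow V hT u) (hV : AnalyticAt ℂ V 0) :
    ∀ᶠ x in 𝓝 0, ∀ w, fderiv ℂ u x w ⟨0, Set.left_mem_Icc.2 hT⟩ = w := by
  filter_upwards [hu.eventually_fderiv_eq hV] with x hx w
  rw [hx, ContinuousMap.add_apply, primitiveCLM_apply, intervalIntegral.integral_same, add_zero,
    ContinuousMap.const_apply]

theorem eventually_hasDerivWithinAt_fderiv (hu : IsLocalFlow V hT u) (hV : AnalyticAt ℂ V 0) :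
    ∀ᶠ x in 𝓝 0, ∀ w (t : Set.Icc 0 T), HasDerivWithinAt (Set.IccExtend hT (fderiv ℂ u x w))
      (Complex.I • fderiv ℂ V (u x t) (fderiv ℂ u x w t)) (Set.Icc 0 T) t := by
  filter_upwards [hu.eventually_fderiv_eq hV, hu.eventually_forall hV.eventually_analyticAt,
    hu.tendsto.eventually (analyticAt_superposition_const hV).eventually_analyticAt]
    with x hx hxV hΦ w t
  rw [← fderiv_superposition_apply hxV hΦ.differentiableAt]
  exact hasDerivWithinAt_of_eq_const_add_primitive (hx w) t

end IsLocalFlow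

theorem exists_isLocalFlow [CompleteSpace E] {V : E → E} (hV : AnalyticAt ℂ V 0) (hV0 : V 0 = 0)
    {T : ℝ} (hT : 0 ≤ T) : ∃ u : E → C(Set.Icc 0 T, E), IsLocalFlow V hT u ∧
      ∀ w t, fderiv ℂ u 0 w t = rotation (fderiv ℂ V 0) t w := by
  set A := fderiv ℂ V 0
  let κ : E →L[ℂ] C(Set.Icc 0 T, E) := ContinuousLinearMap.const ℂ (Set.Icc 0 T)
  let g : E → E := fun x => V x - A x
  have hg : AnalyticAt ℂ g 0 := hV.sub (A.analyticAt 0)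
  have hg0 : g 0 = 0 := by simp [g, hV0]
  have hDg : fderiv ℂ g 0 = 0 := by
    simp [g, A, fderiv_fun_sub hV.differentiableAt A.differentiableAt]
  have hΦ : AnalyticAt ℂ (superposition g) (0 : C(Set.Icc 0 T, E)) :=
    analyticAt_superposition_const hg
  let L := rotationCLM A T ∘L primitiveCLM hT ∘L (Complex.I • rotationCLM (-A) T)
  obtain ⟨u, hu, hu0, hDu, hueq⟩ := exists_analyticAt_eq_add_apply
    (N := fun v => L (superposition g v)) ((L.analyticAt _).comp hΦ)
    (by rw [superposition_zero hg0, map_zero])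
    (by
      rw [fderiv_fun_comp _ L.differentiableAt hΦ.differentiableAt,
        fderiv_superposition_zero hg hDg, ContinuousLinearMap.comp_zero])
    (rotationCLM A T ∘L κ)
  have hut : Tendsto u (𝓝 0) (𝓝 0) := by simpa only [ContinuousAt, hu0] using hu.continuousAt
  refine ⟨u, ⟨hu, hu0, ?_⟩, fun w _ => by rw [hDu]; rfl⟩
  filter_upwards [hueq, hut.eventually
    (eventually_forall_apply fun _ => hV.eventually_analyticAt)] with x hx hxV
  have hsum : pointwiseCLM (ContinuousMap.const _ A) (u x) + superposition g (u x) =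
      superposition V (u x) := by
    ext t
    have hgx (s : Set.Icc 0 T) : ContinuousAt g (u x s) :=
      (hxV s).continuousAt.sub A.continuous.continuousAt
    rw [ContinuousMap.add_apply, superposition_apply hgx,
      superposition_apply fun s => (hxV s).continuousAt]
    exact add_sub_cancel _ _
  rw [← hsum]
  refine variation_of_constants (hx.trans ?_)
  rw [map_add]
  rfl

end Flow

/-! ### Averaging over a periodic flow -/

section Uniqueness

variable {E : Type*} [NormedAddCommGroup E] [NormedSpace ℝ E] {f g : ℝ → E} {a b : ℝ}

theorem hasDerivWithinAt_Ici_of_Icc {f' : E} {t : ℝ} (ht : t ∈ Set.Ico a b)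
    (hf : HasDerivWithinAt f f' (Set.Icc a b) t) : HasDerivWithinAt f f' (Set.Ici t) t :=
  hf.mono_of_mem_nhdsWithin (mem_of_superset (Icc_mem_nhdsGE ht.2) (Set.Icc_subset_Icc_left ht.1))

theorem eqOn_Icc_of_hasDerivWithinAt {W : E → E}
    (hf : ∀ t ∈ Set.Icc a b, HasDerivWithinAt f (W (f t)) (Set.Icc a b) t)
    (hg : ∀ t ∈ Set.Icc a b, HasDerivWithinAt g (W (g t)) (Set.Icc a b) t)
    (hWf : ∀ t ∈ Set.Icc a b, ContDiffAt ℝ 1 W (f t))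
    (hWg : ∀ t ∈ Set.Icc a b, ContDiffAt ℝ 1 W (g t)) (hfg : f a = g a) :
    Set.EqOn f g (Set.Icc a b) := by
  have hfc : ContinuousOn f (Set.Icc a b) := fun t ht => (hf t ht).continuousWithinAt
  have hgc : ContinuousOn g (Set.Icc a b) := fun t ht => (hg t ht).continuousWithinAt
  obtain ⟨K, hK⟩ : ∃ K, LipschitzOnWith K W (f '' Set.Icc a b ∪ g '' Set.Icc a b) := by
    refine LocallyLipschitzOn.exists_lipschitzOnWith_of_compact
      ((isCompact_Icc.image_of_continuousOn hfc).union (isCompact_Icc.image_of_continuousOn hgc)) ?_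
    rintro _ (⟨t, ht, rfl⟩ | ⟨t, ht, rfl⟩)
    · obtain ⟨K, s, hs, hKs⟩ := (hWf t ht).exists_lipschitzOnWith
      exact ⟨K, s, mem_nhdsWithin_of_mem_nhds hs, hKs⟩
    · obtain ⟨K, s, hs, hKs⟩ := (hWg t ht).exists_lipschitzOnWith
      exact ⟨K, s, mem_nhdsWithin_of_mem_nhds hs, hKs⟩
  exact ODE_solution_unique_of_mem_Icc_right (v := fun _ => W) (fun _ _ => hK) hfc
    (fun t ht => hasDerivWithinAt_Ici_of_Icc ht (hf t (Set.Ico_subset_Icc_self ht)))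
    (fun t ht => Or.inl ⟨t, Set.Ico_subset_Icc_self ht, rfl⟩) hgc
    (fun t ht => hasDerivWithinAt_Ici_of_Icc ht (hg t (Set.Ico_subset_Icc_self ht)))
    (fun t ht => Or.inr ⟨t, Set.Ico_subset_Icc_self ht, rfl⟩) hfg

end Uniqueness

section Transport

variable {E F : Type*} [NormedAddCommGroup E] [NormedSpace ℂ E] [NormedAddCommGroup F]
  [NormedSpace ℂ F] {T : ℝ} {hT : 0 ≤ T}

theorem hasDerivWithinAt_IccExtend_comp {f : E → F} {u : C(Set.Icc 0 T, E)}
    {k : C(Set.Icc 0 T, F)} {u' : E} {t : Set.Icc 0 T}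
    (hu : HasDerivWithinAt (Set.IccExtend hT u) u' (Set.Icc 0 T) t)
    (hf : DifferentiableAt ℂ f (u t)) (hk : ∀ t, k t = f (u t)) :
    HasDerivWithinAt (Set.IccExtend hT k) (fderiv ℂ f (u t) u') (Set.Icc 0 T) t := by
  have hft : HasFDerivAt f (fderiv ℂ f (u t)) (Set.IccExtend hT u t) := by
    rw [Set.IccExtend_val]
    exact hf.hasFDerivAt
  refine ((hft.restrictScalars ℝ).comp_hasDerivWithinAt (t : ℝ) hu).congr (fun s _ => hk _) (hk _)

variable [CompleteSpace E]

theorem eq_of_hasDerivWithinAt_IccExtend {V : E → E} {u v : C(Set.Icc 0 T, E)}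
    (hVu : ∀ t, AnalyticAt ℂ V (u t)) (hVv : ∀ t, AnalyticAt ℂ V (v t))
    (hu : ∀ t : Set.Icc 0 T,
      HasDerivWithinAt (Set.IccExtend hT u) (Complex.I • V (u t)) (Set.Icc 0 T) t)
    (hv : ∀ t : Set.Icc 0 T,
      HasDerivWithinAt (Set.IccExtend hT v) (Complex.I • V (v t)) (Set.Icc 0 T) t)
    (huv : u ⟨0, Set.left_mem_Icc.2 hT⟩ = v ⟨0, Set.left_mem_Icc.2 hT⟩) : u = v := by
  have hext (w : C(Set.Icc 0 T, E)) (t) (ht : t ∈ Set.Icc 0 T) :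
      Set.IccExtend hT w t = w ⟨t, ht⟩ := Set.IccExtend_of_mem hT _ ht
  have hcd {x : E} (hx : AnalyticAt ℂ V x) : ContDiffAt ℝ 1 (fun x => Complex.I • V x) x :=
    hx.fun_const_smul.contDiffAt.restrict_scalars ℝ
  have heq := eqOn_Icc_of_hasDerivWithinAt (W := fun x => Complex.I • V x)
    (f := Set.IccExtend hT u) (g := Set.IccExtend hT v)
    (fun t ht => by rw [hext u t ht]; exact hu ⟨t, ht⟩)
    (fun t ht => by rw [hext v t ht]; exact hv ⟨t, ht⟩)
    (fun t ht => by rw [hext u t ht]; exact hcd (hVu _))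
    (fun t ht => by rw [hext v t ht]; exact hcd (hVv _))
    (by rw [hext u 0 (Set.left_mem_Icc.2 hT), hext v 0 (Set.left_mem_Icc.2 hT), huv])
  ext t
  rw [← Set.IccExtend_val hT u, ← Set.IccExtend_val hT v, heq t.2]

-- Both `(u, z)` and `(u, Z ∘ u)` are integral curves of `i` times the tangent lift
-- `(x, w) ↦ (V x, DV(x) w)`.
theorem apply_eq_of_lieBracket_eq_zero {V Z : E → E} {u z : C(Set.Icc 0 T, E)}
    (hV : ∀ t, AnalyticAt ℂ V (u t)) (hZ : ∀ t, AnalyticAt ℂ Z (u t))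
    (hu : ∀ t : Set.Icc 0 T,
      HasDerivWithinAt (Set.IccExtend hT u) (Complex.I • V (u t)) (Set.Icc 0 T) t)
    (hz : ∀ t : Set.Icc 0 T, HasDerivWithinAt (Set.IccExtend hT z)
      (Complex.I • fderiv ℂ V (u t) (z t)) (Set.Icc 0 T) t)
    (hVZ : ∀ t, lieBracket ℂ V Z (u t) = 0)
    (h0 : z ⟨0, Set.left_mem_Icc.2 hT⟩ = Z (u ⟨0, Set.left_mem_Icc.2 hT⟩)) (t : Set.Icc 0 T) :
    z t = Z (u t) := by
  let y : C(Set.Icc 0 T, E) := ⟨fun t => Z (u t), continuous_iff_continuousAt.2 fun t =>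
    (hZ t).continuousAt.comp u.continuous.continuousAt⟩
  have hy (t : Set.Icc 0 T) : HasDerivWithinAt (Set.IccExtend hT y)
      (Complex.I • fderiv ℂ V (u t) (y t)) (Set.Icc 0 T) t := by
    refine (hasDerivWithinAt_IccExtend_comp (hu t) (hZ t).differentiableAt
      fun _ => rfl).congr_deriv ?_
    rw [map_smul, sub_eq_zero.1 (hVZ t)]
    rfl
  let W : E × E → E × E := fun p => (V p.1, fderiv ℂ V p.1 p.2)
  have hW (w : C(Set.Icc 0 T, E)) (t : Set.Icc 0 T) : AnalyticAt ℂ W (u t, w t) := by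
    have hfst : AnalyticAt ℂ (Prod.fst : E × E → E) (u t, w t) := analyticAt_fst
    exact ((hV t).comp_of_eq hfst rfl).prod
      (analyticAt_clm_apply ((hV t).fderiv.comp_of_eq hfst rfl) analyticAt_snd)
  have heq : u.prodMk z = u.prodMk y :=
    eq_of_hasDerivWithinAt_IccExtend (V := W) (hT := hT) (hW z) (hW y)
      (fun t => (hu t).prodMk (hz t)) (fun t => (hu t).prodMk (hy t)) (Prod.ext rfl h0)
  exact congrArg Prod.snd (DFunLike.congr_fun heq t)

theorem IsLocalFlow.eventually_fderiv_apply_eq {V Z : E → E} {u : E → C(Set.Icc 0 T, E)}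
    (hu : IsLocalFlow V hT u) (hV : AnalyticAt ℂ V 0) (hZ : AnalyticAt ℂ Z 0)
    (hVZ : ∀ᶠ x in 𝓝 0, lieBracket ℂ V Z x = 0) :
    ∀ᶠ x in 𝓝 0, ∀ t, fderiv ℂ u x (Z x) t = Z (u x t) := by
  filter_upwards [hu.eventually_apply_zero, hu.eventually_hasDerivWithinAt hV,
    hu.eventually_fderiv_apply_zero hV, hu.eventually_hasDerivWithinAt_fderiv hV,
    hu.eventually_forall hV.eventually_analyticAt, hu.eventually_forall hZ.eventually_analyticAt,
    hu.eventually_forall hVZ] with x hx0 hx hDx0 hDx hxV hxZ hxVZ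
  exact apply_eq_of_lieBracket_eq_zero hxV hxZ hx (hDx (Z x)) hxVZ (by rw [hDx0, hx0])

end Transport

section Average

variable {E : Type*} [NormedAddCommGroup E] [NormedSpace ℂ E] [CompleteSpace E]
  {A B : E →L[ℂ] E} {T : ℝ} {hT : 0 ≤ T}

/-- The mean over `[0, T]` of the curve `t ↦ rotation A (-t) (k t)`. -/
noncomputable def averageCLM (A : E →L[ℂ] E) (hT : 0 ≤ T) : C(Set.Icc 0 T, E) →L[ℂ] E :=
  (T : ℂ)⁻¹ • (ContinuousMap.evalCLM ℂ ⟨T, Set.right_mem_Icc.2 hT⟩ ∘L primitiveCLM hT ∘L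
    rotationCLM (-A) T)

theorem averageCLM_apply (k : C(Set.Icc 0 T, E)) : averageCLM A hT k =
    (T : ℂ)⁻¹ • ∫ t in (0 : ℝ)..T, Set.IccExtend hT (rotationCLM (-A) T k) t :=
  rfl

theorem averageCLM_of_eq_rotation (hT0 : T ≠ 0) {k : C(Set.Icc 0 T, E)} {w : E}
    (hk : ∀ t : Set.Icc 0 T, k t = rotation A t w) : averageCLM A hT k = w := by
  have hconst : rotationCLM (-A) T k = ContinuousMap.const _ w := by
    ext t
    rw [rotationCLM_apply, hk, rotation_neg_apply_rotation, ContinuousMap.const_apply]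
  have hext : Set.IccExtend hT (ContinuousMap.const (Set.Icc 0 T) w) = fun _ => w := rfl
  rw [averageCLM_apply, hconst, hext, intervalIntegral.integral_const, sub_zero,
    ← Complex.coe_smul, inv_smul_smul₀ (Complex.ofReal_ne_zero.2 hT0)]

theorem averageCLM_of_eq_apply (hAB : Commute A B) {k l : C(Set.Icc 0 T, E)}
    (hl : ∀ t, l t = B (k t)) : averageCLM A hT l = B (averageCLM A hT k) := by
  rw [averageCLM_apply, averageCLM_apply, map_smul, ← B.intervalIntegral_comp_comm
    ((continuous_IccExtend hT _).intervalIntegrable _ _)]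
  congr 2 with t
  change rotationCLM _ _ _ _ = B (rotationCLM _ _ _ _)
  rw [rotationCLM_apply, rotationCLM_apply, hl, commute_rotation_apply hAB.neg_left]

theorem averageCLM_of_hasDerivWithinAt (hAT : rotation A T = 1) {k d : C(Set.Icc 0 T, E)}
    (hk : ∀ t : Set.Icc 0 T,
      HasDerivWithinAt (Set.IccExtend hT k) (Complex.I • d t) (Set.Icc 0 T) t)
    (hkT : k ⟨T, Set.right_mem_Icc.2 hT⟩ = k ⟨0, Set.left_mem_Icc.2 hT⟩) :
    averageCLM A hT d = A (averageCLM A hT k) := by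
  let Ak := pointwiseCLM (ContinuousMap.const _ A) k
  have hprim := DFunLike.congr_fun (eq_const_add_primitive (hT := hT) (u := rotationCLM (-A) T k)
    (d := Complex.I • rotationCLM (-A) T (d - Ak)) fun t => by
      refine (hasDerivWithinAt_rotationCLM (hk t)).congr_deriv ?_
      rw [neg_apply, smul_neg, ← sub_eq_add_neg, ← smul_sub, map_smul]
      rfl) ⟨T, Set.right_mem_Icc.2 hT⟩
  have hAT' : rotation (-A) T = 1 := by
    rw [← rotation_neg_mul_rotation (A := A) T, hAT, mul_one]
  have hzero : averageCLM A hT (d - Ak) = 0 := by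
    rw [map_smul, ContinuousMap.add_apply, ContinuousMap.const_apply, rotationCLM_apply,
      rotationCLM_apply, hAT', rotation_zero, hkT, left_eq_add, ContinuousMap.smul_apply,
      smul_eq_zero_iff_right Complex.I_ne_zero, primitiveCLM_apply] at hprim
    rw [averageCLM_apply, hprim, smul_zero]
  rwa [map_sub, averageCLM_of_eq_apply (Commute.refl A) (l := Ak) fun _ => rfl,
    sub_eq_zero] at hzero

/-- Every point near `0` lies on a `T`-periodic integral curve of `i V`. -/
def HasPeriodicFlow (V : E → E) (T : ℝ) : Prop :=
  ∀ᶠ x in 𝓝 0, ∃ c : ℝ → E, c 0 = x ∧ c T = x ∧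
    ∀ t, AnalyticAt ℂ V (c t) ∧ HasDerivAt c (Complex.I • V (c t)) t

/-- The mean of the maps `x ↦ rotation A (-t) (f (u x t))`. If `u` is a periodic flow with linear
part `A`, then this mean linearizes the corresponding vector field. -/
noncomputable def averageMap (A : E →L[ℂ] E) (hT : 0 ≤ T) (f : E → E)
    (u : E → C(Set.Icc 0 T, E)) (x : E) : E :=
  averageCLM A hT (superposition f (u x))

namespace IsLocalFlow

variable {V Z f : E → E} {u : E → C(Set.Icc 0 T, E)}

theorem eventually_apply_period (hu : IsLocalFlow V hT u) (hV : AnalyticAt ℂ V 0)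
    (hper : HasPeriodicFlow V T) : ∀ᶠ x in 𝓝 0, u x ⟨T, Set.right_mem_Icc.2 hT⟩ = x := by
  filter_upwards [hu.eventually_apply_zero, hu.eventually_hasDerivWithinAt hV,
    hu.eventually_forall hV.eventually_analyticAt, hper] with x hx0 hx hxV ⟨c, hc0, hcT, hc⟩
  let c' : C(Set.Icc 0 T, E) := ⟨fun t => c t, (continuous_iff_continuousAt.2 fun t =>
    (hc t).2.continuousAt).comp continuous_subtype_val⟩
  have huc : u x = c' := by
    refine eq_of_hasDerivWithinAt_IccExtend hxV (fun t => (hc t).1) hx (fun t => ?_)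
      (hx0.trans hc0.symm)
    refine (hc t).2.hasDerivWithinAt.congr (fun s hs => ?_) ?_
    · exact Set.IccExtend_of_mem hT _ hs
    · exact Set.IccExtend_val hT _ t
  rw [huc]
  exact hcT

theorem analyticAt_averageMap (hu : IsLocalFlow V hT u) (hf : AnalyticAt ℂ f 0) :
    AnalyticAt ℂ (averageMap A hT f u) 0 :=
  ((averageCLM A hT).analyticAt _).comp
    ((analyticAt_superposition_const hf).comp_of_eq hu.analyticAt hu.map_zero)

theorem averageMap_zero (hu : IsLocalFlow V hT u) (hf0 : f 0 = 0) :
    averageMap A hT f u 0 = 0 := by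
  rw [averageMap, hu.map_zero, superposition_zero hf0, _root_.map_zero]

theorem eventually_fderiv_averageMap (hu : IsLocalFlow V hT u) (hf : AnalyticAt ℂ f 0) :
    ∀ᶠ x in 𝓝 0, ∀ w, fderiv ℂ (averageMap A hT f u) x w =
      averageCLM A hT (fderiv ℂ (superposition f) (u x) (fderiv ℂ u x w)) := by
  filter_upwards [hu.analyticAt.eventually_analyticAt,
    hu.tendsto.eventually (analyticAt_superposition_const hf).eventually_analyticAt] with x hux hΦ w
  exact DFunLike.congr_fun ((averageCLM A hT).hasFDerivAt.comp x
    (hΦ.differentiableAt.hasFDerivAt.comp x hux.differentiableAt.hasFDerivAt)).fderiv w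

theorem fderiv_averageMap_zero (hu : IsLocalFlow V hT u) (hT0 : T ≠ 0)
    (hDu : ∀ w t, fderiv ℂ u 0 w t = rotation A t w) (hf : AnalyticAt ℂ f 0)
    (hDf : fderiv ℂ f 0 = .id ℂ E) : fderiv ℂ (averageMap A hT f u) 0 = .id ℂ E := by
  have hΦ : AnalyticAt ℂ (superposition f) (0 : C(Set.Icc 0 T, E)) :=
    analyticAt_superposition_const hf
  ext w
  rw [(hu.eventually_fderiv_averageMap hf).self_of_nhds, hu.map_zero]
  refine averageCLM_of_eq_rotation hT0 fun t => ?_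
  rw [fderiv_superposition_apply (fun _ => hf) hΦ.differentiableAt, ContinuousMap.zero_apply, hDf,
    hDu]
  rfl

theorem isRelatedAt_averageMap (hu : IsLocalFlow V hT u) (hV : AnalyticAt ℂ V 0)
    (hf : AnalyticAt ℂ f 0) (hZ : AnalyticAt ℂ Z 0) (hVZ : ∀ᶠ x in 𝓝 0, lieBracket ℂ V Z x = 0)
    (hAB : Commute A B) (hfZ : IsRelatedAt ℂ f Z B 0) :
    IsRelatedAt ℂ (averageMap A hT f u) Z B 0 := by
  filter_upwards [hu.eventually_fderiv_averageMap hf, hu.eventually_fderiv_apply_eq hV hZ hVZ,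
    hu.eventually_forall hfZ, hu.eventually_forall hf.eventually_analyticAt,
    hu.tendsto.eventually (analyticAt_superposition_const hf).eventually_analyticAt]
    with x hDF hux hfx hfan hΦ
  rw [hDF]
  refine averageCLM_of_eq_apply hAB fun t => ?_
  rw [fderiv_superposition_apply hfan hΦ.differentiableAt, hux, hfx,
    superposition_apply fun t => (hfan t).continuousAt]

theorem isRelatedAt_averageMap_self (hu : IsLocalFlow V hT u) (hV : AnalyticAt ℂ V 0)
    (hper : HasPeriodicFlow V T) (hAT : rotation A T = 1) (hf : AnalyticAt ℂ f 0) :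
    IsRelatedAt ℂ (averageMap A hT f u) V A 0 := by
  filter_upwards [hu.eventually_fderiv_averageMap hf, hu.eventually_hasDerivWithinAt hV,
    hu.eventually_fderiv_apply_eq hV hV (.of_forall fun x => by simp),
    hu.eventually_apply_zero, hu.eventually_apply_period hV hper,
    hu.eventually_forall hf.eventually_analyticAt,
    hu.tendsto.eventually (analyticAt_superposition_const hf).eventually_analyticAt]
    with x hDF hu' hux hx0 hxT hfan hΦ
  have hΦu := superposition_apply fun t => (hfan t).continuousAt
  rw [hDF]
  refine averageCLM_of_hasDerivWithinAt hAT (fun t => ?_) (by rw [hΦu, hΦu, hxT, hx0])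
  rw [fderiv_superposition_apply hfan hΦ.differentiableAt, hux, ← map_smul]
  exact hasDerivWithinAt_IccExtend_comp (hu' t) (hfan t).differentiableAt hΦu

end IsLocalFlow

end Average

theorem exists_isTangentToId_isRelatedAt_fderiv {E : Type*} [NormedAddCommGroup E]
    [NormedSpace ℂ E] [CompleteSpace E] {V : E → E} {T : ℝ} (hV : AnalyticAt ℂ V 0)
    (hV0 : V 0 = 0) (hT : 0 < T) (hper : HasPeriodicFlow V T)
    (hVT : rotation (fderiv ℂ V 0) T = 1) {f : E → E} (hf : IsTangentToId ℂ f) :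
    ∃ F : E → E, IsTangentToId ℂ F ∧ IsRelatedAt ℂ F V (fderiv ℂ V 0) 0 ∧
      ∀ (Z : E → E) (B : E →L[ℂ] E), AnalyticAt ℂ Z 0 → Commute (fderiv ℂ V 0) B →
        (∀ᶠ x in 𝓝 0, lieBracket ℂ V Z x = 0) → IsRelatedAt ℂ f Z B 0 → IsRelatedAt ℂ F Z B 0 := by
  obtain ⟨u, hu, hDu⟩ := exists_isLocalFlow hV hV0 hT.le
  exact ⟨averageMap (fderiv ℂ V 0) hT.le f u,
    ⟨hu.analyticAt_averageMap hf.analyticAt, hu.averageMap_zero hf.map_zero,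
      hu.fderiv_averageMap_zero hT.ne' hDu hf.analyticAt hf.fderiv_zero⟩,
    hu.isRelatedAt_averageMap_self hV hper hVT hf.analyticAt,
    fun Z B hZ hAB hVZ hfZ => hu.isRelatedAt_averageMap hV hf.analyticAt hZ hVZ hAB hfZ⟩

theorem exists_isTangentToId_forall_isRelatedAt_fderiv {E ι : Type*} [NormedAddCommGroup E]
    [NormedSpace ℂ E] [CompleteSpace E] [Finite ι] {V : ι → E → E} {T : ι → ℝ}
    (hV : ∀ k, AnalyticAt ℂ (V k) 0) (hV0 : ∀ k, V k 0 = 0) (hT : ∀ k, 0 < T k)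
    (hper : ∀ k, HasPeriodicFlow (V k) (T k)) (hVT : ∀ k, rotation (fderiv ℂ (V k) 0) (T k) = 1)
    (hcomm : ∀ j k, Commute (fderiv ℂ (V j) 0) (fderiv ℂ (V k) 0))
    (hbracket : ∀ j k, ∀ᶠ x in 𝓝 0, lieBracket ℂ (V j) (V k) x = 0) :
    ∃ f : E → E, IsTangentToId ℂ f ∧ ∀ k, IsRelatedAt ℂ f (V k) (fderiv ℂ (V k) 0) 0 := by
  classical
  have := Fintype.ofFinite ι
  suffices ∀ s : Finset ι, ∃ f : E → E, IsTangentToId ℂ f ∧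
      ∀ k ∈ s, IsRelatedAt ℂ f (V k) (fderiv ℂ (V k) 0) 0 by
    simpa using this Finset.univ
  intro s
  induction s using Finset.induction_on with
  | empty => exact ⟨id, isTangentToId_id, by simp⟩
  | insert k s _ ih =>
    obtain ⟨f, hf, hfs⟩ := ih
    obtain ⟨F, hF, hFk, hFZ⟩ :=
      exists_isTangentToId_isRelatedAt_fderiv (hV k) (hV0 k) (hT k) (hper k) (hVT k) hf
    refine ⟨F, hF, fun j hj => ?_⟩
    rcases Finset.mem_insert.1 hj with rfl | hj
    · exact hFk
    · exact hFZ (V j) _ (hV j) (hcomm k j) (hbracket k j) (hfs j hj)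

/-! ### Diagonal maps -/

section Diagonal

variable {n : ℕ}

@[simp]
theorem diagCLM_apply (γ x : Fin n → ℂ) (j : Fin n) : diagCLM γ x j = γ j * x j := by
  simp [diagCLM, Matrix.mulVec_diagonal]

theorem trace_diagCLM (γ : Fin n → ℂ) :
    LinearMap.trace ℂ (Fin n → ℂ) (diagCLM γ : (Fin n → ℂ) →ₗ[ℂ] (Fin n → ℂ)) = ∑ j, γ j := by
  simp [diagCLM, Matrix.trace]

/-- The maps `diagCLM γ` as a representation of the algebra `ℂⁿ`. -/
noncomputable def diagAlgHom (n : ℕ) : (Fin n → ℂ) →ₐ[ℂ] ((Fin n → ℂ) →L[ℂ] (Fin n → ℂ)) :=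
  AlgHom.ofLinearMap
    { toFun := diagCLM
      map_add' γ δ := by ext; simp [add_mul]
      map_smul' c γ := by ext; simp [mul_assoc] }
    (by ext; simp) (fun γ δ => by ext; simp [mul_assoc])

theorem diagAlgHom_apply (γ : Fin n → ℂ) : diagAlgHom n γ = diagCLM γ :=
  rfl

theorem commute_diagCLM (γ δ : Fin n → ℂ) : Commute (diagCLM γ) (diagCLM δ) :=
  (Commute.all γ δ).map (diagAlgHom n)

theorem isSemisimple_diagCLM (γ : Fin n → ℂ) :
    Module.End.IsSemisimple (diagCLM γ : Module.End ℂ (Fin n → ℂ)) := by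
  let p : Polynomial ℂ := ∏ a ∈ Finset.univ.image γ, (Polynomial.X - Polynomial.C a)
  have hp : Polynomial.aeval γ p = 0 := by
    ext j
    change Pi.evalAlgHom ℂ (fun _ => ℂ) j (Polynomial.aeval γ p) = 0
    rw [← Polynomial.aeval_algHom_apply, Pi.evalAlgHom_apply, Polynomial.coe_aeval_eq_eval,
      Polynomial.eval_prod]
    exact Finset.prod_eq_zero (Finset.mem_image_of_mem γ (Finset.mem_univ j)) (by simp)
  have hsep : p.Separable := Polynomial.separable_prod_X_sub_C_iff'.2 fun x _ y _ h => h
  refine Module.End.isSemisimple_of_squarefree_aeval_eq_zero hsep.squarefree ?_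
  change Polynomial.aeval
    (Matrix.toLinAlgEquiv'.toAlgHom.comp (Matrix.diagonalAlgHom ℂ) γ) p = 0
  rw [Polynomial.aeval_algHom_apply, hp, map_zero]

theorem rotation_diagCLM (γ : Fin n → ℂ) (t : ℝ) :
    rotation (diagCLM γ) t = diagCLM fun j => Complex.exp (t * (Complex.I * γ j)) := by
  have hcont : Continuous (diagAlgHom n) :=
    (diagAlgHom n).toLinearMap.continuous_of_finiteDimensional
  rw [rotation, ← diagAlgHom_apply, ← diagAlgHom_apply, ← map_smul, ← Complex.coe_smul, ← map_smul,
    ← NormedSpace.map_exp (diagAlgHom n) hcont]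
  congr 1
  ext j
  rw [Pi.coe_exp, Complex.exp_eq_exp_ℂ]
  rfl

theorem norm_rotation_diagCLM_apply (γ : Fin n → ℝ) (t : ℝ) (x : Fin n → ℂ) :
    ‖rotation (diagCLM fun j => (γ j : ℂ)) t x‖ = ‖x‖ := by
  have hnorm (j : Fin n) : ‖rotation (diagCLM fun j => (γ j : ℂ)) t x j‖ = ‖x j‖ := by
    have hexp : (t : ℂ) * (Complex.I * γ j) = ((t * γ j : ℝ) : ℂ) * Complex.I := by
      push_cast
      ring
    rw [rotation_diagCLM, diagCLM_apply, norm_mul, hexp, Complex.norm_exp_ofReal_mul_I, one_mul]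
  simp only [Pi.norm_def, nnnorm, hnorm]

theorem rotation_diagCLM_add_two_pi (ρ : Fin n → ℤ) (t : ℝ) :
    rotation (diagCLM fun j => (ρ j : ℂ)) (t + 2 * Real.pi) =
      rotation (diagCLM fun j => (ρ j : ℂ)) t := by
  rw [rotation_diagCLM, rotation_diagCLM]
  congr 1
  ext j
  rw [Complex.exp_eq_exp_iff_exists_int]
  exact ⟨ρ j, by push_cast; ring⟩

theorem rotation_diagCLM_two_pi (ρ : Fin n → ℤ) :
    rotation (diagCLM fun j => (ρ j : ℂ)) (2 * Real.pi) = 1 := by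
  simpa using rotation_diagCLM_add_two_pi ρ 0

end Diagonal

/-! ### Volume correction -/

section SegmentMean

variable {E F : Type*} [NormedAddCommGroup E] [NormedSpace ℂ E] [NormedAddCommGroup F]
  [NormedSpace ℂ F] {P A : E →L[ℂ] E} {J : E → F}

/-- The segment `s ↦ y + (s - 1) P y` from `y - P y` to `y`. -/
noncomputable def segmentCLM (P : E →L[ℂ] E) : E →L[ℂ] C(Set.Icc (0 : ℝ) 1, E) :=
  pointwiseCLM ⟨fun s => .id ℂ E + ((s : ℝ) - 1 : ℂ) • P, by fun_prop⟩ ∘L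
    ContinuousLinearMap.const ℂ (Set.Icc (0 : ℝ) 1)

theorem segmentCLM_apply (P : E →L[ℂ] E) (y : E) (s : Set.Icc (0 : ℝ) 1) :
    segmentCLM P y s = y + ((s : ℝ) - 1 : ℂ) • P y :=
  rfl

/-- The mean of `J` over the segments `segmentCLM P y`. -/
noncomputable def segmentMean (P : E →L[ℂ] E) (J : E → F) (y : E) : F :=
  primitiveCLM zero_le_one (superposition J (segmentCLM P y)) ⟨1, Set.right_mem_Icc.2 zero_le_one⟩

theorem eventually_forall_segmentCLM {p : E → Prop} (hp : ∀ᶠ y in 𝓝 0, p y) :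
    ∀ᶠ y in 𝓝 0, ∀ s, p (segmentCLM P y s) := by
  have hcont := (segmentCLM P).continuous.tendsto 0
  refine hcont.eventually (eventually_forall_apply fun s => ?_)
  rwa [map_zero]

theorem hasDerivAt_smul_apply_add_smul {x v : E} {s : ℝ}
    (hJ : DifferentiableAt ℂ J (x + ((s : ℂ) - 1) • v)) :
    HasDerivAt (fun s : ℝ => (s : ℂ) • J (x + ((s : ℂ) - 1) • v))
      (J (x + ((s : ℂ) - 1) • v) + fderiv ℂ J (x + ((s : ℂ) - 1) • v) ((s : ℂ) • v)) s := by
  have hs : HasDerivAt (fun s : ℝ => (s : ℂ)) 1 s := Complex.ofRealCLM.hasDerivAt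
  have hseg : HasDerivAt (fun s : ℝ => x + ((s : ℂ) - 1) • v) v s := by
    simpa using ((hs.sub_const 1).smul_const v).const_add x
  refine (hs.fun_smul ((hJ.hasFDerivAt.restrictScalars ℝ).comp_hasDerivAt s hseg)).congr_deriv ?_
  rw [one_smul, map_smul, add_comm, Function.comp_apply, ContinuousLinearMap.coe_restrictScalars']

variable [CompleteSpace F]

theorem analyticAt_superposition_segmentCLM (hJ : AnalyticAt ℂ J 0) :
    AnalyticAt ℂ (superposition J) (segmentCLM P 0) := by
  rw [map_zero]
  exact analyticAt_superposition_const hJ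

theorem analyticAt_segmentMean (hJ : AnalyticAt ℂ J 0) : AnalyticAt ℂ (segmentMean P J) 0 :=
  ((ContinuousMap.evalCLM ℂ _ ∘L primitiveCLM zero_le_one).analyticAt _).fun_comp
    ((analyticAt_superposition_segmentCLM hJ).fun_comp ((segmentCLM P).analyticAt 0))

theorem segmentMean_zero : segmentMean P J 0 = J 0 := by
  have hconst : superposition J (segmentCLM P 0) = ContinuousMap.const _ (J 0) :=
    superposition_eq fun s => by rw [map_zero]; rfl
  rw [segmentMean, hconst, primitiveCLM_apply]
  exact (intervalIntegral.integral_const (J 0)).trans (by simp)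

theorem eventually_fderiv_segmentMean (hJ : AnalyticAt ℂ J 0) :
    ∀ᶠ y in 𝓝 0, ∀ z, ∃ d : C(Set.Icc (0 : ℝ) 1, F),
      (∀ s, d s = fderiv ℂ J (segmentCLM P y s) (segmentCLM P z s)) ∧
      fderiv ℂ (segmentMean P J) y z =
        primitiveCLM zero_le_one d ⟨1, Set.right_mem_Icc.2 zero_le_one⟩ := by
  have hcont := (segmentCLM P).continuous.tendsto 0
  filter_upwards [hcont.eventually (analyticAt_superposition_segmentCLM hJ).eventually_analyticAt,
    eventually_forall_segmentCLM hJ.eventually_analyticAt] with y hy hJy z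
  refine ⟨fderiv ℂ (superposition J) (segmentCLM P y) (segmentCLM P z),
    fderiv_superposition_apply hJy hy.differentiableAt _, ?_⟩
  have h := (ContinuousMap.evalCLM ℂ (⟨1, Set.right_mem_Icc.2 zero_le_one⟩ : Set.Icc (0 : ℝ) 1) ∘L
    primitiveCLM zero_le_one).hasFDerivAt.comp y
      (hy.differentiableAt.hasFDerivAt.comp y (segmentCLM P).hasFDerivAt)
  exact DFunLike.congr_fun h.fderiv z

-- The integrand `J + DJ(P ·)` is the derivative of `s ↦ s • J (y + (s - 1) P y)`.
theorem eventually_segmentMean_add_fderiv (hP : IsIdempotentElem P) (hJ : AnalyticAt ℂ J 0) :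
    ∀ᶠ y in 𝓝 0, segmentMean P J y + fderiv ℂ (segmentMean P J) y (P y) = J y := by
  filter_upwards [eventually_fderiv_segmentMean (P := P) hJ,
    eventually_forall_segmentCLM (P := P) hJ.eventually_analyticAt] with y hy hJy
  obtain ⟨d, hd, hDw⟩ := hy (P y)
  have hJs := superposition_apply (u := segmentCLM P y) fun s => (hJy s).continuousAt
  let k : C(Set.Icc (0 : ℝ) 1, F) :=
    ⟨fun s => ((s : ℝ) : ℂ) • superposition J (segmentCLM P y) s, by fun_prop⟩
  have hk (s : Set.Icc (0 : ℝ) 1) : k s = ((s : ℝ) : ℂ) • J (y + ((s : ℝ) - 1 : ℂ) • P y) := by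
    rw [← segmentCLM_apply, ← hJs, ContinuousMap.coe_mk]
  have hDk (s : Set.Icc (0 : ℝ) 1) : HasDerivWithinAt (Set.IccExtend zero_le_one k)
      ((superposition J (segmentCLM P y) + d) s) (Set.Icc 0 1) s := by
    have hPPy : segmentCLM P (P y) s = ((s : ℝ) : ℂ) • P y := by
      rw [segmentCLM_apply, ← mul_apply_eq_comp, hP.eq]
      module
    have hderiv := hasDerivAt_smul_apply_add_smul (x := y) (v := P y) (hJy s).differentiableAt
    rw [← hPPy, ← segmentCLM_apply, ← hJs, ← hd] at hderiv
    refine hderiv.hasDerivWithinAt.congr (fun r hr => ?_) ?_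
    · rw [Set.IccExtend_of_mem _ _ hr, hk]
    · rw [Set.IccExtend_val, hk]
  have hftc := DFunLike.congr_fun (eq_const_add_primitive hDk) ⟨1, Set.right_mem_Icc.2 zero_le_one⟩
  rw [map_add, ContinuousMap.add_apply, ContinuousMap.add_apply, ContinuousMap.const_apply] at hftc
  rw [hDw, segmentMean]
  simpa [hk] using hftc.symm

theorem eventually_fderiv_segmentMean_eq_zero (hJ : AnalyticAt ℂ J 0) (hAP : Commute A P)
    (hJA : ∀ᶠ y in 𝓝 0, fderiv ℂ J y (A y) = 0) :
    ∀ᶠ y in 𝓝 0, fderiv ℂ (segmentMean P J) y (A y) = 0 := by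
  filter_upwards [eventually_fderiv_segmentMean hJ, eventually_forall_segmentCLM hJA] with y hy hJy
  obtain ⟨d, hd, hDw⟩ := hy (A y)
  have hd0 : d = 0 := by
    ext s
    have hPA : P (A y) = A (P y) := (DFunLike.congr_fun hAP y).symm
    rw [hd, segmentCLM_apply P (A y), hPA, ← map_smul, ← map_add]
    exact hJy s
  rw [hDw, hd0, map_zero, ContinuousMap.zero_apply]

end SegmentMean

section VolumeCorrection

variable {E : Type*} [NormedAddCommGroup E] [NormedSpace ℂ E] [FiniteDimensional ℂ E]

theorem exists_isTangentToId_det_fderiv_eq {J : E → ℂ} (hJ : AnalyticAt ℂ J 0) (hJ0 : J 0 = 1)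
    {ℓ : E →L[ℂ] ℂ} {v : E} (hℓv : ℓ v = 1) :
    ∃ h : E → E, IsTangentToId ℂ h ∧ (∀ᶠ y in 𝓝 0, (fderiv ℂ h y).det = J y) ∧
      ∀ A : E →L[ℂ] E, Commute A (ℓ.smulRight v) → (∀ᶠ y in 𝓝 0, fderiv ℂ J y (A y) = 0) →
        IsRelatedAt ℂ h A A 0 := by
  have := FiniteDimensional.complete ℂ E
  set P := ℓ.smulRight v with hP
  have hPP : IsIdempotentElem P := by ext; simp [hP, hℓv]
  let w := segmentMean P J
  have hw : AnalyticAt ℂ w 0 := analyticAt_segmentMean hJ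
  have hw0 : w 0 = 1 := segmentMean_zero.trans hJ0
  let h : E → E := fun y => y + (w y - 1) • P y
  have hh : AnalyticAt ℂ h 0 :=
    analyticAt_id.fun_add ((hw.fun_sub analyticAt_const).fun_smul (P.analyticAt 0))
  have hDh : ∀ᶠ y in 𝓝 0, ∀ z,
      fderiv ℂ h y z = z + ((w y - 1) * ℓ z + ℓ y * fderiv ℂ w y z) • v := by
    filter_upwards [hw.eventually_analyticAt] with y hy z
    have hhy : HasFDerivAt h _ y := (hasFDerivAt_id y).fun_add
      ((hy.differentiableAt.hasFDerivAt.sub_const 1).fun_smul (P.hasFDerivAt (x := y)))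
    rw [hhy.fderiv]
    simp [hP, smul_smul, add_smul, mul_comm]
  refine ⟨h, ⟨hh, by simp [h], ?_⟩, ?_, fun A hAP hJA => ?_⟩
  · ext z
    simp [hDh.self_of_nhds, hw0]
  · filter_upwards [hDh, eventually_segmentMean_add_fderiv hPP hJ] with y hy hwy
    have htrans : (fderiv ℂ h y : E →ₗ[ℂ] E) = LinearMap.transvection
        ((w y - 1) • (ℓ : E →ₗ[ℂ] ℂ) + ℓ y • (fderiv ℂ w y : E →ₗ[ℂ] ℂ)) v :=
      LinearMap.ext hy
    rw [ContinuousLinearMap.det, htrans, LinearMap.transvection.det, ← hwy]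
    simp [hP, hℓv, w]
    ring
  · filter_upwards [hDh, eventually_fderiv_segmentMean_eq_zero hJ hAP hJA] with y hy hwy
    have hPA : P (A y) = A (P y) := (DFunLike.congr_fun hAP y).symm
    rw [hy, hwy, mul_zero, add_zero, mul_smul]
    change A y + _ • P (A y) = _
    rw [hPA, ← map_smul, ← map_add]

theorem exists_isTangentToId_det_fderiv_eq_of_diagCLM {n : ℕ} {J : (Fin n → ℂ) → ℂ}
    (hJ : AnalyticAt ℂ J 0) (hJ0 : J 0 = 1) :
    ∃ h : (Fin n → ℂ) → (Fin n → ℂ), IsTangentToId ℂ h ∧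
      (∀ᶠ y in 𝓝 0, (fderiv ℂ h y).det = J y) ∧
      ∀ γ : Fin n → ℂ, (∀ᶠ y in 𝓝 0, fderiv ℂ J y (diagCLM γ y) = 0) →
        IsRelatedAt ℂ h (diagCLM γ) (diagCLM γ) 0 := by
  rcases isEmpty_or_nonempty (Fin n) with hn | ⟨⟨i⟩⟩
  · refine ⟨id, isTangentToId_id, .of_forall fun y => ?_, fun γ _ => .of_forall fun y => ?_⟩
    · rw [Subsingleton.elim y 0, hJ0, fderiv_id]
      exact LinearMap.det_id
    · exact Subsingleton.elim _ _
  · obtain ⟨h, hh, hdet, hrel⟩ := exists_isTangentToId_det_fderiv_eq hJ hJ0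
      (ℓ := ContinuousLinearMap.proj i) (v := Pi.single i 1) (by simp)
    have hproj : (ContinuousLinearMap.proj i : (Fin n → ℂ) →L[ℂ] ℂ).smulRight (Pi.single i 1) =
        diagCLM (Pi.single i 1) := by
      ext y j
      by_cases hj : j = i <;> simp [hj]
    exact ⟨h, hh, hdet, fun γ => hrel _ (hproj ▸ commute_diagCLM γ _)⟩

end VolumeCorrection

/-! ### Resonances -/

section PartialDerivatives

variable {𝕜 ι F : Type*} [NontriviallyNormedField 𝕜] [Fintype ι] [DecidableEq ι]
  [NormedAddCommGroup F] [NormedSpace 𝕜 F] [CompleteSpace F]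

theorem iteratedFDeriv_succ_eq_zero {f : (ι → 𝕜) → F} {x : ι → 𝕜} {m : ℕ} (hf : AnalyticAt 𝕜 f x)
    (h : ∀ i, iteratedFDeriv 𝕜 m (fun y => fderiv 𝕜 f y (Pi.single i 1)) x = 0) :
    iteratedFDeriv 𝕜 (m + 1) f x = 0 := by
  ext v
  rw [iteratedFDeriv_succ_apply_right, pi_eq_sum_univ' (v (Fin.last m)), map_sum]
  refine Finset.sum_eq_zero fun i _ => ?_
  have hcomp := (ContinuousLinearMap.apply 𝕜 F (Pi.single i (1 : 𝕜))).iteratedFDeriv_comp_left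
    hf.fderiv.contDiffAt (i := m) (n := m) le_rfl
  have hpartial := DFunLike.congr_fun (hcomp.symm.trans (h i)) (Fin.init v)
  rw [map_smul]
  exact smul_eq_zero_of_right _ hpartial

theorem eventually_eq_zero_of_iteratedFDeriv_eq_zero [CharZero 𝕜] {E : Type*}
    [NormedAddCommGroup E] [NormedSpace 𝕜 E] {f : E → F} (hf : AnalyticAt 𝕜 f 0)
    (h : ∀ m, iteratedFDeriv 𝕜 m f 0 = 0) : ∀ᶠ x in 𝓝 0, f x = 0 := by
  obtain ⟨p, r, hp⟩ := hf
  filter_upwards [Metric.eball_mem_nhds 0 hp.r_pos] with x hx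
  have hsum := hp.hasSum_iteratedFDeriv hx
  simp only [h, zero_apply, smul_zero, zero_add] at hsum
  exact hsum.unique hasSum_zero

end PartialDerivatives

section Eigenfunctions

variable {n : ℕ} {γ ρ : Fin n → ℂ} {a b : ℂ} {f : (Fin n → ℂ) → ℂ} {x : Fin n → ℂ}

/-- The operator `f ↦ Df(diag ρ ·) - b f`, vanishing on the eigenfunctions for the eigenvalue `b` of
the diagonal derivation with weights `ρ`. -/
noncomputable def eigenDefect (ρ : Fin n → ℂ) (b : ℂ) (f : (Fin n → ℂ) → ℂ) (x : Fin n → ℂ) : ℂ :=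
  fderiv ℂ f x (diagCLM ρ x) - b * f x

theorem analyticAt_fderiv_diagCLM (hf : AnalyticAt ℂ f x) :
    AnalyticAt ℂ (fun y => fderiv ℂ f y (diagCLM ρ y)) x :=
  analyticAt_clm_apply hf.fderiv ((diagCLM ρ).analyticAt x)

theorem analyticAt_eigenDefect (hf : AnalyticAt ℂ f x) : AnalyticAt ℂ (eigenDefect ρ b f) x :=
  (analyticAt_fderiv_diagCLM hf).fun_sub (analyticAt_const.fun_mul hf)

theorem fderiv_eigenDefect_single (hf : AnalyticAt ℂ f x) (i : Fin n) :
    fderiv ℂ (eigenDefect ρ b f) x (Pi.single i 1) =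
      eigenDefect ρ (b - ρ i) (fun y => fderiv ℂ f y (Pi.single i 1)) x := by
  have hD := hf.fderiv.differentiableAt
  have hsymm : IsSymmSndFDerivAt ℂ f x := hf.contDiffAt.isSymmSndFDerivAt (n := 2) (by simp)
  have hsingle : diagCLM ρ (Pi.single i 1) = ρ i • Pi.single i (1 : ℂ) := by
    ext j
    by_cases h : j = i <;> simp [h]
  change fderiv ℂ (fun y => fderiv ℂ f y (diagCLM ρ y) - b * f y) x _ = _
  rw [fderiv_fun_sub (analyticAt_fderiv_diagCLM hf).differentiableAt
    (hf.differentiableAt.const_mul b), fderiv_clm_apply hD (diagCLM ρ).differentiableAt,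
    fderiv_const_mul hf.differentiableAt, eigenDefect,
    fderiv_clm_apply hD (differentiableAt_const _)]
  simp [hsingle, hsymm.eq]
  ring

theorem eventually_fderiv_eigenDefect_single (hf : AnalyticAt ℂ f x) (i : Fin n) :
    (fun y => fderiv ℂ (eigenDefect ρ b f) y (Pi.single i 1)) =ᶠ[𝓝 x]
      eigenDefect ρ (b - ρ i) fun y => fderiv ℂ f y (Pi.single i 1) :=
  hf.eventually_analyticAt.mono fun _ hy => fderiv_eigenDefect_single hy i

-- Formally, `f` consists of monomials `x ^ m` with `a = ∑ i, m i * γ i`. The induction on the order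
-- of differentiation replaces this expansion: `∂ᵢ` shifts `a` by `γ i` and `b` by `ρ i`.
theorem iteratedFDeriv_eigenDefect_eq_zero (m : ℕ) (hf : AnalyticAt ℂ f 0)
    (hres : ∀ m : Fin n → ℕ, a = ∑ i, m i * γ i → b = ∑ i, m i * ρ i)
    (hfγ : eigenDefect γ a f =ᶠ[𝓝 0] 0) : iteratedFDeriv ℂ m (eigenDefect ρ b f) 0 = 0 := by
  induction m generalizing f a b with
  | zero =>
    ext v
    have hfa : a * f 0 = 0 := by simpa [eigenDefect] using hfγ.self_of_nhds
    have hfb : b * f 0 = 0 := by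
      rcases mul_eq_zero.1 hfa with ha | hf0
      · rw [hres 0 (by simp [ha])]
        simp
      · rw [hf0, mul_zero]
    simp [eigenDefect, hfb]
  | succ m ih =>
    refine iteratedFDeriv_succ_eq_zero (analyticAt_eigenDefect hf) fun i => ?_
    rw [((eventually_fderiv_eigenDefect_single hf i).iteratedFDeriv ℂ m).self_of_nhds]
    refine ih (a := a - γ i) (analyticAt_clm_apply hf.fderiv analyticAt_const) (fun k hk => ?_) ?_
    · have hb := hres (k + Pi.single i 1)
        (by simp [add_mul, Finset.sum_add_distrib, ← hk, Pi.single_apply])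
      simp [hb, add_mul, Finset.sum_add_distrib, Pi.single_apply]
    · refine (eventually_fderiv_eigenDefect_single hf i).symm.trans ?_
      filter_upwards [hfγ.eventuallyEq_nhds] with y hy
      simp [hy.fderiv_eq]

theorem eventually_eigenDefect_eq_zero (hf : AnalyticAt ℂ f 0)
    (hres : ∀ m : Fin n → ℕ, a = ∑ i, m i * γ i → b = ∑ i, m i * ρ i)
    (hfγ : eigenDefect γ a f =ᶠ[𝓝 0] 0) : eigenDefect ρ b f =ᶠ[𝓝 0] 0 :=
  eventually_eq_zero_of_iteratedFDeriv_eq_zero (analyticAt_eigenDefect hf) fun m =>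
    iteratedFDeriv_eigenDefect_eq_zero m hf hres hfγ

end Eigenfunctions

section QLattice

variable {n : ℕ} {γ : Fin n → ℂ} {ρ : Fin n → ℤ}

theorem isResonanceRelation_single {j : Fin n} (hj : γ j = 0) :
    IsResonanceRelation γ (Pi.single j 1) := by
  have hnonneg (i : Fin n) : (0 : ℤ) ≤ (Pi.single j 1 : Fin n → ℤ) i := by
    rw [Pi.single_apply]
    split_ifs <;> simp
  exact ⟨by simp [Pi.single_apply, hj], fun i => by linarith [hnonneg i], by simp,
    fun i k hi => absurd hi (hnonneg i).not_gt⟩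

theorem isResonanceRelation_sub_single {j : Fin n} {m : Fin n → ℕ} (hm : γ j = ∑ i, m i * γ i)
    (hm1 : 1 < ∑ i, m i) :
    IsResonanceRelation γ fun i => m i - (Pi.single j 1 : Fin n → ℤ) i := by
  have hneg (i : Fin n) (hi : (m i : ℤ) - (Pi.single j 1 : Fin n → ℤ) i < 0) : i = j := by
    by_contra hij
    rw [Pi.single_eq_of_ne hij] at hi
    lia
  refine ⟨?_, fun i => ?_, ?_, fun i k hi hk => (hneg i hi).trans (hneg k hk).symm⟩
  · push_cast
    simp only [sub_mul, Finset.sum_sub_distrib, Pi.single_apply, ← hm]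
    simp
  · dsimp only
    rw [Pi.single_apply]
    split_ifs <;> lia
  · rw [Finset.sum_sub_distrib, Finset.sum_pi_single', if_pos (Finset.mem_univ j)]
    have : (1 : ℤ) < ∑ i, (m i : ℤ) := mod_cast hm1
    lia

theorem eq_sum_of_mem_QLattice (hρ : ρ ∈ QLattice γ) {j : Fin n} {m : Fin n → ℕ}
    (hm : γ j = ∑ i, m i * γ i) : ρ j = ∑ i, m i * ρ i := by
  obtain ⟨hres, heq⟩ := hρ
  rcases Nat.lt_or_ge 1 (∑ i, m i) with h | h
  · have hsum := hres _ (isResonanceRelation_sub_single hm h)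
    simp only [mul_sub, Finset.sum_sub_distrib, Pi.single_apply, mul_ite, mul_one, mul_zero,
      Finset.sum_ite_eq', Finset.mem_univ, if_true, sub_eq_zero] at hsum
    simp only [← hsum, mul_comm]
  · interval_cases hsum : ∑ i, m i
    · have hm0 (i : Fin n) : m i = 0 := Finset.sum_eq_zero_iff.1 hsum i (Finset.mem_univ i)
      have hγj : γ j = 0 := by simpa [hm0] using hm
      simpa [hm0, Pi.single_apply] using hres _ (isResonanceRelation_single hγj)
    · obtain ⟨i, hi⟩ := (Finsupp.sum_eq_one_iff (Finsupp.equivFunOnFinite.symm m)).1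
        (by rw [Finsupp.sum_fintype _ _ fun _ => rfl]; exact hsum)
      obtain rfl : m = Pi.single i 1 := by
        rw [← Finsupp.single_eq_pi_single, ← hi]
        rfl
      simpa [Pi.single_apply] using heq j i (by simpa [Pi.single_apply] using hm)

theorem sum_eq_zero_of_mem_QLattice (hγ : ∑ j, γ j = 0) (hρ : ρ ∈ QLattice γ) : ∑ j, ρ j = 0 := by
  rcases Nat.eq_zero_or_pos n with rfl | hn
  · simp
  · simpa using hρ.1 (fun _ => 1)
      ⟨by simpa using hγ, by simp, by simpa using Nat.succ_le_of_lt hn, by simp⟩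

theorem mem_QLattice_of_forall_cast_eq {q : ℂ →ₗ[ℚ] ℚ} (hρ : ∀ j, (ρ j : ℚ) = q (γ j)) :
    ρ ∈ QLattice γ := by
  refine ⟨fun c hc => ?_, fun j k hjk => ?_⟩
  · have hsum : ∑ j, (ρ j : ℚ) * c j = q (∑ j, (c j : ℂ) * γ j) := by
      rw [map_sum]
      refine Finset.sum_congr rfl fun j _ => ?_
      have hcγ : (c j : ℂ) * γ j = (c j : ℚ) • γ j := by simp [Rat.smul_def]
      rw [hcγ, map_smul, hρ, smul_eq_mul, mul_comm]
    rw [hc.1, map_zero] at hsum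
    exact_mod_cast hsum
  · have hcast : (ρ j : ℚ) = ρ k := by rw [hρ, hρ, hjk]
    exact_mod_cast hcast

/-- The entrywise inclusion of `ℤⁿ` into `ℂⁿ`. -/
def complexWeights (n : ℕ) : (Fin n → ℤ) →ₗ[ℤ] (Fin n → ℂ) :=
  (Int.castAddHom ℂ).toIntLinearMap.compLeft (Fin n)

theorem comp_mem_span_complexWeights_QLattice (γ : Fin n → ℂ) (q : ℂ →ₗ[ℚ] ℚ) :
    (fun j => (q (γ j) : ℂ)) ∈ Submodule.span ℂ (complexWeights n '' QLattice γ) := by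
  obtain ⟨d, hd⟩ := IsLocalization.exist_integer_multiples_of_finite (nonZeroDivisors ℤ)
    fun j => q (γ j)
  choose p hp using hd
  have hp' (j : Fin n) : (p j : ℚ) = (d : ℤ) * q (γ j) := by simpa using hp j
  have hpQ : p ∈ QLattice γ := mem_QLattice_of_forall_cast_eq (q := ((d : ℤ) : ℚ) • q) hp'
  have hd0 : ((d : ℤ) : ℂ) ≠ 0 := mod_cast nonZeroDivisors.coe_ne_zero d
  have hqp : (fun j => (q (γ j) : ℂ)) = ((d : ℤ) : ℂ)⁻¹ • complexWeights n p := by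
    ext j
    have hpj : (p j : ℂ) = (d : ℤ) * (q (γ j) : ℂ) := mod_cast congrArg (Rat.cast (K := ℂ)) (hp' j)
    change (q (γ j) : ℂ) = ((d : ℤ) : ℂ)⁻¹ * p j
    rw [hpj, inv_mul_cancel_left₀ hd0]
  rw [hqp]
  exact Submodule.smul_mem _ _ (Submodule.subset_span ⟨p, hpQ, rfl⟩)

theorem mem_of_forall_comp_mem {ι : Type*} [Finite ι] {v : ι → ℂ} {S : Submodule ℂ (ι → ℂ)}
    (h : ∀ q : ℂ →ₗ[ℚ] ℚ, (fun j => (q (v j) : ℂ)) ∈ S) : v ∈ S := by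
  classical
  have := Fintype.ofFinite ι
  let b := Module.Basis.ofVectorSpace ℚ ℂ
  let s := Finset.univ.biUnion fun j => (b.repr (v j)).support
  have hv : v = ∑ l ∈ s, b l • fun j => ((b.coord l (v j) : ℚ) : ℂ) := by
    ext j
    have hsupp : (b.repr (v j)).support ⊆ s :=
      Finset.subset_biUnion_of_mem (fun j => (b.repr (v j)).support) (Finset.mem_univ j)
    conv_lhs => rw [← b.linearCombination_repr (v j), Finsupp.linearCombination_apply,
      Finsupp.sum_of_support_subset _ hsupp _ fun l _ => zero_smul ℚ (b l)]
    simp [Finset.sum_apply, Rat.smul_def, mul_comm]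
  rw [hv]
  exact Submodule.sum_mem _ fun l _ => Submodule.smul_mem _ _ (h (b.coord l))

theorem mem_span_complexWeights_QLattice (γ : Fin n → ℂ) :
    γ ∈ Submodule.span ℂ (complexWeights n '' QLattice γ) :=
  mem_of_forall_comp_mem (comp_mem_span_complexWeights_QLattice γ)

end QLattice

section Centralizer

variable {n : ℕ} {γ : Fin n → ℂ} {ρ : Fin n → ℤ} {Y : (Fin n → ℂ) → (Fin n → ℂ)}

theorem lieBracket_diagCLM_apply {x : Fin n → ℂ} (hY : DifferentiableAt ℂ Y x) (j : Fin n) :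
    lieBracket ℂ Y (diagCLM γ) x j = -eigenDefect γ (γ j) (fun y => Y y j) x := by
  rw [lieBracket, ContinuousLinearMap.fderiv, Pi.sub_apply, diagCLM_apply, eigenDefect, neg_sub,
    fderiv_apply hY]
  rfl

theorem eventually_lieBracket_diagCLM_eq_zero_iff (hY : AnalyticAt ℂ Y 0) :
    (∀ᶠ x in 𝓝 0, lieBracket ℂ Y (diagCLM γ) x = 0) ↔
      ∀ j, eigenDefect γ (γ j) (fun y => Y y j) =ᶠ[𝓝 0] 0 := by
  refine Iff.trans (eventually_congr (hY.eventually_analyticAt.mono fun x hx => ?_)) eventually_all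
  simp [funext_iff, lieBracket_diagCLM_apply hx.differentiableAt]

theorem eventually_lieBracket_diagCLM_eq_zero (hρ : ρ ∈ QLattice γ) (hY : AnalyticAt ℂ Y 0)
    (h : ∀ᶠ x in 𝓝 0, lieBracket ℂ Y (diagCLM γ) x = 0) :
    ∀ᶠ x in 𝓝 0, lieBracket ℂ Y (diagCLM fun j => (ρ j : ℂ)) x = 0 := by
  rw [eventually_lieBracket_diagCLM_eq_zero_iff hY] at h ⊢
  refine fun j => eventually_eigenDefect_eq_zero (analyticAt_pi_iff.1 hY j) (fun m hm => ?_) (h j)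
  exact mod_cast congrArg (Int.cast (R := ℂ)) (eq_sum_of_mem_QLattice hρ hm)

theorem eventually_lieBracket_diagCLM_eq_zero_of_mem_span {s : Set (Fin n → ℂ)}
    (hs : ∀ δ ∈ s, ∀ᶠ x in 𝓝 0, lieBracket ℂ Y (diagCLM δ) x = 0)
    (hγ : γ ∈ Submodule.span ℂ s) : ∀ᶠ x in 𝓝 0, lieBracket ℂ Y (diagCLM γ) x = 0 := by
  have hlin (δ : Fin n → ℂ) (x : Fin n → ℂ) : lieBracket ℂ Y (diagCLM δ) x =
      diagAlgHom n δ (Y x) - fderiv ℂ Y x (diagAlgHom n δ x) := by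
    rw [lieBracket, ContinuousLinearMap.fderiv]
    rfl
  simp only [hlin] at hs ⊢
  induction hγ using Submodule.span_induction with
  | mem δ hδ => exact hs δ hδ
  | zero => simp
  | add δ ε _ _ hδ hε =>
    filter_upwards [hδ, hε] with x hδx hεx
    rw [map_add, add_apply, add_apply, map_add, add_sub_add_comm, hδx, hεx, add_zero]
  | smul a δ _ hδ =>
    filter_upwards [hδ] with x hδx
    rw [map_smul, smul_apply, smul_apply, map_smul, ← smul_sub, hδx, smul_zero]

end Centralizer

/-! ### Jordan–Chevalley decompositions -/

section JordanChevalley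

variable {K V W : Type*} [Field K] [PerfectField K] [AddCommGroup V] [Module K V]
  [FiniteDimensional K V] [AddCommGroup W] [Module K W]

theorem comp_semisimple_eq_semisimple_comp (e : V ≃ₗ[K] W) {S N : Module.End K V}
    {S' N' : Module.End K W} (hS : S.IsSemisimple) (hN : IsNilpotent N) (hSN : Commute S N)
    (hS' : S'.IsSemisimple) (hN' : IsNilpotent N') (hSN' : Commute S' N')
    (h : e ∘ₗ (S + N) = (S' + N') ∘ₗ e) : e ∘ₗ S = S' ∘ₗ e := by
  have := Module.Finite.equiv e
  let c := e.conjRingEquiv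
  have hcS : (c S).IsSemisimple :=
    (e.isSemisimple_iff S _ (LinearMap.ext fun x => by simp [c])).1 hS
  have hsum : c N + c S = N' + S' := by
    ext x
    simpa [c, add_comm] using LinearMap.congr_fun h (e.symm x)
  have hconj : c S = S' := (Module.End.isNilpotent_isSemisimple_unique (hN.map c) hcS hN' hS'
    (hSN.symm.map c) hSN'.symm hsum).2
  ext x
  simpa [c] using LinearMap.congr_fun hconj (e x)

end JordanChevalley

/-! ### Volume-preserving changes of coordinates -/

section Unimodular

variable {𝕜 E : Type*} [NontriviallyNormedField 𝕜] [NormedAddCommGroup E] [NormedSpace 𝕜 E]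

namespace IsTangentToId

variable {f g X X' Y Y' : E → E}

theorem apply_zero_eq_zero_iff (hf : IsTangentToId 𝕜 f) (h : IsRelatedAt 𝕜 f X Y 0) :
    X 0 = 0 ↔ Y 0 = 0 := by
  have h0 := h.eq
  rw [hf.fderiv_zero, hf.map_zero, ContinuousLinearMap.id_apply] at h0
  rw [h0]

variable [CompleteSpace E]

theorem map_nhds_eq (hf : IsTangentToId 𝕜 f) : map f (𝓝 0) = 𝓝 0 := by
  have hs : HasStrictFDerivAt f (ContinuousLinearEquiv.refl 𝕜 E : E →L[𝕜] E) 0 := by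
    rw [ContinuousLinearEquiv.coe_refl, ← hf.fderiv_zero]
    exact hf.analyticAt.hasStrictFDerivAt
  rw [hs.map_nhds_eq_of_equiv, hf.map_zero]

theorem tendsto (hf : IsTangentToId 𝕜 f) : Tendsto f (𝓝 0) (𝓝 0) :=
  hf.map_nhds_eq.le

theorem isRelatedAt_comp (hg : IsTangentToId 𝕜 g) (hf : IsTangentToId 𝕜 f)
    (hgXX' : IsRelatedAt 𝕜 g X X' 0) (hfYX : IsRelatedAt 𝕜 f Y X 0) :
    IsRelatedAt 𝕜 (g ∘ f) Y X' 0 := by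
  refine IsRelatedAt.comp ?_ hfYX ?_ hf.analyticAt <;> rw [hf.map_zero]
  exacts [hgXX', hg.analyticAt]

theorem isRelatedAt_symm (hf : IsTangentToId 𝕜 f) (hg : IsTangentToId 𝕜 g)
    (hgf : ∀ᶠ y in 𝓝 0, g (f y) = y) (hfg : ∀ᶠ z in 𝓝 0, f (g z) = z)
    (h : IsRelatedAt 𝕜 f X Y 0) : IsRelatedAt 𝕜 g Y X 0 := by
  have hsymm := h.symm (g := g) hf.analyticAt
  rw [hf.map_zero] at hsymm
  exact hsymm hg.analyticAt hgf hfg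

theorem exists_isRelatedAt (hf : IsTangentToId 𝕜 f) (hX : AnalyticAt 𝕜 X 0) :
    ∃ Y, AnalyticAt 𝕜 Y 0 ∧ IsRelatedAt 𝕜 f X Y 0 := by
  simpa [hf.map_zero] using exists_analyticAt_isRelatedAt (i := ContinuousLinearEquiv.refl 𝕜 E)
    hf.analyticAt hf.fderiv_zero hX

theorem eventually_lieBracket_eq_zero (hf : IsTangentToId 𝕜 f) (hXY : IsRelatedAt 𝕜 f X Y 0)
    (hXY' : IsRelatedAt 𝕜 f X' Y' 0) (hX : AnalyticAt 𝕜 X 0) (hX' : AnalyticAt 𝕜 X' 0)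
    (hY : AnalyticAt 𝕜 Y 0) (hY' : AnalyticAt 𝕜 Y' 0)
    (hXX' : ∀ᶠ x in 𝓝 0, lieBracket 𝕜 X X' x = 0) : ∀ᶠ y in 𝓝 0, lieBracket 𝕜 Y Y' y = 0 := by
  have hbracket := hXY.eventually_lieBracket_eq_zero (i := ContinuousLinearEquiv.refl 𝕜 E) hXY'
    hf.analyticAt hf.fderiv_zero hX hX'
  rw [hf.map_zero] at hbracket
  exact hbracket hY hY' hXX'

theorem fderiv_zero_eq (hf : IsTangentToId 𝕜 f) (h : IsRelatedAt 𝕜 f X Y 0)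
    (hX : DifferentiableAt 𝕜 X 0) (hX0 : X 0 = 0) (hY : DifferentiableAt 𝕜 Y 0) :
    fderiv 𝕜 Y 0 = fderiv 𝕜 X 0 := by
  have hDD := h.fderiv_comp_fderiv hf.analyticAt hX (hf.map_zero.symm ▸ hY)
  simpa [hX0, hf.map_zero, hf.fderiv_zero] using hDD.symm

end IsTangentToId

theorem det_fderiv_mul_det_fderiv {f g : E → E} {x : E} (hg : DifferentiableAt 𝕜 g (f x))
    (hf : DifferentiableAt 𝕜 f x) (hgf : ∀ᶠ y in 𝓝 x, g (f y) = y) :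
    (fderiv 𝕜 g (f x)).det * (fderiv 𝕜 f x).det = 1 := by
  have hid := congrArg ContinuousLinearMap.det (fderiv_comp_fderiv_eq_id hg hf hgf)
  rwa [ContinuousLinearMap.det, ContinuousLinearMap.toLinearMap_comp, LinearMap.det_comp,
    ContinuousLinearMap.det.eq_1 (.id 𝕜 E), ContinuousLinearMap.coe_id, LinearMap.det_id] at hid

variable (𝕜) in
/-- Germs of volume-preserving analytic changes of coordinates at `0`, normalized to be tangent to
the identity. -/
structure IsUnimodular (f : E → E) : Prop extends IsTangentToId 𝕜 f where
  det_fderiv : ∀ᶠ y in 𝓝 0, (fderiv 𝕜 f y).det = 1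

theorem IsUnimodular.exists_inverse [CompleteSpace E] {f : E → E} (hf : IsUnimodular 𝕜 f) :
    ∃ g, IsUnimodular 𝕜 g ∧ (∀ᶠ y in 𝓝 0, g (f y) = y) ∧ ∀ᶠ z in 𝓝 0, f (g z) = z := by
  obtain ⟨g, hg, hgf, hfg⟩ := hf.toIsTangentToId.exists_inverse
  refine ⟨g, ⟨hg, ?_⟩, hgf, hfg⟩
  filter_upwards [hfg.eventually_nhds, hg.analyticAt.eventually_analyticAt,
    hg.tendsto.eventually hf.analyticAt.eventually_analyticAt, hg.tendsto.eventually hf.det_fderiv]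
    with y hy hgy hfy hdet
  simpa [hdet] using det_fderiv_mul_det_fderiv hfy.differentiableAt hgy.differentiableAt hy

theorem IsRelatedAt.eventually_divergence_eq_zero [CompleteSpace 𝕜] [FiniteDimensional 𝕜 E]
    {f X Y : E → E} (h : IsRelatedAt 𝕜 f X Y 0) (hf : IsUnimodular 𝕜 f) (hX : AnalyticAt 𝕜 X 0)
    (hY : AnalyticAt 𝕜 Y 0) (hdiv : ∀ᶠ x in 𝓝 0, divergence 𝕜 X x = 0) :
    ∀ᶠ y in 𝓝 0, divergence 𝕜 Y y = 0 := by
  have := FiniteDimensional.complete 𝕜 E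
  rw [← hf.map_nhds_eq, eventually_map]
  filter_upwards [hdiv, h.eventually_nhds, hf.det_fderiv.eventually_nhds,
    hf.analyticAt.eventually_analyticAt, hX.eventually_analyticAt,
    hf.tendsto.eventually hY.eventually_analyticAt] with x hdivx hrel hdet hfx hXx hYx
  have hflow := IsRelatedAt.fderiv_det_fderiv hrel hfx hXx.differentiableAt hYx.differentiableAt
  rw [EventuallyEq.fderiv_eq (𝕜 := 𝕜) (f := fun _ => (1 : 𝕜)) hdet] at hflow
  simpa [hdivx, hdet.self_of_nhds] using hflow.symm

theorem IsRelatedAt.eventually_fderiv_det_fderiv_eq_zero [CompleteSpace 𝕜] [FiniteDimensional 𝕜 E]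
    {f X Y : E → E} (h : IsRelatedAt 𝕜 f X Y 0) (hf : IsTangentToId 𝕜 f) (hX : AnalyticAt 𝕜 X 0)
    (hY : AnalyticAt 𝕜 Y 0) (hdivX : ∀ᶠ x in 𝓝 0, divergence 𝕜 X x = 0)
    (hdivY : ∀ᶠ y in 𝓝 0, divergence 𝕜 Y y = 0) :
    ∀ᶠ x in 𝓝 0, fderiv 𝕜 (fun y => (fderiv 𝕜 f y).det) x (X x) = 0 := by
  have := FiniteDimensional.complete 𝕜 E
  filter_upwards [hdivX, hf.tendsto.eventually hdivY, h.eventually_nhds,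
    hf.analyticAt.eventually_analyticAt, hX.eventually_analyticAt,
    hf.tendsto.eventually hY.eventually_analyticAt] with x hXx hYx hrel hfx hXan hYan
  rw [IsRelatedAt.fderiv_det_fderiv hrel hfx hXan.differentiableAt hYan.differentiableAt, hXx, hYx,
    sub_self, zero_mul]

end Unimodular

/-! ### Volume-preserving normalizations -/

section Normalization

variable {n : ℕ} {X : (Fin n → ℂ) → (Fin n → ℂ)} {γ : Fin n → ℂ}
  {N : (Fin n → ℂ) →L[ℂ] (Fin n → ℂ)}

theorem admitsVolPDNormalization_of_isUnimodular {Y φ : (Fin n → ℂ) → (Fin n → ℂ)}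
    (hX : AnalyticAt ℂ X 0) (hX0 : X 0 = 0) (hJC : fderiv ℂ X 0 = diagCLM γ + N)
    (hN : IsNilpotent (N : Module.End ℂ (Fin n → ℂ)))
    (hγN : diagCLM γ ∘L N = N ∘L diagCLM γ) (hφ : IsUnimodular ℂ φ) (hY : AnalyticAt ℂ Y 0)
    (hrel : IsRelatedAt ℂ φ Y X 0)
    (hbracket : ∀ᶠ x in 𝓝 0, lieBracket ℂ Y (diagCLM γ) x = 0) :
    AdmitsVolPDNormalization X := by
  have hY0 : Y 0 = 0 := (hφ.apply_zero_eq_zero_iff hrel).2 hX0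
  have hDY : fderiv ℂ Y 0 = diagCLM γ + N := by
    rw [← hJC, hφ.fderiv_zero_eq hrel hY.differentiableAt hY0 hX.differentiableAt]
  obtain ⟨U, hU, hUopen, h0U⟩ := eventually_nhds_iff.1 (hY.eventually_analyticAt.and
    (hφ.analyticAt.eventually_analyticAt.and (hbracket.and (hφ.det_fderiv.and hrel))))
  exact ⟨U, Y, φ, hUopen, h0U, fun y hy => (hU y hy).1, fun y hy => (hU y hy).2.1, hY0, hφ.map_zero,
    hφ.fderiv_zero.symm ▸ Function.bijective_id,
    ⟨diagCLM γ, N, hDY, isSemisimple_diagCLM γ, hN, hγN, fun y hy => (hU y hy).2.2.1⟩,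
    fun y hy => (hU y hy).2.2.2.1, fun y hy => (hU y hy).2.2.2.2⟩

theorem isUnimodular_comp_symm {φ : (Fin n → ℂ) → (Fin n → ℂ)}
    {i : (Fin n → ℂ) ≃L[ℂ] (Fin n → ℂ)} (hφ : AnalyticAt ℂ φ 0) (hφ0 : φ 0 = 0)
    (hi : fderiv ℂ φ 0 = i) (hdet : ∀ᶠ x in 𝓝 0, (fderiv ℂ φ x).det = 1) :
    IsUnimodular ℂ (φ ∘ i.symm) := by
  have htendsto : Tendsto i.symm (𝓝 0) (𝓝 0) := by simpa using i.symm.continuous.tendsto 0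
  have hfderiv : ∀ᶠ x in 𝓝 0, fderiv ℂ (φ ∘ i.symm) x = fderiv ℂ φ (i.symm x) ∘L i.symm := by
    filter_upwards [htendsto.eventually hφ.eventually_analyticAt] with x hx
    rw [fderiv_comp x hx.differentiableAt i.symm.differentiableAt, i.symm.fderiv]
  have hdet_symm : LinearMap.det (i.symm : (Fin n → ℂ) →ₗ[ℂ] (Fin n → ℂ)) = 1 := by
    have hdet_i : LinearMap.det (i : (Fin n → ℂ) →ₗ[ℂ] (Fin n → ℂ)) = 1 := by
      have h := hdet.self_of_nhds
      rwa [hi] at h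
    simpa [hdet_i] using i.toLinearEquiv.det_symm_mul_det
  refine ⟨⟨hφ.comp_of_eq (i.symm.analyticAt 0) (map_zero _), by simp [hφ0], ?_⟩, ?_⟩
  · rw [hfderiv.self_of_nhds, map_zero, hi, i.coe_comp_coe_symm]
  · filter_upwards [hfderiv, htendsto.eventually hdet] with x hx hdetx
    rw [hx, ContinuousLinearMap.det, ContinuousLinearMap.toLinearMap_comp, LinearMap.det_comp]
    exact (congrArg₂ _ hdetx hdet_symm).trans (mul_one 1)

theorem exists_isRelatedAt_comp_symm {E F G : Type*} [NormedAddCommGroup E] [NormedSpace ℂ E]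
    [CompleteSpace E] [NormedAddCommGroup F] [NormedSpace ℂ F] [CompleteSpace F]
    [NormedAddCommGroup G] [NormedSpace ℂ G] [CompleteSpace G] {φ : E → G} {X : G → G} {Y : E → E}
    {i : E ≃L[ℂ] F} {S : E →L[ℂ] E} {S' : F →L[ℂ] F} (hrel : IsRelatedAt ℂ φ Y X 0)
    (hφ : AnalyticAt ℂ φ 0) (hY : AnalyticAt ℂ Y 0) (hS : i ∘L S = S' ∘L i)
    (hbracket : ∀ᶠ x in 𝓝 0, lieBracket ℂ Y S x = 0) :
    ∃ Y', AnalyticAt ℂ Y' 0 ∧ IsRelatedAt ℂ (φ ∘ i.symm) Y' X 0 ∧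
      ∀ᶠ x in 𝓝 0, lieBracket ℂ Y' S' x = 0 := by
  obtain ⟨Y', hY', hYY'⟩ := exists_analyticAt_isRelatedAt (i.analyticAt 0) i.fderiv hY
  have hsymm : IsRelatedAt ℂ i.symm Y' Y 0 := by
    simpa using hYY'.symm (i.analyticAt 0) (i.symm.analyticAt _) (.of_forall i.symm_apply_apply)
      (.of_forall i.apply_symm_apply)
  have hSS' : IsRelatedAt ℂ i S S' 0 := .of_forall fun x => by
    rw [i.fderiv]
    exact DFunLike.congr_fun hS x
  have hbracket' := hYY'.eventually_lieBracket_eq_zero hSS' (i.analyticAt 0) i.fderiv hY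
    (S.analyticAt 0) hY' (S'.analyticAt _) hbracket
  rw [map_zero] at hY' hbracket'
  refine ⟨Y', hY', IsRelatedAt.comp ?_ hsymm ?_ (i.symm.analyticAt 0), hbracket'⟩ <;>
    rwa [map_zero]

theorem exists_isUnimodular_of_admitsVolPDNormalization (hX : AnalyticAt ℂ X 0)
    (hJC : fderiv ℂ X 0 = diagCLM γ + N) (hN : IsNilpotent (N : Module.End ℂ (Fin n → ℂ)))
    (hγN : diagCLM γ ∘L N = N ∘L diagCLM γ) (h : AdmitsVolPDNormalization X) :
    ∃ φ Y, IsUnimodular ℂ φ ∧ AnalyticAt ℂ Y 0 ∧ IsRelatedAt ℂ φ Y X 0 ∧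
      ∀ᶠ x in 𝓝 0, lieBracket ℂ Y (diagCLM γ) x = 0 := by
  obtain ⟨U, Y, φ, hUopen, h0U, hY, hφ, hY0, hφ0, hbij, ⟨S, M, hDY, hS, hM, hSM, hbracket⟩, hdet,
    hrel⟩ := h
  have hU : ∀ᶠ x in 𝓝 0, x ∈ U := hUopen.mem_nhds h0U
  let i := (LinearEquiv.ofBijective (fderiv ℂ φ 0 : (Fin n → ℂ) →ₗ[ℂ] (Fin n → ℂ))
    hbij).toContinuousLinearEquiv
  have hi : fderiv ℂ φ 0 = i := rfl
  have hDX : i ∘L (S + M) = (diagCLM γ + N) ∘L i := by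
    simpa [hY0, hφ0, hi, hDY, hJC] using IsRelatedAt.fderiv_comp_fderiv (hU.mono hrel) (hφ 0 h0U)
      (hY 0 h0U).differentiableAt (hφ0.symm ▸ hX.differentiableAt)
  have hSγ : i ∘L S = diagCLM γ ∘L i := by
    refine ContinuousLinearMap.coe_injective (comp_semisimple_eq_semisimple_comp i.toLinearEquiv hS
      hM ?_ (isSemisimple_diagCLM γ) hN ?_ ?_)
    exacts [congrArg ContinuousLinearMap.toLinearMap hSM,
      congrArg ContinuousLinearMap.toLinearMap hγN, congrArg ContinuousLinearMap.toLinearMap hDX]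
  obtain ⟨Y', hY', hrel', hbracket'⟩ :=
    exists_isRelatedAt_comp_symm (hU.mono hrel) (hφ 0 h0U) (hY 0 h0U) hSγ (hU.mono hbracket)
  exact ⟨φ ∘ i.symm, Y', isUnimodular_comp_symm (hφ 0 h0U) hφ0 hi (hU.mono hdet), hY', hrel',
    hbracket'⟩

theorem admitsVolPDNormalization_iff_exists_isUnimodular (hX : AnalyticAt ℂ X 0) (hX0 : X 0 = 0)
    (hJC : fderiv ℂ X 0 = diagCLM γ + N) (hN : IsNilpotent (N : Module.End ℂ (Fin n → ℂ)))
    (hγN : diagCLM γ ∘L N = N ∘L diagCLM γ) :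
    AdmitsVolPDNormalization X ↔ ∃ φ Y, IsUnimodular ℂ φ ∧ AnalyticAt ℂ Y 0 ∧
      IsRelatedAt ℂ φ Y X 0 ∧ ∀ᶠ x in 𝓝 0, lieBracket ℂ Y (diagCLM γ) x = 0 :=
  ⟨exists_isUnimodular_of_admitsVolPDNormalization hX hJC hN hγN,
    fun ⟨_, _, hφ, hY, hrel, hbracket⟩ =>
      admitsVolPDNormalization_of_isUnimodular hX hX0 hJC hN hγN hφ hY hrel hbracket⟩

end Normalization

/-! ### Isochore torus actions -/

section TorusAction

variable {n : ℕ} {ι : Type*} {X : (Fin n → ℂ) → (Fin n → ℂ)} {ρ : ι → Fin n → ℤ}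

/-- `X` commutes near `0` with the generators `V k` of an isochore holomorphic torus action with
weights `ρ k` at the fixed point `0`. The action is encoded by the commuting fields `V k`, together
with `2π`-periodic integral curves of `i V k` through every point. -/
def AdmitsIsochoreTorusAction (X : (Fin n → ℂ) → (Fin n → ℂ)) (ρ : ι → Fin n → ℤ) : Prop :=
  ∃ U : Set (Fin n → ℂ), IsOpen U ∧ (0 : Fin n → ℂ) ∈ U ∧
    ∃ V : ι → (Fin n → ℂ) → (Fin n → ℂ),
      (∀ k, AnalyticOnNhd ℂ (V k) U) ∧
      (∀ k, ∀ x ∈ U, divergence ℂ (V k) x = 0) ∧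
      (∀ k, V k 0 = 0 ∧ fderiv ℂ (V k) 0 = diagCLM (fun j => (ρ k j : ℂ))) ∧
      (∀ j k, ∀ x ∈ U, lieBracket ℂ (V j) (V k) x = 0) ∧
      (∀ k, ∀ x ∈ U, lieBracket ℂ X (V k) x = 0) ∧
      (∀ k, ∀ x ∈ U, ∃ c : ℝ → (Fin n → ℂ),
        (∀ t, c t ∈ U) ∧ c 0 = x ∧ (∀ t : ℝ, HasDerivAt c (Complex.I • V k (c t)) t) ∧
        (∀ t : ℝ, c (t + 2 * Real.pi) = c t))

theorem divergence_diagCLM (γ x : Fin n → ℂ) : divergence ℂ (diagCLM γ) x = ∑ j, γ j := by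
  rw [divergence, ContinuousLinearMap.fderiv, trace_diagCLM]

theorem exists_isUnimodular_forall_isRelatedAt_diagCLM [Finite ι]
    {V : ι → (Fin n → ℂ) → (Fin n → ℂ)} (hV : ∀ k, AnalyticAt ℂ (V k) 0) (hV0 : ∀ k, V k 0 = 0)
    (hDV : ∀ k, fderiv ℂ (V k) 0 = diagCLM fun j => (ρ k j : ℂ))
    (hdiv : ∀ k, ∀ᶠ x in 𝓝 0, divergence ℂ (V k) x = 0)
    (hbracket : ∀ j k, ∀ᶠ x in 𝓝 0, lieBracket ℂ (V j) (V k) x = 0)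
    (hper : ∀ k, HasPeriodicFlow (V k) (2 * Real.pi)) :
    ∃ f, IsUnimodular ℂ f ∧ ∀ k, IsRelatedAt ℂ f (V k) (diagCLM fun j => (ρ k j : ℂ)) 0 := by
  obtain ⟨f, hf, hfV⟩ := exists_isTangentToId_forall_isRelatedAt_fderiv hV hV0
    (fun _ => Real.two_pi_pos) hper (fun k => by rw [hDV, rotation_diagCLM_two_pi])
    (fun j k => by rw [hDV, hDV]; exact commute_diagCLM _ _) hbracket
  simp only [hDV] at hfV
  obtain ⟨g, hg, hgf, hfg⟩ := hf.exists_inverse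
  obtain ⟨h, hh, hdet, hhρ⟩ := exists_isTangentToId_det_fderiv_eq_of_diagCLM
    (J := fun y => (fderiv ℂ g y).det) ((analyticAt_det _).comp hg.analyticAt.fderiv)
    (by rw [hg.fderiv_zero]; exact LinearMap.det_id)
  have hJ (k : ι) : ∀ᶠ y in 𝓝 0, fderiv ℂ (fun y => (fderiv ℂ g y).det) y
      (diagCLM (fun j => (ρ k j : ℂ)) y) = 0 := by
    refine (hf.isRelatedAt_symm hg hgf hfg (hfV k)).eventually_fderiv_det_fderiv_eq_zero hg
      ((diagCLM _).analyticAt 0) (hV k) (.of_forall fun x => ?_) (hdiv k)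
    rw [divergence, ContinuousLinearMap.fderiv, ← hDV]
    exact (hdiv k).self_of_nhds
  refine ⟨h ∘ f, ⟨hh.comp hf, ?_⟩, fun k => hh.isRelatedAt_comp hf (hhρ _ (hJ k)) (hfV k)⟩
  filter_upwards [hgf.eventually_nhds, hf.tendsto.eventually hdet,
    hf.analyticAt.eventually_analyticAt, hf.tendsto.eventually hg.analyticAt.eventually_analyticAt,
    hf.tendsto.eventually hh.analyticAt.eventually_analyticAt] with x hgfx hdetx hfx hgx hhx
  rw [fderiv_comp x hhx.differentiableAt hfx.differentiableAt, ContinuousLinearMap.det,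
    ContinuousLinearMap.toLinearMap_comp, LinearMap.det_comp,
    ← det_fderiv_mul_det_fderiv hgx.differentiableAt hfx.differentiableAt hgfx, ← hdetx]

theorem AdmitsIsochoreTorusAction.exists_isUnimodular [Finite ι] (hX : AnalyticAt ℂ X 0)
    (h : AdmitsIsochoreTorusAction X ρ) :
    ∃ φ Y, IsUnimodular ℂ φ ∧ AnalyticAt ℂ Y 0 ∧ IsRelatedAt ℂ φ Y X 0 ∧
      ∀ k, ∀ᶠ x in 𝓝 0, lieBracket ℂ Y (diagCLM fun j => (ρ k j : ℂ)) x = 0 := by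
  obtain ⟨U, hUopen, h0U, V, hV, hdiv, hV0, hVV, hXV, hper⟩ := h
  have hU : ∀ᶠ x in 𝓝 0, x ∈ U := hUopen.mem_nhds h0U
  obtain ⟨f, hf, hfV⟩ := exists_isUnimodular_forall_isRelatedAt_diagCLM (fun k => hV k 0 h0U)
    (fun k => (hV0 k).1) (fun k => (hV0 k).2) (fun k => hU.mono (hdiv k))
    (fun j k => hU.mono (hVV j k)) fun k => hU.mono fun x hx => by
      obtain ⟨c, hcU, hc0, hc, hcper⟩ := hper k x hx
      exact ⟨c, hc0, by rw [← hc0, ← hcper 0, zero_add], fun t => ⟨hV k _ (hcU t), hc t⟩⟩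
  obtain ⟨Y, hY, hrel⟩ := hf.exists_isRelatedAt hX
  obtain ⟨φ, hφ, hφf, hfφ⟩ := hf.exists_inverse
  exact ⟨φ, Y, hφ, hY, hf.isRelatedAt_symm hφ.toIsTangentToId hφf hfφ hrel, fun k =>
    hf.eventually_lieBracket_eq_zero hrel (hfV k) hX (hV k 0 h0U) hY ((diagCLM _).analyticAt 0)
      (hU.mono (hXV k))⟩

theorem exists_periodic_integralCurve {φ V : (Fin n → ℂ) → (Fin n → ℂ)} {ρ : Fin n → ℤ} {ε : ℝ}
    (hφ : ∀ y ∈ Metric.ball 0 ε, DifferentiableAt ℂ φ y)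
    (hrel : ∀ y ∈ Metric.ball 0 ε, fderiv ℂ φ y (diagCLM (fun j => (ρ j : ℂ)) y) = V (φ y))
    {y : Fin n → ℂ} (hy : y ∈ Metric.ball 0 ε) :
    ∃ c : ℝ → (Fin n → ℂ), (∀ t, c t ∈ φ '' Metric.ball 0 ε) ∧ c 0 = φ y ∧
      (∀ t : ℝ, HasDerivAt c (Complex.I • V (c t)) t) ∧ ∀ t : ℝ, c (t + 2 * Real.pi) = c t := by
  let A := diagCLM fun j => (ρ j : ℂ)
  have hmem (t : ℝ) : rotation A t y ∈ Metric.ball 0 ε := by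
    have hnorm := norm_rotation_diagCLM_apply (fun j => (ρ j : ℝ)) t y
    push_cast at hnorm
    rwa [mem_ball_zero_iff, hnorm, ← mem_ball_zero_iff]
  refine ⟨fun t => φ (rotation A t y), fun t => Set.mem_image_of_mem φ (hmem t), by simp,
    fun t => ?_, fun t => congrArg (fun B => φ (B y)) (rotation_diagCLM_add_two_pi ρ t)⟩
  have hrot : HasDerivAt (fun t => rotation A t y) (Complex.I • A (rotation A t y)) t :=
    ((ContinuousLinearMap.apply ℂ (Fin n → ℂ) y).restrictScalars ℝ).hasFDerivAt.comp_hasDerivAt t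
      (hasDerivAt_rotation (A := A) t)
  have hcomp := ((hφ _ (hmem t)).hasFDerivAt.restrictScalars ℝ).comp_hasDerivAt t hrot
  rw [← hrel _ (hmem t), ← map_smul]
  exact hcomp

theorem admitsIsochoreTorusAction_of_isRelatedAt_diagCLM [Finite ι]
    {φ : (Fin n → ℂ) → (Fin n → ℂ)} {V : ι → (Fin n → ℂ) → (Fin n → ℂ)} (hφ : IsTangentToId ℂ φ)
    (hV : ∀ k, AnalyticAt ℂ (V k) 0)
    (hφV : ∀ k, IsRelatedAt ℂ φ (diagCLM fun j => (ρ k j : ℂ)) (V k) 0)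
    (hdiv : ∀ k, ∀ᶠ x in 𝓝 0, divergence ℂ (V k) x = 0)
    (hVV : ∀ j k, ∀ᶠ x in 𝓝 0, lieBracket ℂ (V j) (V k) x = 0)
    (hXV : ∀ k, ∀ᶠ x in 𝓝 0, lieBracket ℂ X (V k) x = 0) :
    AdmitsIsochoreTorusAction X ρ := by
  have hV0 (k : ι) : V k 0 = 0 := (hφ.apply_zero_eq_zero_iff (hφV k)).1 (map_zero _)
  have hDV (k : ι) : fderiv ℂ (V k) 0 = diagCLM fun j => (ρ k j : ℂ) := by
    rw [hφ.fderiv_zero_eq (hφV k) (diagCLM _).differentiableAt (map_zero _)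
      (hV k).differentiableAt, ContinuousLinearMap.fderiv]
  obtain ⟨ψ, hψ, hψφ, hφψ⟩ := hφ.exists_inverse
  obtain ⟨O, hO, hOopen, h0O⟩ := eventually_nhds_iff.1 (hψ.analyticAt.eventually_analyticAt.and
    (hφψ.and ((eventually_all.2 fun k => (hV k).eventually_analyticAt).and
      ((eventually_all.2 hdiv).and ((eventually_all.2 fun j => eventually_all.2 (hVV j)).and
        (eventually_all.2 hXV))))))
  obtain ⟨ε, hε, hball⟩ := Metric.eventually_nhds_iff_ball.1 ((hφ.tendsto.eventually
    (hOopen.mem_nhds h0O)).and (hψφ.and (hφ.analyticAt.eventually_analyticAt.and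
      (eventually_all.2 hφV))))
  have hψcont : ContinuousOn ψ O := fun x hx => (hO x hx).1.continuousAt.continuousWithinAt
  have himage : φ '' Metric.ball 0 ε ⊆ O ∩ ψ ⁻¹' Metric.ball 0 ε := by
    rintro _ ⟨y, hy, rfl⟩
    exact ⟨(hball y hy).1, by rwa [Set.mem_preimage, (hball y hy).2.1]⟩
  refine ⟨O ∩ ψ ⁻¹' Metric.ball 0 ε, hψcont.isOpen_inter_preimage hOopen Metric.isOpen_ball,
    ⟨h0O, by simpa [hψ.map_zero] using hε⟩, V, fun k x hx => (hO x hx.1).2.2.1 k,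
    fun k x hx => (hO x hx.1).2.2.2.1 k, fun k => ⟨hV0 k, hDV k⟩,
    fun j k x hx => (hO x hx.1).2.2.2.2.1 j k, fun k x hx => (hO x hx.1).2.2.2.2.2 k,
    fun k x hx => ?_⟩
  obtain ⟨c, hc, hc0, hderiv, hper⟩ := exists_periodic_integralCurve
    (fun y hy => (hball y hy).2.2.1.differentiableAt) (fun y hy => (hball y hy).2.2.2 k) hx.2
  exact ⟨c, fun t => himage (hc t), hc0.trans (hO x hx.1).2.1, hderiv, hper⟩

theorem admitsIsochoreTorusAction_of_isUnimodular [Finite ι] {φ Y : (Fin n → ℂ) → (Fin n → ℂ)}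
    (hX : AnalyticAt ℂ X 0) (hρ : ∀ k, ∑ j, ρ k j = 0) (hφ : IsUnimodular ℂ φ)
    (hY : AnalyticAt ℂ Y 0) (hrel : IsRelatedAt ℂ φ Y X 0)
    (hbracket : ∀ k, ∀ᶠ x in 𝓝 0, lieBracket ℂ Y (diagCLM fun j => (ρ k j : ℂ)) x = 0) :
    AdmitsIsochoreTorusAction X ρ := by
  have hA (k : ι) : AnalyticAt ℂ (diagCLM fun j => (ρ k j : ℂ)) 0 := (diagCLM _).analyticAt 0
  choose V hV hφV using fun k => hφ.exists_isRelatedAt (hA k)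
  have hdiag (j k : ι) (x : Fin n → ℂ) :
      lieBracket ℂ (diagCLM fun i => (ρ j i : ℂ)) (diagCLM fun i => (ρ k i : ℂ)) x = 0 := by
    simp only [lieBracket, ContinuousLinearMap.fderiv, sub_eq_zero]
    exact DFunLike.congr_fun (commute_diagCLM _ _) x
  refine admitsIsochoreTorusAction_of_isRelatedAt_diagCLM hφ.toIsTangentToId hV hφV
    (fun k => (hφV k).eventually_divergence_eq_zero hφ (hA k) (hV k) (.of_forall fun x => ?_))
    (fun j k => hφ.eventually_lieBracket_eq_zero (hφV j) (hφV k) (hA j) (hA k) (hV j) (hV k)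
      (.of_forall (hdiag j k)))
    (fun k => hφ.eventually_lieBracket_eq_zero hrel (hφV k) hY (hA k) hX (hV k) (hbracket k))
  rw [divergence_diagCLM]
  exact_mod_cast hρ k

theorem admitsIsochoreTorusAction_iff_exists_isUnimodular [Finite ι] (hX : AnalyticAt ℂ X 0)
    (hρ : ∀ k, ∑ j, ρ k j = 0) :
    AdmitsIsochoreTorusAction X ρ ↔ ∃ φ Y, IsUnimodular ℂ φ ∧ AnalyticAt ℂ Y 0 ∧
      IsRelatedAt ℂ φ Y X 0 ∧
        ∀ k, ∀ᶠ x in 𝓝 0, lieBracket ℂ Y (diagCLM fun j => (ρ k j : ℂ)) x = 0 :=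
  ⟨AdmitsIsochoreTorusAction.exists_isUnimodular hX,
    fun ⟨_, _, hφ, hY, hrel, hbracket⟩ =>
      admitsIsochoreTorusAction_of_isUnimodular hX hρ hφ hY hrel hbracket⟩

end TorusAction

section Centralizer

variable {n : ℕ} {ι : Type*} {γ : Fin n → ℂ} {ρ : ι → Fin n → ℤ}

theorem mem_span_range_complexWeights (hρ : QLattice γ ⊆ Submodule.span ℤ (Set.range ρ)) :
    γ ∈ Submodule.span ℂ (Set.range fun k => complexWeights n (ρ k)) := by
  refine Submodule.span_le.2 ?_ (mem_span_complexWeights_QLattice γ)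
  rintro _ ⟨σ, hσ, rfl⟩
  have himage := Submodule.mem_map_of_mem (f := complexWeights n) (hρ hσ)
  rw [Submodule.map_span, ← Set.range_comp] at himage
  exact Submodule.span_le_restrictScalars ℤ ℂ _ himage

theorem eventually_lieBracket_diagCLM_eq_zero_iff_forall {Y : (Fin n → ℂ) → (Fin n → ℂ)}
    (hY : AnalyticAt ℂ Y 0) (hρ : ∀ k, ρ k ∈ QLattice γ)
    (hspan : QLattice γ ⊆ Submodule.span ℤ (Set.range ρ)) :
    (∀ᶠ x in 𝓝 0, lieBracket ℂ Y (diagCLM γ) x = 0) ↔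
      ∀ k, ∀ᶠ x in 𝓝 0, lieBracket ℂ Y (diagCLM fun j => (ρ k j : ℂ)) x = 0 :=
  ⟨fun h k => eventually_lieBracket_diagCLM_eq_zero (hρ k) hY h, fun h =>
    eventually_lieBracket_diagCLM_eq_zero_of_mem_span (Set.forall_mem_range.2 h)
      (mem_span_range_complexWeights hspan)⟩

end Centralizer

theorem sum_eq_zero_of_divergence_eq_zero {n : ℕ} {X : (Fin n → ℂ) → (Fin n → ℂ)}
    {γ x : Fin n → ℂ} {N : (Fin n → ℂ) →L[ℂ] (Fin n → ℂ)} (hdiv : divergence ℂ X x = 0)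
    (hJC : fderiv ℂ X x = diagCLM γ + N) (hN : IsNilpotent (N : Module.End ℂ (Fin n → ℂ))) :
    ∑ j, γ j = 0 := by
  have htrace := (LinearMap.isNilpotent_trace_of_isNilpotent hN).eq_zero
  rwa [divergence, hJC, ContinuousLinearMap.toLinearMap_add, map_add, trace_diagCLM, htrace,
    add_zero] at hdiv

end PoincareDulac

open PoincareDulac in
theorem isochore_admitsVolPDNormalization_iff_torusAction_general {n : ℕ} {ι : Type*} [Finite ι]
    {X : (Fin n → ℂ) → (Fin n → ℂ)} (hX : AnalyticAt ℂ X 0) (hX0 : X 0 = 0)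
    (hdiv : divergence ℂ X 0 = 0) {γ : Fin n → ℂ} {N : (Fin n → ℂ) →L[ℂ] (Fin n → ℂ)}
    (hJC : fderiv ℂ X 0 = diagCLM γ + N) (hnil : IsNilpotent (N : Module.End ℂ (Fin n → ℂ)))
    (hSN : diagCLM γ ∘L N = N ∘L diagCLM γ) {ρ : ι → Fin n → ℤ} (hρmem : ∀ k, ρ k ∈ QLattice γ)
    (hρspan : QLattice γ ⊆ Submodule.span ℤ (Set.range ρ)) :
    AdmitsVolPDNormalization X ↔ AdmitsIsochoreTorusAction X ρ := by
  have hρ (k : ι) : ∑ j, ρ k j = 0 :=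
    sum_eq_zero_of_mem_QLattice (sum_eq_zero_of_divergence_eq_zero hdiv hJC hnil) (hρmem k)
  rw [admitsVolPDNormalization_iff_exists_isUnimodular hX hX0 hJC hnil hSN,
    admitsIsochoreTorusAction_iff_exists_isUnimodular hX hρ]
  refine exists₂_congr fun φ Y => and_congr_right fun _ => and_congr_right fun hY =>
    and_congr_right fun _ => ?_
  exact eventually_lieBracket_diagCLM_eq_zero_iff_forall hY hρmem hρspan

/-- **Toric characterization of isochore Poincaré–Dulac normalization**
(Zung). An isochore holomorphic vector field `X` near `0 ∈ ℂⁿ` with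
`X 0 = 0` and semisimple linear part `diag γ` admits a volume-preserving
convergent Poincaré–Dulac normalization iff it is preserved by an effective
holomorphic isochore torus action of dimension `r` (the toric degree) with
the appropriate weights, presented by isochore holomorphic generators
`V₁, …, V_r` with `DV_k(0) = diag ρᵏ` for a `ℤ`-basis `ρ¹, …, ρʳ` of `Q(γ)`,
each `i·V_k` being periodic of period `2π`. -/
theorem isochore_admitsVolPDNormalization_iff_torusAction
    (n : ℕ) (X : (Fin n → ℂ) → (Fin n → ℂ))
    (W : Set (Fin n → ℂ)) (hWopen : IsOpen W) (h0W : (0 : Fin n → ℂ) ∈ W)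
    (hXan : AnalyticOnNhd ℂ X W) (hX0 : X 0 = 0)
    (hiso : ∀ x ∈ W,
      LinearMap.trace ℂ (Fin n → ℂ)
        (fderiv ℂ X x : (Fin n → ℂ) →ₗ[ℂ] (Fin n → ℂ)) = 0)
    (γ : Fin n → ℂ) (N : (Fin n → ℂ) →L[ℂ] (Fin n → ℂ))
    (hJC : fderiv ℂ X 0 = diagCLM γ + N)
    (hnil : IsNilpotent (N : Module.End ℂ (Fin n → ℂ)))
    (hSN : diagCLM γ ∘L N = N ∘L diagCLM γ)
    (r : ℕ) (ρ : Fin r → Fin n → ℤ)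
    (hρmem : ∀ k, ρ k ∈ QLattice γ)
    (hρbasis : ∀ σ ∈ QLattice γ, ∃! a : Fin r → ℤ, ∑ k, a k • ρ k = σ) :
    AdmitsVolPDNormalization X ↔
      ∃ U : Set (Fin n → ℂ), IsOpen U ∧ (0 : Fin n → ℂ) ∈ U ∧
        ∃ V : Fin r → (Fin n → ℂ) → (Fin n → ℂ),
          (∀ k, AnalyticOnNhd ℂ (V k) U) ∧
          (∀ k, ∀ x ∈ U,
            LinearMap.trace ℂ (Fin n → ℂ)
              (fderiv ℂ (V k) x : (Fin n → ℂ) →ₗ[ℂ] (Fin n → ℂ)) = 0) ∧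
          (∀ k, V k 0 = 0 ∧
            fderiv ℂ (V k) 0 = diagCLM (fun j => (ρ k j : ℂ))) ∧
          (∀ j k, ∀ x ∈ U, VectorField.lieBracket ℂ (V j) (V k) x = 0) ∧
          (∀ k, ∀ x ∈ U, VectorField.lieBracket ℂ X (V k) x = 0) ∧
          (∀ k, ∀ x ∈ U, ∃ c : ℝ → (Fin n → ℂ),
            (∀ t, c t ∈ U) ∧ c 0 = x ∧
            (∀ t : ℝ, HasDerivAt c (Complex.I • V k (c t)) t) ∧
            (∀ t : ℝ, c (t + 2 * Real.pi) = c t)) := by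
  refine isochore_admitsVolPDNormalization_iff_torusAction_general (hXan 0 h0W) hX0 (hiso 0 h0W)
    hJC hnil hSN hρmem fun σ hσ => ?_
  obtain ⟨a, rfl, -⟩ := hρbasis σ hσ
  exact Submodule.sum_mem _ fun k _ => Submodule.smul_mem _ _ (Submodule.subset_span ⟨k, rfl⟩)
end

section
/- Let U be a connected open neighborhood of 0 in ℂⁿ and let X : U → ℂⁿ be a holomorphic vector field with X(0) = 0 such that DX(0) = S + N, where S is the diagonal endomorphism of ℂⁿ with diagonal entries γ = (γ₁, …, γₙ) ∈ ℂⁿ, N is nilpotent, and S∘N = N∘S; assume X is in Poincaré–Dulac normal form, i.e. [X, Xˢ] = 0 on U where Xˢ(x) = S x. Let ρ ∈ Q(γ) and let Z_ρ be the diagonal linear vector field Z_ρ(x) = (ρ₁x₁, …, ρₙxₙ). Then: (a) for every holomorphic vector field Y : U → ℂⁿ with [X, Y] = 0 on U, one has [Z_ρ, Y] = 0 on U; (b) for every holomorphic function f : U → ℂ with Df(x)(X(x)) = 0 for all x ∈ U, one has Df(x)(Z_ρ(x)) = 0 for all x ∈ U. -/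
/-!
By the Jacobi identity, `W = [S, Y]` commutes with `X`, so the leading Taylor coefficient of `W` at
`0` is annihilated by `ad (S + N)`. As `ad N` is nilpotent and commutes with the diagonalizable
operator `ad S`, that coefficient lies in `ker (ad S) ∩ range (ad S) = 0`. Hence `[S, Y] = 0`, which
means that every monomial of `Y` is resonant, and `Z_ρ` commutes with resonant monomials.

A first integral `f` of `X` reduces to the field `f • Z_ρ`, which commutes with `X` and therefore
with `Z_ρ`.
-/

section MultilinearAction

variable {R M ι κ : Type*} [CommRing R] [AddCommGroup M] [Module R M]

theorem exists_pow_apply_eq_zero_of_add_apply_eq_zero {a b : Module.End R M} (hab : Commute a b)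
    (hb : IsNilpotent b) {v : M} (h : (a + b) v = 0) : ∃ k : ℕ, (a ^ k) v = 0 := by
  have hav : a v = (-b) v := eq_neg_of_add_eq_zero_left h
  have hpow (k : ℕ) : (a ^ k) v = ((-b) ^ k) v := by
    induction k with
    | zero => rfl
    | succ k ih =>
      calc (a ^ (k + 1)) v = (a ^ k) ((-b) v) := by rw [pow_succ, Module.End.mul_apply, hav]
        _ = (-b) ((a ^ k) v) := LinearMap.congr_fun (hab.neg_right.pow_left k) v
        _ = ((-b) ^ (k + 1)) v := by rw [ih, pow_succ', Module.End.mul_apply]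
  obtain ⟨k, hk⟩ := hb.neg
  exact ⟨k, by rw [hpow, hk, LinearMap.zero_apply]⟩

theorem compMultilinearMapₗ_commute {A B : Module.End R M} (hAB : Commute A B) :
    Commute (LinearMap.compMultilinearMapₗ (M₁ := fun _ : ι => M) R A)
      (LinearMap.compMultilinearMapₗ R B) := by
  ext T v
  exact LinearMap.congr_fun hAB (T v)

theorem compMultilinearMapₗ_pow (A : Module.End R M) (k : ℕ) :
    (LinearMap.compMultilinearMapₗ (M₁ := fun _ : ι => M) R A :
      Module.End R (MultilinearMap R (fun _ : ι => M) M)) ^ k =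
        LinearMap.compMultilinearMapₗ R (A ^ k) := by
  induction k with
  | zero => rfl
  | succ k ih => rw [pow_succ, ih, pow_succ]; rfl

theorem compMultilinearMapₗ_isNilpotent {A : Module.End R M} (hA : IsNilpotent A) :
    IsNilpotent (LinearMap.compMultilinearMapₗ (M₁ := fun _ : ι => M) R A :
      Module.End R (MultilinearMap R (fun _ : ι => M) M)) := by
  obtain ⟨k, hk⟩ := hA
  exact ⟨k, by rw [compMultilinearMapₗ_pow, hk]; rfl⟩

variable [DecidableEq ι]

/-- Precomposition of the `i`-th argument of a multilinear map with an endomorphism; these are the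
commuting summands of `linearBracket`. -/
def precompAt (i : ι) (A : Module.End R M) : Module.End R (MultilinearMap R (fun _ : ι => M) M) :=
  MultilinearMap.compLinearMapₗ (Function.update (fun _ => LinearMap.id) i A)

theorem precompAt_apply (i : ι) (A : Module.End R M) (T : MultilinearMap R (fun _ : ι => M) M)
    (v : ι → M) : precompAt i A T v = T (Function.update v i (A (v i))) := by
  change T (fun k => Function.update (fun _ => LinearMap.id) i A k (v k)) = _
  congr 1
  ext k
  by_cases h : k = i
  · subst h; simp
  · simp [h]

theorem precompAt_pow (i : ι) (A : Module.End R M) (k : ℕ) :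
    precompAt i A ^ k = precompAt i (A ^ k) := by
  induction k with
  | zero => ext T v; simp [precompAt_apply]
  | succ k ih => ext T v; rw [pow_succ, ih]; simp [precompAt_apply, pow_succ']

theorem precompAt_isNilpotent (i : ι) {A : Module.End R M} (hA : IsNilpotent A) :
    IsNilpotent (precompAt i A) := by
  obtain ⟨k, hk⟩ := hA
  refine ⟨k, ?_⟩
  ext T v
  rw [precompAt_pow, hk, precompAt_apply]
  exact T.map_coord_zero i (by simp)

theorem precompAt_commute (i j : ι) {A B : Module.End R M} (hAB : Commute A B) :
    Commute (precompAt i A) (precompAt j B) := by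
  ext T v
  simp only [Module.End.mul_apply, precompAt_apply]
  by_cases h : i = j
  · subst h
    have hABv : A (B (v i)) = B (A (v i)) := LinearMap.congr_fun hAB (v i)
    simp [hABv]
  · rw [Function.update_of_ne h, Function.update_of_ne (Ne.symm h), Function.update_comm h]

theorem compMultilinearMapₗ_commute_precompAt (i : ι) (A B : Module.End R M) :
    Commute (LinearMap.compMultilinearMapₗ (M₁ := fun _ : ι => M) R A) (precompAt i B) := rfl

variable [Fintype ι]

/-- The operator `T ↦ ∑ i, T(…, A vᵢ, …) - A (T v)` on multilinear maps. On Taylor coefficients at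
`0` it is the Lie bracket `[A, ·]` with the linear vector field `A`. -/
def linearBracket (A : Module.End R M) : Module.End R (MultilinearMap R (fun _ : ι => M) M) :=
  ∑ i, precompAt i A - LinearMap.compMultilinearMapₗ R A

theorem linearBracket_apply (A : Module.End R M) (T : MultilinearMap R (fun _ : ι => M) M)
    (v : ι → M) :
    linearBracket A T v = ∑ i, T (Function.update v i (A (v i))) - A (T v) := by
  simp [linearBracket, precompAt_apply, LinearMap.sum_apply]

theorem linearBracket_add (A B : Module.End R M) :
    linearBracket (ι := ι) (A + B) = linearBracket A + linearBracket B := by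
  ext T v
  simp only [LinearMap.add_apply, _root_.add_apply, linearBracket_apply,
    MultilinearMap.map_update_add, Finset.sum_add_distrib]
  abel

theorem linearBracket_commute {A B : Module.End R M} (hAB : Commute A B) :
    Commute (linearBracket (ι := ι) A) (linearBracket B) := by
  refine Commute.sub_left (Commute.sub_right ?_ ?_) (Commute.sub_right ?_ ?_)
  · exact Commute.sum_left _ _ _ fun i _ => Commute.sum_right _ _ _ fun j _ =>
      precompAt_commute i j hAB
  · exact Commute.sum_left _ _ _ fun i _ => (compMultilinearMapₗ_commute_precompAt i B A).symm
  · exact Commute.sum_right _ _ _ fun i _ => compMultilinearMapₗ_commute_precompAt i A B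
  · exact compMultilinearMapₗ_commute hAB

theorem linearBracket_isNilpotent {A : Module.End R M} (hA : IsNilpotent A) :
    IsNilpotent (linearBracket (ι := ι) A) := by
  refine Commute.isNilpotent_sub ?_ ?_ (compMultilinearMapₗ_isNilpotent hA)
  · exact Commute.sum_left _ _ _ fun i _ => (compMultilinearMapₗ_commute_precompAt i A A).symm
  · exact Commute.isNilpotent_sum (fun i _ => precompAt_isNilpotent i hA)
      fun i j _ _ => precompAt_commute i j (Commute.refl A)

section Eigenbasis

variable {A : Module.End R M} {γ : κ → R} {b : Module.Basis κ R M}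

theorem repr_apply_of_eigenbasis (hA : ∀ i, A (b i) = γ i • b i) (x : M) (j : κ) :
    b.repr (A x) j = γ j * b.repr x j := by
  have hcoord : b.coord j ∘ₗ A = γ j • b.coord j := b.ext fun i => by
    rcases eq_or_ne i j with rfl | hij
    · simp [hA]
    · simp [hA, hij]
  exact LinearMap.congr_fun hcoord x

theorem repr_linearBracket_pow_apply (hA : ∀ i, A (b i) = γ i • b i) (k : ℕ)
    (T : MultilinearMap R (fun _ : ι => M) M) (I : ι → κ) (j : κ) :
    b.repr ((linearBracket A ^ k) T fun l => b (I l)) j =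
      (∑ l, γ (I l) - γ j) ^ k * b.repr (T fun l => b (I l)) j := by
  induction k with
  | zero => simp
  | succ k ih =>
    rw [pow_succ', Module.End.mul_apply, linearBracket_apply]
    simp only [hA, MultilinearMap.map_update_smul, Function.update_eq_self, map_sub, map_sum,
      map_smul, Finsupp.coe_sub, Pi.sub_apply, Finsupp.coe_finsetSum, Finset.sum_apply,
      Finsupp.coe_smul, Pi.smul_apply, smul_eq_mul, repr_apply_of_eigenbasis hA, ih]
    rw [← Finset.sum_mul]
    ring

variable [IsDomain R]

theorem linearBracket_pow_apply_eq_zero_iff (hA : ∀ i, A (b i) = γ i • b i) {k : ℕ} (hk : k ≠ 0)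
    {T : MultilinearMap R (fun _ : ι => M) M} :
    (linearBracket A ^ k) T = 0 ↔
      ∀ (I : ι → κ) j, ∑ l, γ (I l) = γ j ∨ b.repr (T fun l => b (I l)) j = 0 := by
  have hcoeff : (linearBracket A ^ k) T = 0 ↔
      ∀ (I : ι → κ) j, b.repr ((linearBracket A ^ k) T fun l => b (I l)) j = 0 := by
    refine ⟨fun h I j => by simp [h], fun h => ?_⟩
    exact Module.Basis.ext_multilinear (fun _ => b) fun I => b.ext_elem fun j => by simp [h]
  simp only [hcoeff, repr_linearBracket_pow_apply hA, mul_eq_zero, pow_eq_zero_iff hk, sub_eq_zero]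

theorem linearBracket_apply_eq_zero_iff (hA : ∀ i, A (b i) = γ i • b i)
    {T : MultilinearMap R (fun _ : ι => M) M} :
    linearBracket A T = 0 ↔
      ∀ (I : ι → κ) j, ∑ l, γ (I l) = γ j ∨ b.repr (T fun l => b (I l)) j = 0 := by
  simpa only [pow_one] using linearBracket_pow_apply_eq_zero_iff hA one_ne_zero

theorem linearBracket_apply_eq_zero_of_add_nilpotent (hA : ∀ i, A (b i) = γ i • b i)
    {N : Module.End R M} (hN : IsNilpotent N) (hAN : Commute A N)
    {T : MultilinearMap R (fun _ : ι => M) M}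
    (hT : linearBracket (A + N) (linearBracket A T) = 0) : linearBracket A T = 0 := by
  rw [linearBracket_add] at hT
  obtain ⟨k, hk⟩ := exists_pow_apply_eq_zero_of_add_apply_eq_zero (linearBracket_commute hAN)
    (linearBracket_isNilpotent hN) hT
  rw [← Module.End.mul_apply, ← pow_succ,
    linearBracket_pow_apply_eq_zero_iff hA k.succ_ne_zero] at hk
  exact (linearBracket_apply_eq_zero_iff hA).2 hk

end Eigenbasis

end MultilinearAction

section Resonance

variable {n m : ℕ} {γ : Fin n → ℂ} {ρ : Fin n → ℤ}

/-- The exponent vector of the monomial vector field `x_{I 1} ⋯ x_{I m} ∂_j`, where the factor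
`x_j⁻¹` accounts for `∂_j`. -/
def monomialWeight (I : Fin m → Fin n) (j : Fin n) : Fin n → ℤ :=
  ∑ k, Pi.single (I k) 1 - Pi.single j 1

theorem sum_monomialWeight_mul {R : Type*} [Ring R] (I : Fin m → Fin n) (j : Fin n)
    (a : Fin n → R) : ∑ i, (monomialWeight I j i : R) * a i = ∑ k, a (I k) - a j := by
  simp only [monomialWeight, Pi.sub_apply, Finset.sum_apply, Int.cast_sub, Int.cast_sum, sub_mul,
    Finset.sum_sub_distrib, Finset.sum_mul]
  rw [Finset.sum_comm]
  simp [Pi.single_apply]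

theorem isResonanceRelation_monomialWeight (hm : 2 ≤ m) {I : Fin m → Fin n} {j : Fin n}
    (h : ∑ k, γ (I k) = γ j) : IsResonanceRelation γ (monomialWeight I j) := by
  have hnonneg (i : Fin n) : 0 ≤ ∑ k, (Pi.single (I k) 1 : Fin n → ℤ) i :=
    Finset.sum_nonneg fun k _ => by rw [Pi.single_apply]; positivity
  have hneg (i : Fin n) (hi : monomialWeight I j i < 0) : i = j := by
    by_contra hij
    have := hnonneg i
    simp only [monomialWeight, Pi.sub_apply, Finset.sum_apply, Pi.single_eq_of_ne hij] at hi
    omega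
  refine ⟨?_, fun i => ?_, ?_, fun i k hi hk => (hneg i hi).trans (hneg k hk).symm⟩
  · rw [sum_monomialWeight_mul, h, sub_self]
  · have hsingle : (Pi.single j 1 : Fin n → ℤ) i ≤ 1 := by
      rw [Pi.single_apply]; split_ifs <;> simp
    have := hnonneg i
    simp only [monomialWeight, Pi.sub_apply, Finset.sum_apply]
    omega
  · have hsum := sum_monomialWeight_mul I j (fun _ => (1 : ℤ))
    simp only [Int.cast_id, mul_one, Finset.sum_const, Finset.card_univ, Fintype.card_fin,
      nsmul_eq_mul] at hsum
    omega

theorem eq_zero_of_mem_QLattice (hρ : ρ ∈ QLattice γ) {j : Fin n} (hj : γ j = 0) : ρ j = 0 := by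
  have hres : IsResonanceRelation γ (Pi.single j 1) := by
    have hnonneg : 0 ≤ (Pi.single j 1 : Fin n → ℤ) := Pi.single_nonneg.2 zero_le_one
    exact ⟨by simp [Pi.single_apply, hj], fun i => neg_one_lt_zero.le.trans (hnonneg i), by simp,
      fun i _ hi => absurd hi (hnonneg i).not_gt⟩
  simpa [Pi.single_apply] using hρ.1 _ hres

theorem sum_eq_of_mem_QLattice (hρ : ρ ∈ QLattice γ) {I : Fin m → Fin n} {j : Fin n}
    (h : ∑ k, γ (I k) = γ j) : ∑ k, ρ (I k) = ρ j := by
  match m, I, h with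
  | 0, I, h => simpa using (eq_zero_of_mem_QLattice hρ (by simpa using h.symm)).symm
  | 1, I, h => simpa using hρ.2 (I 0) j (by simpa using h)
  | m + 2, I, h =>
    have hsum := hρ.1 _ (isResonanceRelation_monomialWeight (by omega) h)
    simp only [mul_comm (ρ _)] at hsum
    rw [← sub_eq_zero, ← sum_monomialWeight_mul]
    simpa using hsum

theorem coe_diagCLM (γ : Fin n → ℂ) : ⇑(diagCLM γ) = fun x j => γ j * x j := by
  ext x j
  simp [diagCLM, Matrix.mulVec_diagonal]

theorem diagCLM_basisFun (γ : Fin n → ℂ) (i : Fin n) :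
    (diagCLM γ : Module.End ℂ (Fin n → ℂ)) (Pi.basisFun ℂ (Fin n) i) =
      γ i • Pi.basisFun ℂ (Fin n) i := by
  ext j
  rcases eq_or_ne j i with rfl | hji
  · simp [coe_diagCLM]
  · simp [coe_diagCLM, hji]

theorem linearBracket_diagCLM_apply_eq_zero_of_mem_QLattice (hρ : ρ ∈ QLattice γ)
    {T : MultilinearMap ℂ (fun _ : Fin m => Fin n → ℂ) (Fin n → ℂ)}
    (hT : linearBracket (diagCLM γ : Module.End ℂ (Fin n → ℂ)) T = 0) :
    linearBracket (diagCLM fun j => (ρ j : ℂ) : Module.End ℂ (Fin n → ℂ)) T = 0 := by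
  rw [linearBracket_apply_eq_zero_iff (diagCLM_basisFun _)] at hT ⊢
  refine fun I j => (hT I j).imp_left fun hres => ?_
  exact_mod_cast sum_eq_of_mem_QLattice hρ hres

end Resonance

open VectorField Filter
open scoped ContDiff Topology

section VanishingOrder

variable {𝕜 E F G : Type*} [NontriviallyNormedField 𝕜] [NormedAddCommGroup E] [NormedSpace 𝕜 E]
  [NormedAddCommGroup F] [NormedSpace 𝕜 F] [NormedAddCommGroup G] [NormedSpace 𝕜 G]

/-- The Taylor coefficients of `f` at `x` of degree less than `m` vanish, so that the `m`-th
derivative at `x`, possibly zero, is the leading term. -/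
def VanishesToOrder (𝕜 : Type*) {E F : Type*} [NontriviallyNormedField 𝕜] [NormedAddCommGroup E]
    [NormedSpace 𝕜 E] [NormedAddCommGroup F] [NormedSpace 𝕜 F] (f : E → F) (x : E) (m : ℕ) :
    Prop :=
  ∀ i < m, iteratedFDeriv 𝕜 i f x = 0

theorem VanishesToOrder.fderiv {f : E → F} {x : E} {m : ℕ} (h : VanishesToOrder 𝕜 f x m) :
    VanishesToOrder 𝕜 (fderiv 𝕜 f) x (m - 1) := fun i hi => by
  rw [← norm_eq_zero, norm_iteratedFDeriv_fderiv, h _ (by omega), norm_zero]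

theorem VanishesToOrder.clm_apply {f : E → F →L[𝕜] G} {g : E → F} {x : E} {p q : ℕ}
    (hf : VanishesToOrder 𝕜 f x p) (hg : VanishesToOrder 𝕜 g x q)
    (hfs : ContDiffAt 𝕜 ω f x) (hgs : ContDiffAt 𝕜 ω g x) :
    VanishesToOrder 𝕜 (fun y => f y (g y)) x (p + q) := by
  intro m hm
  obtain ⟨u, hu, hxu, hfu, hgu⟩ : ∃ u, IsOpen u ∧ x ∈ u ∧ ContDiffOn 𝕜 ω f u ∧
      ContDiffOn 𝕜 ω g u := by
    obtain ⟨u, hu, huo, hxu⟩ := eventually_nhds_iff.1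
      ((hfs.eventually (by simp)).and (hgs.eventually (by simp)))
    exact ⟨u, huo, hxu, fun y hy => (hu y hy).1.contDiffWithinAt,
      fun y hy => (hu y hy).2.contDiffWithinAt⟩
  have hle := norm_iteratedFDerivWithin_clm_apply hfu hgu hu.uniqueDiffOn hxu (n := m) le_top
  simp only [iteratedFDerivWithin_of_isOpen _ hu hxu] at hle
  refine norm_le_zero_iff.1 (hle.trans (Finset.sum_nonpos fun i hi => ?_))
  rcases lt_or_ge i p with hip | hpi
  · simp [hf i hip]
  · have hmi : m - i < q := by have := Finset.mem_range.1 hi; omega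
    simp [hg (m - i) hmi]

theorem VanishesToOrder.lieBracket {V W : E → E} {x : E} {p q : ℕ}
    (hV : VanishesToOrder 𝕜 V x (p + 1)) (hW : VanishesToOrder 𝕜 W x q)
    (hVs : ContDiffAt 𝕜 ω V x) (hWs : ContDiffAt 𝕜 ω W x) :
    VanishesToOrder 𝕜 (lieBracket 𝕜 V W) x (p + q) := by
  intro m hm
  have hdV : ContDiffAt 𝕜 ω (_root_.fderiv 𝕜 V) x := hVs.fderiv_right (by simp)
  have hdW : ContDiffAt 𝕜 ω (_root_.fderiv 𝕜 W) x := hWs.fderiv_right (by simp)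
  have hWV := hW.fderiv.clm_apply hV hdW hVs m (by omega)
  have hVW := hV.fderiv.clm_apply hW hdV hWs m (by omega)
  rw [lieBracket_eq, fun_iteratedFDeriv_sub_apply ((hdW.clm_apply hVs).of_le le_top)
    ((hdV.clm_apply hWs).of_le le_top), hWV, hVW, sub_zero]

theorem vanishesToOrder_two_sub_fderiv {f : E → F} (hf : DifferentiableAt 𝕜 f 0) (hf0 : f 0 = 0) :
    VanishesToOrder 𝕜 (f - ⇑(fderiv 𝕜 f 0)) 0 2 := by
  intro i hi
  interval_cases i
  · ext v
    simp [hf0]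
  · ext v
    rw [iteratedFDeriv_one_apply, fderiv_sub hf (ContinuousLinearMap.differentiableAt _),
      ContinuousLinearMap.fderiv]
    simp

theorem eventuallyEq_zero_of_iteratedFDeriv_eq_zero [CharZero 𝕜] [CompleteSpace F] {f : E → F}
    {x : E} (hf : AnalyticAt 𝕜 f x) (h : ∀ m, iteratedFDeriv 𝕜 m f x = 0) : f =ᶠ[𝓝 x] 0 := by
  obtain ⟨p, r, hp⟩ := hf
  filter_upwards [Metric.eball_mem_nhds x hp.r_pos] with y hy
  have hs := hp.hasSum_iteratedFDeriv (y := y - x) (by simpa [edist_eq_enorm_sub] using hy)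
  simp only [h, add_sub_cancel] at hs
  exact hs.unique (by simp)

end VanishingOrder

section LieBracket

variable {𝕜 E : Type*} [NontriviallyNormedField 𝕜] [NormedAddCommGroup E] [NormedSpace 𝕜 E]

theorem lieBracket_clm_left (A : E →L[𝕜] E) (V : E → E) :
    lieBracket 𝕜 A V = fun x => fderiv 𝕜 V x (A x) - A (V x) := by
  ext x
  simp [lieBracket]

theorem fderiv_lieBracket_clm_left_apply (A : E →L[𝕜] E) {V : E → E} {x : E}
    (hV : ContDiffAt 𝕜 ω V x) (w : E) :
    fderiv 𝕜 (lieBracket 𝕜 A V) x w =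
      lieBracket 𝕜 A (fun y => fderiv 𝕜 V y w) x + fderiv 𝕜 V x (A w) := by
  have hdV : DifferentiableAt 𝕜 (fderiv 𝕜 V) x :=
    (hV.fderiv_right (m := ω) (by simp)).differentiableAt (by simp)
  have hVx : DifferentiableAt 𝕜 V x := hV.differentiableAt (by simp)
  have hsymm : fderiv 𝕜 (fderiv 𝕜 V) x w (A x) = fderiv 𝕜 (fderiv 𝕜 V) x (A x) w :=
    hV.isSymmSndFDerivAt le_top _ _
  have hAV : fderiv 𝕜 (fun y => A (V y)) x = A.comp (fderiv 𝕜 V x) :=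
    (A.hasFDerivAt.comp x hVx.hasFDerivAt).fderiv
  simp only [lieBracket_clm_left]
  rw [fderiv_fun_sub (hdV.clm_apply A.differentiableAt) (by fun_prop),
    fderiv_clm_apply hdV A.differentiableAt, fderiv_clm_apply hdV (differentiableAt_const w)]
  simp only [ContinuousLinearMap.fderiv, hAV, _root_.sub_apply, _root_.add_apply,
    ContinuousLinearMap.coe_comp, Function.comp_apply, ContinuousLinearMap.flip_apply, hsymm,
    fderiv_fun_const, Pi.zero_apply, ContinuousLinearMap.comp_zero, zero_add]
  abel

theorem iteratedFDeriv_succ_apply_eq_iteratedFDeriv_fderiv_apply {V : E → E} {x : E}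
    (hV : ContDiffAt 𝕜 ω V x) {m : ℕ} (v : Fin (m + 1) → E) :
    iteratedFDeriv 𝕜 (m + 1) V x v =
      iteratedFDeriv 𝕜 m (fun y => fderiv 𝕜 V y (v (Fin.last m))) x (Fin.init v) := by
  have heval := (ContinuousLinearMap.apply 𝕜 E (v (Fin.last m))).iteratedFDeriv_comp_left
    (hV.fderiv_right (m := ω) (by simp)) (i := m) le_top
  rw [iteratedFDeriv_succ_apply_right]
  exact (congrArg (fun T => T (Fin.init v)) heval).symm

theorem iteratedFDeriv_lieBracket_clm_left (A : E →L[𝕜] E) {V : E → E}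
    (hV : ContDiffAt 𝕜 ω V 0) (m : ℕ) :
    (iteratedFDeriv 𝕜 m (lieBracket 𝕜 A V) 0).toMultilinearMap =
      linearBracket (A : Module.End 𝕜 E) (iteratedFDeriv 𝕜 m V 0).toMultilinearMap := by
  induction m generalizing V with
  | zero => ext v; simp [linearBracket_apply, lieBracket_clm_left]
  | succ m ih =>
    ext v
    set w := v (Fin.last m)
    have hA : ContDiffAt 𝕜 ω A (0 : E) := A.contDiff.contDiffAt
    have hdV (u : E) : ContDiffAt 𝕜 ω (fun y => fderiv 𝕜 V y u) 0 :=
      (hV.fderiv_right (m := ω) (by simp)).clm_apply contDiffAt_const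
    have hfderiv : (fun y => fderiv 𝕜 (lieBracket 𝕜 A V) y w) =ᶠ[𝓝 0]
        lieBracket 𝕜 A (fun y => fderiv 𝕜 V y w) + fun y => fderiv 𝕜 V y (A w) := by
      filter_upwards [hV.eventually (by simp)] with y hy
      exact fderiv_lieBracket_clm_left_apply A hy w
    have ihw := congrArg (fun T => T (Fin.init v)) (ih (hdV w))
    simp only [ContinuousMultilinearMap.coe_coe] at ihw ⊢
    rw [iteratedFDeriv_succ_apply_eq_iteratedFDeriv_fderiv_apply
        (hA.lieBracket_vectorField hV (by simp)),
      (hfderiv.iteratedFDeriv 𝕜 m).self_of_nhds,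
      iteratedFDeriv_add_apply
        ((hA.lieBracket_vectorField (m := ω) (hdV w) (by simp)).of_le le_top)
        ((hdV _).of_le le_top),
      _root_.add_apply, ihw]
    have hne (i : Fin m) : Fin.last m ≠ i.castSucc := (Fin.castSucc_lt_last i).ne'
    simp only [linearBracket_apply, ContinuousMultilinearMap.coe_coe, Fin.sum_univ_castSucc,
      ContinuousLinearMap.coe_coe, iteratedFDeriv_succ_apply_eq_iteratedFDeriv_fderiv_apply hV,
      Fin.init_update_castSucc, Fin.init_update_last, Function.update_self,
      Function.update_of_ne (hne _), Fin.init, w]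
    abel

theorem lieBracket_clm_left_eventuallyEq_zero_iff [CharZero 𝕜] [CompleteSpace E] (A : E →L[𝕜] E)
    {V : E → E} (hV : ContDiffAt 𝕜 ω V 0) :
    lieBracket 𝕜 A V =ᶠ[𝓝 0] 0 ↔
      ∀ m, linearBracket (A : Module.End 𝕜 E) (iteratedFDeriv 𝕜 m V 0).toMultilinearMap = 0 := by
  simp only [← iteratedFDeriv_lieBracket_clm_left A hV]
  refine ⟨fun h m => ?_, fun h => ?_⟩
  · rw [(h.iteratedFDeriv 𝕜 m).self_of_nhds, iteratedFDeriv_zero]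
    rfl
  · exact eventuallyEq_zero_of_iteratedFDeriv_eq_zero
      (A.contDiff.contDiffAt.lieBracket_vectorField (m := ω) hV (by simp)).analyticAt
      fun m => ContinuousMultilinearMap.toMultilinearMap_injective (h m)

theorem lieBracket_lieBracket_eventuallyEq_zero {X V W : E → E} {x : E}
    (hX : ContDiffAt 𝕜 ω X x) (hV : ContDiffAt 𝕜 ω V x) (hW : ContDiffAt 𝕜 ω W x)
    (hXV : lieBracket 𝕜 X V =ᶠ[𝓝 x] 0) (hXW : lieBracket 𝕜 X W =ᶠ[𝓝 x] 0) :
    lieBracket 𝕜 X (lieBracket 𝕜 V W) =ᶠ[𝓝 x] 0 := by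
  have hXVW : lieBracket 𝕜 (lieBracket 𝕜 X V) W =ᶠ[𝓝 x] lieBracket 𝕜 0 W :=
    hXV.lieBracket_vectorField (EventuallyEq.refl (𝓝 x) W)
  have hVXW : lieBracket 𝕜 V (lieBracket 𝕜 X W) =ᶠ[𝓝 x] lieBracket 𝕜 V 0 :=
    (EventuallyEq.refl (𝓝 x) V).lieBracket_vectorField hXW
  filter_upwards [hX.eventually (by simp), hV.eventually (by simp), hW.eventually (by simp),
    hXVW, hVXW] with y hXy hVy hWy hXVWy hVXWy
  rw [leibniz_identity_lieBracket le_top hXy hVy hWy, hXVWy, hVXWy]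
  simp

theorem linearBracket_fderiv_iteratedFDeriv_eq_zero {X W : E → E}
    (hX : ContDiffAt 𝕜 ω X 0) (hW : ContDiffAt 𝕜 ω W 0) (hX0 : X 0 = 0)
    (hXW : lieBracket 𝕜 X W =ᶠ[𝓝 0] 0) {m : ℕ} (hm : VanishesToOrder 𝕜 W 0 m) :
    linearBracket (fderiv 𝕜 X 0 : Module.End 𝕜 E) (iteratedFDeriv 𝕜 m W 0).toMultilinearMap =
      0 := by
  set A := fderiv 𝕜 X 0
  have hA : ContDiff 𝕜 ω A := A.contDiff
  have hR : ContDiffAt 𝕜 ω (X - ⇑A) 0 := hX.sub hA.contDiffAt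
  have hsplit : lieBracket 𝕜 A W =ᶠ[𝓝 0] -lieBracket 𝕜 (X - ⇑A) W := by
    filter_upwards [hXW, hR.eventually (by simp)] with y hXWy hRy
    refine eq_neg_of_add_eq_zero_left ?_
    rw [← lieBracket_add_left A.differentiableAt (hRy.differentiableAt (by simp)),
      add_sub_cancel, hXWy, Pi.zero_apply]
  have hRW : iteratedFDeriv 𝕜 m (lieBracket 𝕜 (X - ⇑A) W) 0 = 0 :=
    (vanishesToOrder_two_sub_fderiv (hX.differentiableAt (by simp)) hX0).lieBracket (p := 1) hm hR
      hW m (by omega)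
  rw [← iteratedFDeriv_lieBracket_clm_left A hW, (hsplit.iteratedFDeriv 𝕜 m).self_of_nhds,
    iteratedFDeriv_neg_apply, hRW, neg_zero]
  rfl

theorem analyticOnNhd_lieBracket [CompleteSpace E] {V W : E → E} {U : Set E}
    (hV : AnalyticOnNhd 𝕜 V U) (hW : AnalyticOnNhd 𝕜 W U) :
    AnalyticOnNhd 𝕜 (lieBracket 𝕜 V W) U := fun x hx =>
  ((hV x hx).contDiffAt.lieBracket_vectorField (m := ω) (n := ω) (hW x hx).contDiffAt
    (by simp)).analyticAt

theorem fderiv_apply_eq_zero_of_lieBracket_smul_self {Z : E → E} {f : E → 𝕜} {x : E}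
    (hf : DifferentiableAt 𝕜 f x) (hZ : DifferentiableAt 𝕜 Z x)
    (h : lieBracket 𝕜 Z (fun y => f y • Z y) x = 0) : fderiv 𝕜 f x (Z x) = 0 := by
  rw [lieBracket_smul_right hf hZ, lieBracket_self, Pi.zero_apply, smul_zero, add_zero] at h
  rcases smul_eq_zero.1 h with hfZ | hZx
  · exact hfZ
  · rw [hZx, map_zero]

theorem fderiv_apply_eq_zero_of_centralizer_subset {X Z : E → E} {U : Set E}
    (hX : AnalyticOnNhd 𝕜 X U) (hZ : AnalyticOnNhd 𝕜 Z U)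
    (hXZ : ∀ Y : E → E, AnalyticOnNhd 𝕜 Y U → (∀ x ∈ U, lieBracket 𝕜 X Y x = 0) →
      ∀ x ∈ U, lieBracket 𝕜 Z Y x = 0)
    {f : E → 𝕜} (hf : AnalyticOnNhd 𝕜 f U) (hfX : ∀ x ∈ U, fderiv 𝕜 f x (X x) = 0) :
    ∀ x ∈ U, fderiv 𝕜 f x (Z x) = 0 := by
  have hcomm (x) (hx : x ∈ U) : lieBracket 𝕜 X Z x = 0 := by
    rw [lieBracket_swap, hXZ X hX (fun y _ => by simp) x hx, neg_zero]
  -- `[X, f • Z] = X(f) • Z + f • [X, Z] = 0`, hence `Z(f) • Z = [Z, f • Z] = 0`.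
  have hcomm_smul (x) (hx : x ∈ U) : lieBracket 𝕜 X (fun y => f y • Z y) x = 0 := by
    rw [lieBracket_smul_right (hf x hx).differentiableAt (hZ x hx).differentiableAt, hfX x hx,
      hcomm x hx, zero_smul, smul_zero, add_zero]
  exact fun x hx => fderiv_apply_eq_zero_of_lieBracket_smul_self (hf x hx).differentiableAt
    (hZ x hx).differentiableAt (hXZ _ (hf.smul hZ) hcomm_smul x hx)

end LieBracket

theorem lieBracket_semisimplePart_eventuallyEq_zero {𝕜 E κ : Type*} [NontriviallyNormedField 𝕜]
    [CharZero 𝕜] [NormedAddCommGroup E] [NormedSpace 𝕜 E] [CompleteSpace E]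
    {X Y : E → E} {S N : E →L[𝕜] E} {γ : κ → 𝕜} {b : Module.Basis κ 𝕜 E}
    (hX : ContDiffAt 𝕜 ω X 0) (hY : ContDiffAt 𝕜 ω Y 0) (hX0 : X 0 = 0)
    (hJC : fderiv 𝕜 X 0 = S + N) (hS : ∀ i, (S : Module.End 𝕜 E) (b i) = γ i • b i)
    (hN : IsNilpotent (N : Module.End 𝕜 E)) (hSN : S ∘L N = N ∘L S)
    (hNF : lieBracket 𝕜 X S =ᶠ[𝓝 0] 0) (hXY : lieBracket 𝕜 X Y =ᶠ[𝓝 0] 0) :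
    lieBracket 𝕜 S Y =ᶠ[𝓝 0] 0 := by
  have hSs : ContDiffAt 𝕜 ω S (0 : E) := S.contDiff.contDiffAt
  have hW : ContDiffAt 𝕜 ω (lieBracket 𝕜 S Y) 0 := hSs.lieBracket_vectorField hY (by simp)
  have hXW := lieBracket_lieBracket_eventuallyEq_zero hX hSs hY hNF hXY
  have hcomm : Commute (S : Module.End 𝕜 E) (N : Module.End 𝕜 E) :=
    LinearMap.ext fun x => DFunLike.congr_fun hSN x
  rw [lieBracket_clm_left_eventuallyEq_zero_iff S hY]
  intro m
  induction m using Nat.strong_induction_on with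
  | _ m ih =>
    have hvanish : VanishesToOrder 𝕜 (lieBracket 𝕜 S Y) 0 m := fun i hi =>
      ContinuousMultilinearMap.toMultilinearMap_injective
        ((iteratedFDeriv_lieBracket_clm_left S hY i).trans (ih i hi))
    have hlead := linearBracket_fderiv_iteratedFDeriv_eq_zero hX hW hX0 hXW hvanish
    rw [iteratedFDeriv_lieBracket_clm_left S hY, hJC] at hlead
    exact linearBracket_apply_eq_zero_of_add_nilpotent hS hN hcomm hlead

theorem lieBracket_diagCLM_eventuallyEq_zero_of_mem_QLattice {n : ℕ} {γ : Fin n → ℂ}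
    {ρ : Fin n → ℤ} (hρ : ρ ∈ QLattice γ) {Y : (Fin n → ℂ) → (Fin n → ℂ)}
    (hY : ContDiffAt ℂ ω Y 0) (hSY : lieBracket ℂ (diagCLM γ) Y =ᶠ[𝓝 0] 0) :
    lieBracket ℂ (diagCLM fun j => (ρ j : ℂ)) Y =ᶠ[𝓝 0] 0 := by
  rw [lieBracket_clm_left_eventuallyEq_zero_iff _ hY] at hSY ⊢
  exact fun m => linearBracket_diagCLM_apply_eq_zero_of_mem_QLattice hρ (hSY m)

/-- **Lemma on commuting fields and first integrals of a vector field in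
normal form** (Zung). If `X` is a holomorphic vector field in Poincaré–Dulac
normal form with semisimple linear part `diag γ`, and `ρ ∈ Q(γ)`, then the
diagonal vector field `Z_ρ(x) = (ρ₁x₁, …, ρₙxₙ)` commutes with every
holomorphic vector field commuting with `X`, and annihilates every
holomorphic first integral of `X`. -/
theorem normalForm_lemma_commute_firstIntegral
    (n : ℕ) (U : Set (Fin n → ℂ)) (hUopen : IsOpen U)
    (hUconn : IsConnected U) (h0U : (0 : Fin n → ℂ) ∈ U)
    (X : (Fin n → ℂ) → (Fin n → ℂ))
    (hXan : AnalyticOnNhd ℂ X U) (hX0 : X 0 = 0)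
    (γ : Fin n → ℂ) (N : (Fin n → ℂ) →L[ℂ] (Fin n → ℂ))
    (hJC : fderiv ℂ X 0 = diagCLM γ + N)
    (hnil : IsNilpotent (N : Module.End ℂ (Fin n → ℂ)))
    (hSN : diagCLM γ ∘L N = N ∘L diagCLM γ)
    (hNF : ∀ x ∈ U,
      VectorField.lieBracket ℂ X (fun y j => γ j * y j) x = 0)
    (ρ : Fin n → ℤ) (hρ : ρ ∈ QLattice γ) :
    (∀ Y : (Fin n → ℂ) → (Fin n → ℂ), AnalyticOnNhd ℂ Y U →
      (∀ x ∈ U, VectorField.lieBracket ℂ X Y x = 0) →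
      ∀ x ∈ U,
        VectorField.lieBracket ℂ (fun y j => (ρ j : ℂ) * y j) Y x = 0) ∧
    (∀ f : (Fin n → ℂ) → ℂ, AnalyticOnNhd ℂ f U →
      (∀ x ∈ U, fderiv ℂ f x (X x) = 0) →
      ∀ x ∈ U, fderiv ℂ f x (fun j => (ρ j : ℂ) * x j) = 0) := by
  rw [← coe_diagCLM] at hNF
  rw [← coe_diagCLM fun j => (ρ j : ℂ)]
  set Z := diagCLM fun j => (ρ j : ℂ) with hZ
  have hZan : AnalyticOnNhd ℂ Z U := Z.analyticOnNhd U
  have hU : U ∈ 𝓝 0 := hUopen.mem_nhds h0U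
  have hcommute : ∀ Y : (Fin n → ℂ) → (Fin n → ℂ), AnalyticOnNhd ℂ Y U →
      (∀ x ∈ U, lieBracket ℂ X Y x = 0) → ∀ x ∈ U, lieBracket ℂ Z Y x = 0 := by
    intro Y hY hXY
    have hY0 : ContDiffAt ℂ ω Y 0 := (hY 0 h0U).contDiffAt
    have hSY : lieBracket ℂ (diagCLM γ) Y =ᶠ[𝓝 0] 0 :=
      lieBracket_semisimplePart_eventuallyEq_zero (hXan 0 h0U).contDiffAt hY0 hX0 hJC
        (diagCLM_basisFun γ) hnil hSN (eventually_of_mem hU hNF) (eventually_of_mem hU hXY)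
    exact (analyticOnNhd_lieBracket hZan hY).eqOn_zero_of_preconnected_of_eventuallyEq_zero
      hUconn.isPreconnected h0U (lieBracket_diagCLM_eventuallyEq_zero_of_mem_QLattice hρ hY0 hSY)
  refine ⟨hcommute, fun f hf hfX => ?_⟩
  simpa only [hZ, coe_diagCLM] using
    fderiv_apply_eq_zero_of_centralizer_subset hXan hZan hcommute hf hfX
end

section
/- Let U ⊆ ℂⁿ be an open ball centered at 0 (or more generally a star-shaped open neighborhood of 0), and let X₁, …, X_{n−1} : U → ℂⁿ be analytic vector fields which commute pairwise ([X_i, X_j] = 0 on U) and are isochore (trace(DX_i(x)) = 0 for all x ∈ U and all i). Define the analytic 1-form α on U by α(x)(v) = det(X₁(x), …, X_{n−1}(x), v), the determinant of the n×n matrix whose first n−1 columns are X₁(x), …, X_{n−1}(x) and whose last column is v. Then α is exact: there exists an analytic function g : U → ℂ such that Dg(x)(v) = α(x)(v) for all x ∈ U and all v ∈ ℂⁿ; in particular g is a common first integral of the X_i, i.e. Dg(x)(X_i(x)) = 0 for all x ∈ U and all i. -/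
/-!
Let `α = Ω(X₁, …, Xₙ, ·)`. Apply the trace identity `∑ᵢ f(w₁, …, A wᵢ, …) = tr A · f(w)` with
`A = DXᵢ`, which is trace-free, to the family obtained from `(X₁, …, Xₙ, v)` by replacing `Xᵢ` with
`u`. Summed over `i`, this expresses `Dα(u, v) - Dα(v, u)` through the terms in which `u` sits in
slot `i` and `DXᵢ(Xⱼ)` in slot `j ≠ i`. As `DXᵢ(Xⱼ) = DXⱼ(Xᵢ)`, these terms are antisymmetric in
`i, j` and cancel, so `α` is closed.

The integral of `α` along segments from the star center is then a primitive `g`. It is analytic: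
near `b` one has `g(x) = g(b) + (∫₀¹ α(b + t(x - b)) dt)(x - b)`, and if `α` has the power series
`∑ pₖ` at `b`, the integral has the power series `∑ pₖ / (k + 1)`.
-/

open AffineMap Function Metric Module Set Topology

section AlternatingMap

variable {ι R M N : Type*} [DecidableEq ι] [CommRing R] [AddCommGroup M] [Module R M]

theorem sum_alternatingMap_update_eq_trace_mul [Fintype ι] (b : Basis ι R M)
    (f : M [⋀^ι]→ₗ[R] R) (A : M →ₗ[R] M) (w : ι → M) :
    ∑ i, f (update w i (A (w i))) = LinearMap.trace R M A * f w := by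
  set W := b.toMatrix w
  have hupdate (i : ι) :
      b.det (update w i (A (w i))) = (W.adjugate * (LinearMap.toMatrix b b A * W)) i i := by
    have hcol : ⇑(b.repr (A (w i))) = (LinearMap.toMatrix b b A * W).col i := by
      rw [← LinearMap.toMatrix_mulVec_repr b b A (w i)]
      rfl
    rw [b.det_apply, b.toMatrix_update, hcol, ← Matrix.cramer_apply,
      Matrix.cramer_eq_adjugate_mulVec]
    rfl
  have hdet : ∑ i, b.det (update w i (A (w i))) = LinearMap.trace R M A * b.det w :=
    calc ∑ i, b.det (update w i (A (w i)))
      _ = (W.adjugate * (LinearMap.toMatrix b b A * W)).trace :=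
        Finset.sum_congr rfl fun i _ ↦ hupdate i
      _ = (LinearMap.toMatrix b b A * (W * W.adjugate)).trace := by
        rw [Matrix.trace_mul_comm, Matrix.mul_assoc]
      _ = LinearMap.trace R M A * b.det w := by
        rw [Matrix.mul_adjugate, Matrix.mul_smul, Matrix.mul_one, Matrix.trace_smul, smul_eq_mul,
          mul_comm, ← LinearMap.trace_eq_matrix_trace, b.det_apply]
  rw [f.eq_smul_basis_det b]
  simp only [AlternatingMap.smul_apply, smul_eq_mul]
  rw [← Finset.mul_sum, hdet, mul_left_comm]

theorem alternatingMap_update_update_swap [AddCommGroup N] [Module R N] (f : M [⋀^ι]→ₗ[R] N)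
    (w : ι → M) {i j : ι} (hij : i ≠ j) (x y : M) :
    f (update (update w i x) j y) = -f (update (update w i y) j x) := by
  rw [← f.map_swap _ hij]
  congr 1
  ext k : 1
  rcases eq_or_ne k i with rfl | hki
  · simp [hij]
  rcases eq_or_ne k j with rfl | hkj
  · simp [hij]
  · simp [hki, hkj, Equiv.swap_apply_of_ne_of_ne]

theorem sum_sum_erase_eq_zero_of_antisymm {ι N : Type*} [Fintype ι] [DecidableEq ι]
    [AddCommGroup N] {c : ι → ι → N} (hc : ∀ i j, i ≠ j → c i j = -c j i) :
    ∑ i, ∑ j ∈ Finset.univ.erase i, c i j = 0 := by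
  rw [Finset.sum_sigma']
  refine Finset.sum_involution (fun p _ ↦ ⟨p.2, p.1⟩) ?_ ?_ ?_ ?_
  · rintro ⟨i, j⟩ hp
    simp only [Finset.mem_sigma, Finset.mem_univ, Finset.mem_erase, true_and, and_true] at hp
    simp [hc j i hp]
  · rintro ⟨i, j⟩ hp - heq
    simp_all
  · simp +contextual [eq_comm]
  · simp

theorem sum_alternatingMap_snoc_update_symm {n : ℕ} (b : Basis (Fin (n + 1)) R M)
    (f : M [⋀^Fin (n + 1)]→ₗ[R] R) {a : Fin n → M} {A : Fin n → M →ₗ[R] M}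
    (hcomm : ∀ i j, A i (a j) = A j (a i)) (htr : ∀ i, LinearMap.trace R M (A i) = 0) (u v : M) :
    ∑ i, f (Fin.snoc (update a i (A i u)) v) = ∑ i, f (Fin.snoc (update a i (A i v)) u) := by
  let c (i j : Fin n) : R := f (Fin.snoc (update (update a i u) j (A i (a j))) v)
  have htrace (i : Fin n) : f (Fin.snoc (update a i (A i u)) v) +
      ∑ j ∈ Finset.univ.erase i, c i j = f (Fin.snoc (update a i (A i v)) u) := by
    have h := sum_alternatingMap_update_eq_trace_mul b f (A i) (Fin.snoc (update a i u) v)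
    simp only [htr, zero_mul, Fin.sum_univ_castSucc, ← Fin.snoc_update, Fin.snoc_castSucc,
      Fin.update_snoc_last, Fin.snoc_last] at h
    have hlast : f (Fin.snoc (update a i u) (A i v)) = -f (Fin.snoc (update a i (A i v)) u) := by
      simpa only [← Fin.snoc_update, Fin.update_snoc_last] using
        alternatingMap_update_update_swap f (Fin.snoc a 0) i.castSucc_lt_last.ne u (A i v)
    rw [hlast, ← Finset.add_sum_erase _ _ (Finset.mem_univ i), update_self, update_idem] at h
    rw [← sub_eq_zero, sub_eq_add_neg, ← h]
    congr 2
    refine Finset.sum_congr rfl fun j hj ↦ ?_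
    rw [update_of_ne (Finset.ne_of_mem_erase hj)]
  have hanti (i j : Fin n) (hij : i ≠ j) : c i j = -c j i := by
    have h := alternatingMap_update_update_swap f (Fin.snoc a v)
      ((Fin.castSucc_injective n).ne hij) u (A i (a j))
    simp only [← Fin.snoc_update] at h
    rw [update_comm (β := fun _ ↦ M) hij (A i (a j))] at h
    simpa only [c, hcomm i j] using h
  calc ∑ i, f (Fin.snoc (update a i (A i u)) v)
    _ = ∑ i, (f (Fin.snoc (update a i (A i u)) v) + ∑ j ∈ Finset.univ.erase i, c i j) := by
      rw [Finset.sum_add_distrib, sum_sum_erase_eq_zero_of_antisymm hanti, add_zero]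
    _ = ∑ i, f (Fin.snoc (update a i (A i v)) u) := Finset.sum_congr rfl fun i _ ↦ htrace i

end AlternatingMap

section Primitives

variable {𝕜 E F : Type*} [RCLike 𝕜]
  [NormedAddCommGroup E] [NormedSpace 𝕜 E] [NormedSpace ℝ E]
  [NormedAddCommGroup F] [NormedSpace 𝕜 F] [NormedSpace ℝ F]

/-- The average of `f` over the segment from `b` to `x`, with respect to the affine parameter. -/
noncomputable def radialAverage (f : E → F) (b x : E) : F :=
  ∫ t in (0 : ℝ)..1, f (lineMap b x t)

theorem lineMap_mem_eball {b x : E} {r : ENNReal} (hx : x ∈ eball b r) {t : ℝ}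
    (ht : t ∈ Icc (0 : ℝ) 1) : lineMap b x t ∈ eball b r := by
  rw [mem_eball, edist_eq_enorm_sub] at hx ⊢
  refine lt_of_le_of_lt ?_ hx
  rw [lineMap_apply_module', add_sub_cancel_right, enorm_le_iff_norm_le, norm_smul,
    Real.norm_of_nonneg ht.1]
  exact mul_le_of_le_one_left (norm_nonneg _) ht.2

theorem hasSum_radialAverage {f : E → F} {p : FormalMultilinearSeries 𝕜 E F} {b y : E}
    {r : ENNReal} (hf : HasFPowerSeriesOnBall f p b r) (hy : y ∈ eball 0 r) :
    HasSum (fun n : ℕ ↦ ∫ t in (0 : ℝ)..1, t ^ n • p n fun _ ↦ y)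
      (radialAverage f b (b + y)) := by
  refine intervalIntegral.hasSum_integral_of_dominated_convergence
    (fun n _ ↦ ‖p n fun _ ↦ y‖) (fun n ↦ ?_) (fun n ↦ .of_forall fun t ht ↦ ?_)
    (.of_forall fun t _ ↦ p.summable_norm_apply (eball_subset_eball hf.r_le hy))
    intervalIntegrable_const (.of_forall fun t ht ↦ ?_)
  · exact Continuous.aestronglyMeasurable (by fun_prop)
  · rw [uIoc_of_le zero_le_one] at ht
    rw [norm_smul, norm_pow, Real.norm_of_nonneg ht.1.le]
    exact mul_le_of_le_one_left (norm_nonneg _) (pow_le_one₀ ht.1.le ht.2)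
  · rw [uIoc_of_le zero_le_one] at ht
    have hmem : t • y ∈ eball (0 : E) r := by
      simpa [lineMap_apply_module'] using lineMap_mem_eball hy (Ioc_subset_Icc_self ht)
    have h := hf.hasSum hmem
    have hhom (n : ℕ) : (p n fun _ ↦ t • y) = t ^ n • p n fun _ ↦ y := by
      simpa using ((p n).restrictScalars ℝ).map_smul_univ (fun _ ↦ t) fun _ ↦ y
    simpa only [hhom, lineMap_apply_module', add_sub_cancel_left, add_comm (t • y)] using h

variable [CompleteSpace F]

theorem hasFPowerSeriesOnBall_radialAverage {f : E → F} {p : FormalMultilinearSeries 𝕜 E F}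
    {b : E} {r : ENNReal} (hf : HasFPowerSeriesOnBall f p b r) :
    HasFPowerSeriesOnBall (radialAverage f b) (fun n ↦ (n + 1 : 𝕜)⁻¹ • p n) b r where
  r_le := by
    refine hf.r_le.trans (FormalMultilinearSeries.radius_le_of_le fun n ↦ ?_)
    rw [norm_smul, norm_inv, ← Nat.cast_succ, RCLike.norm_natCast]
    exact mul_le_of_le_one_left (norm_nonneg _) (inv_le_one_of_one_le₀ (by simp))
  r_pos := hf.r_pos
  hasSum {y} hy := by
    convert! hasSum_radialAverage hf hy using 2 with n
    rw [intervalIntegral.integral_smul_const, integral_pow, RCLike.real_smul_eq_coe_smul (K := 𝕜)]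
    simp

theorem eq_add_radialAverage_of_hasFDerivAt {g : E → F} {ω : E → E →L[𝕜] F} {b x : E}
    (hω : ContinuousOn ω (segment ℝ b x)) (hg : ∀ z ∈ segment ℝ b x, HasFDerivAt g (ω z) z) :
    g x = g b + radialAverage ω b x (x - b) := by
  have hmem {t : ℝ} (ht : t ∈ uIcc (0 : ℝ) 1) : lineMap b x t ∈ segment ℝ b x := by
    rw [segment_eq_image_lineMap]
    exact mem_image_of_mem _ (by rwa [uIcc_of_le zero_le_one] at ht)
  have hint : ContinuousOn (fun t : ℝ ↦ ω (lineMap b x t)) (uIcc 0 1) :=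
    hω.comp lineMap_continuous.continuousOn fun t ↦ hmem
  have hderiv (t : ℝ) (ht : t ∈ uIcc (0 : ℝ) 1) :
      HasDerivAt (fun s : ℝ ↦ g (lineMap b x s)) (ω (lineMap b x t) (x - b)) t :=
    ((hg _ (hmem ht)).restrictScalars ℝ).comp_hasDerivAt t hasDerivAt_lineMap
  have h := intervalIntegral.integral_eq_sub_of_hasDerivAt hderiv
    (hint.clm_apply continuousOn_const).intervalIntegrable
  rw [radialAverage, ContinuousLinearMap.intervalIntegral_apply hint.intervalIntegrable, h]
  simp

theorem analyticAt_of_eventually_hasFDerivAt {g : E → F} {ω : E → E →L[𝕜] F} {b : E}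
    (hω : AnalyticAt 𝕜 ω b) (hg : ∀ᶠ x in 𝓝 b, HasFDerivAt g (ω x) x) :
    AnalyticAt 𝕜 g b := by
  obtain ⟨p, r₀, hp⟩ := hω
  obtain ⟨ε, hε, hball⟩ := EMetric.mem_nhds_iff.1 hg
  have hp' := hp.mono (lt_min hp.r_pos hε) (min_le_left _ _)
  have hprimitive := (hasFPowerSeriesOnBall_radialAverage hp').unshift (z := g b)
  refine ⟨_, _, hprimitive.congr fun x hx ↦ ?_⟩
  have hsub : segment ℝ b x ⊆ eball b (min r₀ ε) := by
    rw [segment_eq_image_lineMap]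
    rintro _ ⟨t, ht, rfl⟩
    exact lineMap_mem_eball hx ht
  exact (eq_add_radialAverage_of_hasFDerivAt (hp'.continuousOn.mono hsub) fun z hz ↦
    hball (eball_subset_eball (min_le_right _ _) (hsub hz))).symm

theorem hasFDerivAt_curveIntegral_segment_of_starConvex {U : Set E} {a : E}
    (hU : IsOpen U) (hstar : StarConvex ℝ a U) {ω : E → E →L[𝕜] F} {dω : E → E →L[ℝ] E →L[𝕜] F}
    (hω : ∀ x ∈ U, HasFDerivAt ω (dω x) x) (hsymm : ∀ x ∈ U, ∀ u v, dω x u v = dω x v u)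
    {b : E} (hb : b ∈ U) :
    HasFDerivAt (curveIntegral ω <| .segment a ·) (ω b) b := by
  have hcompact : IsCompact (segment ℝ a b) := by
    rw [segment_eq_image_lineMap]
    exact isCompact_Icc.image lineMap_continuous
  obtain ⟨δ, hδ, hsub⟩ := hcompact.exists_thickening_subset_open hU (hstar.segment_subset hb)
  have hmem := self_subset_thickening hδ (segment ℝ a b)
  have hconvex : Convex ℝ (thickening δ (segment ℝ a b)) := (convex_segment a b).thickening δ
  have h := hconvex.hasFDerivWithinAt_curveIntegral_segment_of_hasFDerivWithinAt_symmetric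
    (fun x hx ↦ (hω x (hsub hx)).hasFDerivWithinAt) (fun x hx u _ v _ ↦ hsymm x (hsub hx) u v)
    (hmem (left_mem_segment ℝ a b)) (hmem (right_mem_segment ℝ a b))
  exact h.hasFDerivAt (isOpen_thickening.mem_nhds (hmem (right_mem_segment ℝ a b)))

theorem exists_analyticOnNhd_hasFDerivAt_of_starConvex {U : Set E} {a : E}
    (hU : IsOpen U) (hstar : StarConvex ℝ a U) {ω : E → E →L[𝕜] F}
    (hω : AnalyticOnNhd 𝕜 ω U) (hsymm : ∀ x ∈ U, ∀ u v, fderiv 𝕜 ω x u v = fderiv 𝕜 ω x v u) :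
    ∃ g : E → F, AnalyticOnNhd 𝕜 g U ∧ ∀ x ∈ U, HasFDerivAt g (ω x) x := by
  have hg (x : E) (hx : x ∈ U) : HasFDerivAt (curveIntegral ω <| .segment a ·) (ω x) x :=
    hasFDerivAt_curveIntegral_segment_of_starConvex hU hstar
      (dω := fun x ↦ (fderiv 𝕜 ω x).restrictScalars ℝ)
      (fun x hx ↦ (hω x hx).differentiableAt.hasFDerivAt.restrictScalars ℝ) hsymm hx
  exact ⟨_, fun x hx ↦ analyticAt_of_eventually_hasFDerivAt (hω x hx)
    (Filter.eventually_of_mem (hU.mem_nhds hx) hg), hg⟩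

end Primitives

section ContractedForm

variable {𝕜 E F : Type*} [NontriviallyNormedField 𝕜] [NormedAddCommGroup E] [NormedSpace 𝕜 E]
  [NormedAddCommGroup F] [NormedSpace 𝕜 F] {n : ℕ} {X : Fin n → E → E} {x : E}

/-- The 1-form `α(x)(v) = Ω(X₁(x), …, Xₙ(x), v)`, the contraction of a constant `(n + 1)`-form `Ω`
with `n` vector fields. The free argument comes last. -/
noncomputable def contractedForm (Ω : E [⋀^Fin (n + 1)]→L[𝕜] F) (X : Fin n → E → E) (x : E) :
    E →L[𝕜] F :=
  Ω.toContinuousMultilinearMap.curryRight fun i ↦ X i x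

theorem contractedForm_apply (Ω : E [⋀^Fin (n + 1)]→L[𝕜] F) (X : Fin n → E → E) (x v : E) :
    contractedForm Ω X x v = Ω (Fin.snoc (fun i ↦ X i x) v) :=
  rfl

theorem contractedForm_apply_self (Ω : E [⋀^Fin (n + 1)]→L[𝕜] F) (X : Fin n → E → E) (x : E)
    (i : Fin n) : contractedForm Ω X x (X i x) = 0 :=
  Ω.map_eq_zero_of_eq _ (by simp [Fin.snoc_castSucc (α := fun _ ↦ E)]) i.castSucc_lt_last.ne

theorem analyticAt_contractedForm (Ω : E [⋀^Fin (n + 1)]→L[𝕜] F)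
    (hX : ∀ i, AnalyticAt 𝕜 (X i) x) : AnalyticAt 𝕜 (contractedForm Ω X) x :=
  Ω.toContinuousMultilinearMap.curryRight.analyticAt.comp (AnalyticAt.pi hX)

theorem fderiv_contractedForm_apply (Ω : E [⋀^Fin (n + 1)]→L[𝕜] F)
    (hX : ∀ i, DifferentiableAt 𝕜 (X i) x) (u v : E) :
    fderiv 𝕜 (contractedForm Ω X) x u v =
      ∑ i, Ω (Fin.snoc (update (fun j ↦ X j x) i (fderiv 𝕜 (X i) x u)) v) := by
  have h : HasFDerivAt (contractedForm Ω X) _ x :=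
    (Ω.toContinuousMultilinearMap.curryRight.hasFDerivAt fun i ↦ X i x).comp x
      (hasFDerivAt_pi.2 fun i ↦ (hX i).hasFDerivAt)
  rw [h.fderiv]
  simp [sum_apply]

theorem fderiv_contractedForm_symm (hE : finrank 𝕜 E = n + 1) (Ω : E [⋀^Fin (n + 1)]→L[𝕜] 𝕜)
    (hX : ∀ i, DifferentiableAt 𝕜 (X i) x)
    (hcomm : ∀ i j, VectorField.lieBracket 𝕜 (X i) (X j) x = 0)
    (hiso : ∀ i, LinearMap.trace 𝕜 E (fderiv 𝕜 (X i) x : E →ₗ[𝕜] E) = 0) (u v : E) :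
    fderiv 𝕜 (contractedForm Ω X) x u v = fderiv 𝕜 (contractedForm Ω X) x v u := by
  have : FiniteDimensional 𝕜 E := .of_finrank_pos (by lia)
  rw [fderiv_contractedForm_apply Ω hX, fderiv_contractedForm_apply Ω hX]
  exact sum_alternatingMap_snoc_update_symm (finBasisOfFinrankEq 𝕜 E hE) Ω.toAlternatingMap
    (A := fun i ↦ (fderiv 𝕜 (X i) x : E →ₗ[𝕜] E)) (fun i j ↦ sub_eq_zero.1 (hcomm j i)) hiso u v

end ContractedForm

theorem contracted_volume_form_exact_general {𝕜 E : Type*} [RCLike 𝕜] [NormedAddCommGroup E]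
    [NormedSpace 𝕜 E] [NormedSpace ℝ E] {n : ℕ} (hE : finrank 𝕜 E = n + 1)
    (Ω : E [⋀^Fin (n + 1)]→L[𝕜] 𝕜) {U : Set E} {a : E} (hU : IsOpen U) (hstar : StarConvex ℝ a U)
    {X : Fin n → E → E} (hX : ∀ i, AnalyticOnNhd 𝕜 (X i) U)
    (hcomm : ∀ i j, ∀ x ∈ U, VectorField.lieBracket 𝕜 (X i) (X j) x = 0)
    (hiso : ∀ i, ∀ x ∈ U, LinearMap.trace 𝕜 E (fderiv 𝕜 (X i) x : E →ₗ[𝕜] E) = 0) :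
    ∃ g : E → 𝕜, AnalyticOnNhd 𝕜 g U ∧
      (∀ x ∈ U, ∀ v, fderiv 𝕜 g x v = Ω (Fin.snoc (fun i ↦ X i x) v)) ∧
      ∀ x ∈ U, ∀ i, fderiv 𝕜 g x (X i x) = 0 := by
  obtain ⟨g, hg, hderiv⟩ := exists_analyticOnNhd_hasFDerivAt_of_starConvex hU hstar
    (fun x hx ↦ analyticAt_contractedForm Ω fun i ↦ hX i x hx)
    fun x hx ↦ fderiv_contractedForm_symm hE Ω (fun i ↦ (hX i x hx).differentiableAt)
      (hcomm · · x hx) (hiso · x hx)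
  refine ⟨g, hg, fun x hx v ↦ ?_, fun x hx i ↦ ?_⟩
  · rw [(hderiv x hx).fderiv, contractedForm_apply]
  · rw [(hderiv x hx).fderiv, contractedForm_apply_self]

/-- The determinant as a continuous alternating form, that is, the standard volume form of `𝕜^ι`. -/
noncomputable def detForm (𝕜 ι : Type*) [NontriviallyNormedField 𝕜] [Fintype ι] [DecidableEq ι] :
    (ι → 𝕜) [⋀^ι]→L[𝕜] 𝕜 where
  toAlternatingMap := Matrix.detRowAlternating
  cont := (continuous_id.matrix_det : Continuous fun M : Matrix ι ι 𝕜 ↦ M.det)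

theorem detForm_snoc {𝕜 : Type*} [NontriviallyNormedField 𝕜] {n : ℕ}
    (w : Fin n → Fin (n + 1) → 𝕜) (v : Fin (n + 1) → 𝕜) :
    detForm 𝕜 (Fin (n + 1)) (Fin.snoc w v) =
      (Matrix.of fun i j : Fin (n + 1) ↦ if h : (j : ℕ) < n then w ⟨j, h⟩ i else v i).det := by
  rw [← Matrix.det_transpose]
  change Matrix.det _ = _
  congr 1
  ext j i
  induction j using Fin.lastCases <;> simp [Fin.snoc_castSucc (α := fun _ ↦ Fin (n + 1) → 𝕜)]

/-- **Exactness of the contracted volume form** (step 1 of Zung's isochore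
theorem). If `X₁, …, X_{n-1}` are pairwise commuting isochore holomorphic
vector fields on a star-shaped open neighborhood `U` of `0 ∈ ℂⁿ`, then the
holomorphic 1-form `α = i_{X₁} ⋯ i_{X_{n-1}} Ω`, given by
`α(x)(v) = det(X₁(x), …, X_{n-1}(x), v)`, is exact: `α = dg` for a
holomorphic function `g`, which in particular is a common first integral of
the `X_i`. -/
theorem contracted_volume_form_exact
    (n : ℕ) (hn : 1 ≤ n)
    (U : Set (Fin n → ℂ)) (hUopen : IsOpen U) (h0U : (0 : Fin n → ℂ) ∈ U)
    (hUstar : StarConvex ℝ (0 : Fin n → ℂ) U)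
    (X : Fin (n - 1) → (Fin n → ℂ) → (Fin n → ℂ))
    (hXan : ∀ i, AnalyticOnNhd ℂ (X i) U)
    (hcomm : ∀ i j, ∀ x ∈ U, VectorField.lieBracket ℂ (X i) (X j) x = 0)
    (hiso : ∀ i, ∀ x ∈ U,
      LinearMap.trace ℂ (Fin n → ℂ)
        (fderiv ℂ (X i) x : (Fin n → ℂ) →ₗ[ℂ] (Fin n → ℂ)) = 0) :
    ∃ g : (Fin n → ℂ) → ℂ,
      AnalyticOnNhd ℂ g U ∧
      (∀ x ∈ U, ∀ v : Fin n → ℂ,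
        fderiv ℂ g x v =
          (Matrix.of fun i j : Fin n =>
            if h : (j : ℕ) < n - 1 then X ⟨j, h⟩ x i else v i).det) ∧
      ∀ x ∈ U, ∀ i, fderiv ℂ g x (X i x) = 0 := by
  obtain ⟨m, rfl⟩ := Nat.exists_eq_add_of_le' hn
  have h := contracted_volume_form_exact_general (finrank_fin_fun ℂ)
    (detForm ℂ (Fin (m + 1))) hUopen hUstar hXan hcomm hiso
  simpa only [detForm_snoc] using! h
end
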